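/- arXiv:2501.18570 — 3 statements merged into one kernel-verified Lean document; each statement's English description precedes it below -/
import Mathlib

section
/- Fix d ≥ 2 and positive reals c_1,…,c_d with c_1 + ⋯ + c_d = 1. Consider complete multipartite graphs K_{n_1,…,n_d} with part sizes n_1,…,n_d depending on n = n_1 + ⋯ + n_d such that n_i/n → c_i for each i as n → ∞. Let X be the number of common edges of two spanning trees of K_{n_1,…,n_d} chosen independently and uniformly at random. Then for every fixed nonnegative integer m, P(X = m) → e^{−λ} λ^m / m! as n → ∞, where λ = Σ_{1 ≤ i < j ≤ d} c_i c_j (2 − c_i − c_j)² / ((1−c_i)² (1−c_j)²); that is, X converges in distribution to a Poisson distribution with expected value λ. -/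
/-- `P(X = m)` for the complete multipartite graph with parts `Fin (nn i)`: the number
of ordered pairs `(T₁, T₂)` of spanning trees with exactly `m` common edges, divided by
the square of the total number of spanning trees. -/
noncomputable def multipartiteProbCommonEdgesEq {d : ℕ} (nn : Fin d → ℕ) (m : ℕ) : ℝ :=
  (Nat.card {q : SimpleGraph (Σ i : Fin d, Fin (nn i)) ×
      SimpleGraph (Σ i : Fin d, Fin (nn i)) //
        q.1 ≤ SimpleGraph.completeMultipartiteGraph (fun i => Fin (nn i)) ∧
        q.2 ≤ SimpleGraph.completeMultipartiteGraph (fun i => Fin (nn i)) ∧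
        q.1.IsTree ∧ q.2.IsTree ∧ Nat.card (q.1 ⊓ q.2).edgeSet = m} : ℝ) /
    (Nat.card {T : SimpleGraph (Σ i : Fin d, Fin (nn i)) //
        T ≤ SimpleGraph.completeMultipartiteGraph (fun i => Fin (nn i)) ∧
          T.IsTree} : ℝ) ^ 2

/-!
The edge set of a uniform spanning tree is a determinantal point process whose kernel is the matrix
of transfer currents `K`. Hence the `k`-th factorial moment of the number of common edges of two
independent uniform spanning trees is the sum of the squared minors `det (K (g a) (g b))` over all
`k`-tuples `g` of edges. For the complete multipartite graph on `n` vertices the Green function is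
explicit: the entries of `K` are `O(1 / n)` and its absolute row sums are `O(1)`, so only the
diagonal survives when the squared minors are expanded, and the factorial moment is
`(∑ e, K e e ^ 2) ^ k + o(1) → λ ^ k`. These are the factorial moments of the Poisson distribution,
and the Bonferroni inequalities turn their convergence into that of the probabilities.
-/

open Finset Filter Function Topology
open scoped BigOperators Matrix

section CauchyBinet

variable {m n R : Type*} [Fintype m] [DecidableEq m] [Fintype n] [CommRing R]

theorem det_mul_eq_sum_prod_mul_det_submatrix (A : Matrix m n R) (B : Matrix n m R) :
    (A * B).det = ∑ f : m → n, (∏ i, A i (f i)) * (B.submatrix f id).det := by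
  classical
  have hrows : A * B = fun i => ∑ j, A i j • B j := by
    ext i k
    simp [Matrix.mul_apply, Finset.sum_apply]
  calc (A * B).det = Matrix.detRowAlternating.toMultilinearMap (fun i => ∑ j, A i j • B j) := by
        rw [hrows]; rfl
    _ = ∑ f : m → n, Matrix.detRowAlternating.toMultilinearMap (fun i => A i (f i) • B (f i)) :=
        MultilinearMap.map_sum _ _
    _ = _ := Finset.sum_congr rfl fun f _ => MultilinearMap.map_smul_univ _ _ _

/-- **Cauchy–Binet formula**, summed over all column selections instead of over sets of columns. -/
theorem factorial_mul_det_mul (A : Matrix m n R) (B : Matrix n m R) :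
    ((Fintype.card m).factorial : R) * (A * B).det =
      ∑ f : m → n, (A.submatrix id f).det * (B.submatrix f id).det := by
  classical
  have permuted (σ : Equiv.Perm m) : (A * B).det =
      ∑ f : m → n, ((σ.sign : ℤ) : R) * (∏ i, A (σ i) (f i)) * (B.submatrix f id).det := by
    rw [det_mul_eq_sum_prod_mul_det_submatrix]
    refine Fintype.sum_equiv (σ.arrowCongr (Equiv.refl n)).symm _ _ fun f => ?_
    have hprod : ∏ i, A (σ i) (f (σ i)) = ∏ i, A i (f i) :=
      Equiv.prod_comp σ fun i => A i (f i)
    have hdet : (B.submatrix (f ∘ σ) id).det = ((σ.sign : ℤ) : R) * (B.submatrix f id).det :=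
      Matrix.det_permute σ (B.submatrix f id)
    have hsign : ((σ.sign : ℤ) : R) * ((σ.sign : ℤ) : R) = 1 := by
      rcases Int.units_eq_one_or σ.sign with h | h <;> simp [h]
    change _ = _ * (∏ i, A (σ i) (f (σ i))) * (B.submatrix (f ∘ σ) id).det
    rw [hprod, hdet]
    linear_combination (-(∏ i, A i (f i)) * (B.submatrix f id).det) * hsign
  calc ((Fintype.card m).factorial : R) * (A * B).det = ∑ _σ : Equiv.Perm m, (A * B).det := by
        simp [Fintype.card_perm]
    _ = ∑ f : m → n, ∑ σ : Equiv.Perm m,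
          ((σ.sign : ℤ) : R) * (∏ i, A (σ i) (f i)) * (B.submatrix f id).det := by
        rw [Finset.sum_congr rfl fun σ _ => permuted σ, Finset.sum_comm]
    _ = _ := Finset.sum_congr rfl fun f _ => by
        rw [← Finset.sum_mul, Matrix.det_apply' (A.submatrix id f)]; rfl

end CauchyBinet

section Incidence

variable {V E : Type*} (src tgt : E → V)

/-- The simple graph underlying the multigraph on `V` formed by the edges `e ∈ S`, the edge `e`
having endpoints `src e` and `tgt e`. -/
def edgeGraph (S : Set E) : SimpleGraph V :=
  SimpleGraph.fromEdgeSet ((fun e => s(src e, tgt e)) '' S)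

theorem edgeGraph_reachable {S : Set E} {e : E} (he : e ∈ S) :
    (edgeGraph src tgt S).Reachable (src e) (tgt e) := by
  by_cases h : src e = tgt e
  · rw [h]
  · exact SimpleGraph.Adj.reachable <| (SimpleGraph.fromEdgeSet_adj _).2 ⟨⟨e, he, rfl⟩, h⟩

open Classical in
/-- The edge sets of the spanning trees of the multigraph with endpoint maps `src` and `tgt`;
loops and repeated edges are excluded by counting the edges rather than the adjacencies. -/
noncomputable def spanningTrees [Fintype V] [Fintype E] : Finset (Finset E) :=
  {S | (edgeGraph src tgt (S : Set E)).Connected ∧ #S + 1 = Fintype.card V}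

variable [DecidableEq V] (R : Type*) [CommRing R]

/-- The signed incidence matrix of the multigraph in which `e` is oriented from `src e` to `tgt e`,
with positive sign at sources; a loop has a zero column. -/
def orientedIncMatrix : Matrix V E R :=
  .of fun v e => (Pi.single (src e) 1 - Pi.single (tgt e) 1 : V → R) v

/-- The oriented incidence matrix with an extra column `none` marking the root `r`. -/
def rootedIncMatrix (r : V) : Matrix V (Option E) R :=
  .of fun v x => x.elim ((Pi.single r 1 : V → R) v) (orientedIncMatrix src tgt R v)

variable {R}

theorem vecMul_orientedIncMatrix_apply [Fintype V] (x : V → R) (e : E) :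
    (x ᵥ* orientedIncMatrix src tgt R) e = x (src e) - x (tgt e) := by
  simp [Matrix.vecMul, dotProduct, orientedIncMatrix, mul_sub, Finset.sum_sub_distrib,
    Pi.single_apply]

theorem transpose_orientedIncMatrix_mul_apply [Fintype V] {κ : Type*} (X : Matrix V κ R) (e : E)
    (x : κ) :
    ((orientedIncMatrix src tgt R)ᵀ * X) e x = X (src e) x - X (tgt e) x := by
  rw [← Matrix.transpose_apply (_ * X), Matrix.transpose_mul, Matrix.transpose_transpose]
  exact vecMul_orientedIncMatrix_apply src tgt _ e

theorem single_sub_single_mem_of_reachable {S : Set E} {W : Submodule R (V → R)}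
    (hW : ∀ e ∈ S, (Pi.single (src e) 1 - Pi.single (tgt e) 1 : V → R) ∈ W) {u v : V}
    (huv : (edgeGraph src tgt S).Reachable u v) : (Pi.single u 1 - Pi.single v 1 : V → R) ∈ W := by
  obtain ⟨walk⟩ := huv
  induction walk with
  | nil => simp
  | cons hadj _ ih =>
    obtain ⟨⟨e, he, hab⟩, -⟩ := (SimpleGraph.fromEdgeSet_adj _).1 hadj
    rw [← sub_add_sub_cancel]
    refine W.add_mem ?_ ih
    rcases Sym2.eq_iff.1 hab with ⟨rfl, rfl⟩ | ⟨rfl, rfl⟩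
    · exact hW e he
    · rw [← neg_sub]
      exact W.neg_mem (hW e he)

variable [Fintype V] (r : V) (f : V → Option E)

theorem isUnit_det_rootedIncMatrix_submatrix (hnone : none ∈ Set.range f)
    (hconn : (edgeGraph src tgt {e | some e ∈ Set.range f}).Connected) :
    IsUnit ((rootedIncMatrix src tgt R r).submatrix id f).det := by
  set B := (rootedIncMatrix src tgt R r).submatrix id f
  have col_mem {x : Option E} (hx : x ∈ Set.range f) :
      (rootedIncMatrix src tgt R r).col x ∈ LinearMap.range B.mulVecLin := by
    obtain ⟨u, rfl⟩ := hx
    rw [Matrix.range_mulVecLin]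
    exact Submodule.subset_span ⟨u, rfl⟩
  have single_mem (v : V) : (Pi.single v 1 : V → R) ∈ LinearMap.range B.mulVecLin := by
    rw [← sub_add_cancel (Pi.single v 1) (Pi.single r 1)]
    exact Submodule.add_mem _ (single_sub_single_mem_of_reachable src tgt
      (fun e he => col_mem he) (hconn.preconnected v r)) (col_mem hnone)
  rw [← Matrix.isUnit_iff_isUnit_det, ← Matrix.mulVec_surjective_iff_isUnit]
  rw [← Matrix.coe_mulVecLin, ← LinearMap.range_eq_top, eq_top_iff, ← (Pi.basisFun R V).span_eq,
    Submodule.span_le]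
  rintro _ ⟨v, rfl⟩
  rw [Pi.basisFun_apply]
  exact single_mem v

theorem det_rootedIncMatrix_submatrix_eq_zero [IsDomain R]
    (h : ¬ (none ∈ Set.range f ∧ (edgeGraph src tgt {e | some e ∈ Set.range f}).Connected)) :
    ((rootedIncMatrix src tgt R r).submatrix id f).det = 0 := by
  classical
  rw [← Matrix.exists_vecMul_eq_zero_iff]
  have apply_eq (x : V → R) (v : V) : (x ᵥ* (rootedIncMatrix src tgt R r).submatrix id f) v =
      (f v).elim (x r) fun e => x (src e) - x (tgt e) := by
    rcases hv : f v with _ | e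
    · simp [Matrix.vecMul, dotProduct, rootedIncMatrix, hv, Pi.single_apply]
    · rw [Option.elim_some, ← vecMul_orientedIncMatrix_apply]
      simp [Matrix.vecMul, dotProduct, rootedIncMatrix, hv]
  by_cases hnone : none ∈ Set.range f
  · set G := edgeGraph src tgt {e | some e ∈ Set.range f}
    obtain ⟨u, hu⟩ : ∃ u, ¬ G.Reachable r u := by
      by_contra! hr
      exact h ⟨hnone, { preconnected := fun a b => (hr a).symm.trans (hr b), nonempty := ⟨r⟩ }⟩
    refine ⟨fun v => if G.Reachable r v then 0 else 1, fun h0 => ?_, funext fun v => ?_⟩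
    · simpa [hu] using congrFun h0 u
    · rw [apply_eq]
      rcases hv : f v with _ | e
      · simp
      · have he := edgeGraph_reachable src tgt (S := {e | some e ∈ Set.range f}) ⟨v, hv⟩
        have : G.Reachable r (src e) ↔ G.Reachable r (tgt e) :=
          ⟨fun h => h.trans he, fun h => h.trans he.symm⟩
        simp [this]
  · refine ⟨1, fun h0 => one_ne_zero (congrFun h0 r), funext fun v => ?_⟩
    rw [apply_eq]
    rcases hv : f v with _ | e
    · exact absurd ⟨v, hv⟩ hnone
    · simp

end Incidence

section ImageEnumeration

variable {ι α : Type*} [Fintype ι] [DecidableEq α]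

theorem injective_of_card_image_univ_eq {f : ι → α} (h : #(univ.image f) = Fintype.card ι) :
    Injective f := by
  rwa [← card_univ, card_image_iff, coe_univ, Set.injOn_univ] at h

theorem card_filter_image_univ_eq [DecidableEq ι] [Fintype α] {T : Finset α}
    (hT : #T = Fintype.card ι) :
    #{f : ι → α | univ.image f = T} = (Fintype.card ι).factorial := by
  have hcard : Fintype.card ι = Fintype.card T := by rw [Fintype.card_coe, hT]
  rw [← Fintype.card_equiv (Fintype.equivOfCardEq hcard), ← card_univ]
  symm
  refine card_bij (fun σ _ i => (σ i : α)) (fun σ _ => ?_) (fun σ _ τ _ h => ?_) fun f hf => ?_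
  · rw [mem_filter_univ]
    ext x
    simp only [mem_image, mem_univ, true_and]
    exact ⟨fun ⟨i, hi⟩ => hi ▸ (σ i).2, fun hx => ⟨σ.symm ⟨x, hx⟩, by simp⟩⟩
  · exact Equiv.ext fun i => Subtype.ext (congrFun h i)
  · rw [mem_filter_univ] at hf
    have hmem (i : ι) : f i ∈ T := hf ▸ mem_image_of_mem f (mem_univ i)
    have hinj : Injective f := injective_of_card_image_univ_eq (hf ▸ hT)
    refine ⟨.ofBijective (fun i => ⟨f i, hmem i⟩) ?_, mem_univ _, rfl⟩
    exact (Fintype.bijective_iff_injective_and_card _).2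
      ⟨fun i j hij => hinj (Subtype.ext_iff.1 hij), hcard⟩

theorem sum_prod_of_image_univ_mem [DecidableEq ι] [Fintype α] {R : Type*} [CommSemiring R]
    {𝒯 : Finset (Finset α)} (h𝒯 : ∀ T ∈ 𝒯, #T = Fintype.card ι) (w : α → R) :
    ∑ f : ι → α with univ.image f ∈ 𝒯, ∏ i, w (f i) =
      (Fintype.card ι).factorial * ∑ T ∈ 𝒯, ∏ x ∈ T, w x := by
  rw [← sum_fiberwise_of_maps_to (t := 𝒯) (g := fun f : ι → α => univ.image f)
    fun f hf => (mem_filter_univ f).1 hf, mul_sum]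
  refine sum_congr rfl fun T hT => ?_
  rw [filter_filter, filter_congr fun f _ =>
    and_iff_right_of_imp fun hf : univ.image f = T => hf ▸ hT,
    ← card_filter_image_univ_eq (h𝒯 T hT), ← nsmul_eq_mul]
  refine sum_eq_card_nsmul fun f hf => ?_
  rw [mem_filter_univ] at hf
  have hinj : Injective f := injective_of_card_image_univ_eq (hf ▸ h𝒯 T hT)
  rw [← hf, prod_image hinj.injOn]

theorem choose_card_inter_image_univ (S : Finset α) {k : ℕ} {g : Fin k → α} (hg : Injective g) :
    (#(S ∩ univ.image g)).choose k = if ∀ a, g a ∈ S then 1 else 0 := by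
  have hcard : #(univ.image g) = k := by rw [card_image_of_injective _ hg, card_fin]
  have hsub : univ.image g ⊆ S ↔ ∀ a, g a ∈ S := by simp [image_subset_iff]
  split_ifs with h <;> rw [← hsub] at h
  · rw [inter_eq_right.2 h, hcard, Nat.choose_self]
  · refine Nat.choose_eq_zero_of_lt ?_
    calc #(S ∩ univ.image g) < #(univ.image g) := card_lt_card
          ⟨inter_subset_right, fun hsubset => h (hsubset.trans inter_subset_left)⟩
      _ = k := hcard

end ImageEnumeration

section MatrixTree

variable {V E : Type*} [Fintype V] (src tgt : E → V)

theorem card_le_card_add_one_of_edgeGraph_connected {S : Finset E}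
    (h : (edgeGraph src tgt (S : Set E)).Connected) : Fintype.card V ≤ #S + 1 := by
  classical
  have hsub : (edgeGraph src tgt (S : Set E)).edgeSet ⊆ S.image fun e => s(src e, tgt e) := by
    rw [edgeGraph, SimpleGraph.edgeSet_fromEdgeSet, coe_image]
    exact Set.sdiff_subset
  calc Fintype.card V ≤ Nat.card (edgeGraph src tgt (S : Set E)).edgeSet + 1 := by
        rw [← Nat.card_eq_fintype_card]
        exact h.card_vert_le_card_edgeSet_add_one
    _ ≤ #(S.image fun e => s(src e, tgt e)) + 1 := by
        rw [Nat.card_coe_set_eq, ← Set.ncard_coe_finset]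
        exact Nat.succ_le_succ (Set.ncard_le_ncard hsub)
    _ ≤ #S + 1 := Nat.succ_le_succ card_image_le

variable [Fintype E]

theorem mem_spanningTrees {S : Finset E} : S ∈ spanningTrees src tgt ↔
    (edgeGraph src tgt (S : Set E)).Connected ∧ #S + 1 = Fintype.card V := by
  classical
  rw [spanningTrees, mem_filter_univ]

theorem image_univ_mem_map_insertNone_spanningTrees_iff [DecidableEq E] (f : V → Option E) :
    univ.image f ∈ (spanningTrees src tgt).map insertNone.toEmbedding ↔
      none ∈ Set.range f ∧ (edgeGraph src tgt {e | some e ∈ Set.range f}).Connected := by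
  set S : Finset E := eraseNone (univ.image f)
  have hS : {e | some e ∈ Set.range f} = (S : Set E) := by ext; simp [S]
  rw [hS, Finset.mem_map]
  constructor
  · rintro ⟨T, hT, hTf : insertNone T = univ.image f⟩
    have hTS : S = T := by simp [S, ← hTf]
    refine ⟨?_, hTS ▸ ((mem_spanningTrees src tgt).1 hT).1⟩
    simpa using (Finset.ext_iff.1 hTf none).1 (by simp)
  · rintro ⟨hnone, hconn⟩
    have himage : insertNone S = univ.image f := by
      rw [insertNone_eraseNone]
      exact insert_eq_self.2 (by simpa using hnone)
    refine ⟨S, (mem_spanningTrees src tgt).2 ⟨hconn, le_antisymm ?_ ?_⟩, himage⟩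
    · rw [← card_insertNone, himage]
      exact card_image_le
    · exact card_le_card_add_one_of_edgeGraph_connected src tgt hconn

variable [DecidableEq V] [DecidableEq E] {R : Type*} [CommRing R] (r : V)

theorem det_rootedIncMatrix_submatrix_sq (f : V → Option E) :
    ((rootedIncMatrix src tgt R r).submatrix id f).det ^ 2 =
      if univ.image f ∈ (spanningTrees src tgt).map insertNone.toEmbedding then 1 else 0 := by
  have hcast : (rootedIncMatrix src tgt R r).submatrix id f =
      ((rootedIncMatrix src tgt ℤ r).submatrix id f).map (Int.castRingHom R) := by
    ext v u
    rcases hu : f u with _ | e <;>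
      simp [rootedIncMatrix, orientedIncMatrix, hu, Pi.single_apply]
  rw [hcast, ← RingHom.mapMatrix_apply, ← RingHom.map_det, ← map_pow]
  split_ifs with h <;> rw [image_univ_mem_map_insertNone_spanningTrees_iff] at h
  · rw [Int.isUnit_sq (isUnit_det_rootedIncMatrix_submatrix src tgt r f h.1 h.2), map_one]
  · rw [det_rootedIncMatrix_submatrix_eq_zero src tgt r f h, zero_pow two_ne_zero, map_zero]

/-- The weighted Laplacian `D W Dᵀ` with `1` added in the diagonal entry of the root `r`. Its
determinant is that of the Laplacian with the row and column of `r` deleted. -/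
def groundedLaplacian (w : E → R) : Matrix V V R :=
  Matrix.single r r 1 +
    orientedIncMatrix src tgt R * Matrix.diagonal w * (orientedIncMatrix src tgt R)ᵀ

omit [Fintype V] in
theorem groundedLaplacian_eq_mul (w : E → R) :
    groundedLaplacian src tgt r w = rootedIncMatrix src tgt R r *
      Matrix.diagonal (fun x : Option E => x.elim 1 w) * (rootedIncMatrix src tgt R r)ᵀ := by
  ext u v
  rw [groundedLaplacian, Matrix.add_apply, Matrix.mul_apply, Matrix.mul_apply, Fintype.sum_option]
  simp only [Matrix.mul_diagonal, Matrix.transpose_apply]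
  simp [rootedIncMatrix, Matrix.single_apply, Pi.single_apply, ← ite_and, and_comm, eq_comm]

/-- **Matrix-tree theorem.** -/
theorem det_groundedLaplacian [IsDomain R] [CharZero R] (w : E → R) :
    (groundedLaplacian src tgt r w).det = ∑ S ∈ spanningTrees src tgt, ∏ e ∈ S, w e := by
  set B := rootedIncMatrix src tgt R r
  set w' : Option E → R := fun x => x.elim 1 w
  set 𝒯 := (spanningTrees src tgt).map insertNone.toEmbedding
  have hcard : ∀ T ∈ 𝒯, #T = Fintype.card V := by
    simp only [𝒯, Finset.mem_map]
    rintro _ ⟨S, hS, rfl⟩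
    exact (card_insertNone S).trans ((mem_spanningTrees src tgt).1 hS).2
  have hterm (f : V → Option E) : ((B * Matrix.diagonal w').submatrix id f).det *
      (Bᵀ.submatrix f id).det = if univ.image f ∈ 𝒯 then ∏ v, w' (f v) else 0 := by
    have hcol : (B * Matrix.diagonal w').submatrix id f =
        .of fun v u => w' (f u) * B.submatrix id f v u := by
      ext v u
      simp [Matrix.mul_diagonal, mul_comm]
    rw [hcol, Matrix.det_mul_row, ← Matrix.transpose_submatrix, Matrix.det_transpose, mul_assoc,
      ← sq, det_rootedIncMatrix_submatrix_sq, mul_ite, mul_one, mul_zero]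
  refine mul_left_cancel₀ (Nat.cast_ne_zero.2 (Fintype.card V).factorial_ne_zero) ?_
  rw [groundedLaplacian_eq_mul, factorial_mul_det_mul, sum_congr rfl fun f _ => hterm f,
    ← sum_filter, sum_prod_of_image_univ_mem hcard, sum_map]
  simp [w', prod_insertNone]

end MatrixTree

/-- The uniform probability measure on the family `𝒜` is a determinantal point process with
kernel `K`: the proportion of the members of `𝒜` containing `k` given distinct points is the
corresponding principal minor of `K`. -/
def IsDeterminantal {E R : Type*} [DecidableEq E] [CommRing R] (𝒜 : Finset (Finset E))
    (K : Matrix E E R) : Prop :=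
  ∀ (k : ℕ) (g : Fin k → E), Injective g →
    (#{S ∈ 𝒜 | ∀ a, g a ∈ S} : R) = #𝒜 * (K.submatrix g g).det

section TransferCurrent

variable {V E : Type*} [DecidableEq V] [Fintype E] [DecidableEq E] (src tgt : E → V)
  {R : Type*} [CommRing R]

theorem groundedLaplacian_one_add_indicator (r : V) (t : R) {k : ℕ} {g : Fin k → E}
    (hg : Injective g) :
    groundedLaplacian src tgt r (fun e => if e ∈ univ.image g then 1 + t else 1) =
      groundedLaplacian src tgt r 1 + (orientedIncMatrix src tgt R).submatrix id g *
        (t • ((orientedIncMatrix src tgt R).submatrix id g)ᵀ) := by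
  rw [groundedLaplacian, groundedLaplacian, add_assoc]
  congr 1
  ext u v
  rw [Matrix.add_apply, Matrix.mul_apply, Matrix.mul_apply, Matrix.mul_apply]
  simp only [Matrix.mul_diagonal, Matrix.transpose_apply,
    Matrix.smul_apply, Matrix.submatrix_apply, id_eq, Pi.one_apply, smul_eq_mul]
  rw [← sum_image (s := univ) (g := g)
    (f := fun e => orientedIncMatrix src tgt R u e * (t * orientedIncMatrix src tgt R v e))
    hg.injOn, ← univ_inter (univ.image g), ← sum_ite_mem, ← sum_add_distrib]
  refine sum_congr rfl fun e _ => ?_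
  simp only [univ_inter]
  split_ifs <;> ring

variable [Fintype V]

theorem groundedLaplacian_one_mul (r : V) {X : Matrix V E R}
    (hX : orientedIncMatrix src tgt R * (orientedIncMatrix src tgt R)ᵀ * X =
      orientedIncMatrix src tgt R) :
    groundedLaplacian src tgt r (1 : E → R) * (X - Matrix.replicateRow V (X r)) =
      orientedIncMatrix src tgt R := by
  set D := orientedIncMatrix src tgt R
  have hconst : Dᵀ * Matrix.replicateRow V (X r) = 0 := by
    ext e f
    simp [D, transpose_orientedIncMatrix_mul_apply]
  have hroot : Matrix.single r r (1 : R) * (X - Matrix.replicateRow V (X r)) = 0 := by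
    ext v e
    by_cases hv : v = r
    · simp [hv]
    · simp [hv]
  rw [groundedLaplacian, Matrix.add_mul, hroot, zero_add, Matrix.diagonal_one', Matrix.mul_one,
    Matrix.mul_sub, hX, Matrix.mul_assoc, hconst, Matrix.mul_zero, sub_zero]

theorem sum_spanningTrees_one_add_pow_card_inter [IsDomain R] [CharZero R] {X : Matrix V E R}
    (hX : orientedIncMatrix src tgt R * (orientedIncMatrix src tgt R)ᵀ * X =
      orientedIncMatrix src tgt R) (t : R) {k : ℕ} {g : Fin k → E} (hg : Injective g) :
    ∑ S ∈ spanningTrees src tgt, (1 + t) ^ #(S ∩ univ.image g) =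
      #(spanningTrees src tgt) *
        (1 + t • ((orientedIncMatrix src tgt R)ᵀ * X).submatrix g g).det := by
  rcases (spanningTrees src tgt).eq_empty_or_nonempty with hempty | ⟨S, hS⟩
  · simp [hempty]
  obtain ⟨r⟩ := ((mem_spanningTrees src tgt).1 hS).1.nonempty
  set D := orientedIncMatrix src tgt R
  set L := groundedLaplacian src tgt r (1 : E → R)
  set Φ := (X - Matrix.replicateRow V (X r)).submatrix id g
  have hLΦ : L * Φ = D.submatrix id g := by
    ext v a
    exact congrFun₂ (groundedLaplacian_one_mul src tgt r hX) v (g a)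
  have hDΦ : (D.submatrix id g)ᵀ * Φ = (Dᵀ * X).submatrix g g := by
    ext a b
    refine (transpose_orientedIncMatrix_mul_apply (src ∘ g) (tgt ∘ g) Φ a b).trans ?_
    simp [D, Φ, transpose_orientedIncMatrix_mul_apply]
  have hcard : L.det = #(spanningTrees src tgt) := by
    simp [L, det_groundedLaplacian]
  calc ∑ S ∈ spanningTrees src tgt, (1 + t) ^ #(S ∩ univ.image g)
      = (L + D.submatrix id g * (t • (D.submatrix id g)ᵀ)).det := by
        rw [← groundedLaplacian_one_add_indicator src tgt r t hg, det_groundedLaplacian]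
        exact sum_congr rfl fun S _ => by
          rw [prod_ite, prod_const_one, mul_one, prod_const, filter_mem_eq_inter]
    _ = (L * (1 + Φ * (t • (D.submatrix id g)ᵀ))).det := by
        rw [Matrix.mul_add, Matrix.mul_one, ← Matrix.mul_assoc, hLΦ]
    _ = _ := by
        rw [Matrix.det_mul, Matrix.det_one_add_mul_comm, Matrix.smul_mul, hDΦ, hcard]

/-- **Transfer current theorem** of Burton and Pemantle. -/
theorem isDeterminantal_spanningTrees [IsDomain R] [CharZero R] {X : Matrix V E R}
    (hX : orientedIncMatrix src tgt R * (orientedIncMatrix src tgt R)ᵀ * X =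
      orientedIncMatrix src tgt R) :
    IsDeterminantal (spanningTrees src tgt) ((orientedIncMatrix src tgt R)ᵀ * X) := by
  intro k g hg
  set K := ((orientedIncMatrix src tgt R)ᵀ * X).submatrix g g
  have hD : (orientedIncMatrix src tgt R).map Polynomial.C =
      orientedIncMatrix src tgt (Polynomial R) := by
    ext1 v e
    simp [orientedIncMatrix, Pi.single_apply]
  have hgen : ∑ S ∈ spanningTrees src tgt,
      (1 + Polynomial.X : Polynomial R) ^ #(S ∩ univ.image g) =
        Polynomial.C (#(spanningTrees src tgt) : R) * ((Polynomial.X : Polynomial R) •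
          K.map Polynomial.C + (1 : Matrix _ _ R).map Polynomial.C).det := by
    have hXC := congrArg (Matrix.map · Polynomial.C) hX
    simp only [Matrix.map_mul, Matrix.transpose_map, hD] at hXC
    have hK : ((orientedIncMatrix src tgt (Polynomial R))ᵀ * X.map Polynomial.C).submatrix g g =
        K.map Polynomial.C := by
      rw [← hD, ← Matrix.transpose_map, ← Matrix.map_mul, Matrix.submatrix_map]
    rw [sum_spanningTrees_one_add_pow_card_inter src tgt hXC Polynomial.X hg, hK, add_comm,
      Matrix.map_one _ (map_zero _) (map_one _), map_natCast]
  have hcoeff := congrArg (Polynomial.coeff · k) hgen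
  simp only [Polynomial.finsetSum_coeff, Polynomial.coeff_one_add_X_pow,
    choose_card_inter_image_univ _ hg, Polynomial.coeff_C_mul] at hcoeff
  have hdet := Polynomial.coeff_det_X_add_C_card K 1
  rw [Fintype.card_fin] at hdet
  rw [hdet] at hcoeff
  rw [← hcoeff, card_filter, Nat.cast_sum]

end TransferCurrent

section MethodOfMoments

theorem abs_ite_sub_alternating_sum_choose_le (y r : ℕ) :
    |(if y = 0 then 1 else 0) - ∑ j ∈ range r, (-1 : ℤ) ^ j * y.choose j| ≤ y.choose r := by
  rcases y with _ | y
  · rcases r with _ | r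
    · simp
    · simp [sum_range_succ']
  · rcases r with _ | r
    · simp
    · rw [if_neg y.succ_ne_zero, zero_sub, abs_neg, Int.alternating_sum_range_choose_eq_choose,
        abs_mul, abs_neg_one_pow, one_mul, Nat.abs_cast, Nat.choose_succ_succ]
      exact_mod_cast Nat.le_add_right _ _

theorem descFactorial_add_div_factorial_mul_factorial (m j y : ℕ) :
    ((m + y).descFactorial (m + j) : ℝ) / (m.factorial * j.factorial) =
      (m + y).choose m * y.choose j := by
  have hsplit : (m + y).descFactorial (m + j) =
      m.factorial * (m + y).choose m * (j.factorial * y.choose j) := by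
    rw [← Nat.descFactorial_mul_descFactorial (Nat.le_add_right m j), Nat.add_sub_cancel_left,
      Nat.add_sub_cancel_left, mul_comm, Nat.descFactorial_eq_factorial_mul_choose,
      Nat.descFactorial_eq_factorial_mul_choose]
  rw [div_eq_iff (by positivity), hsplit]
  push_cast
  ring

theorem abs_ite_sub_bonferroni_sum_le (x m r : ℕ) :
    |(if x = m then (1 : ℝ) else 0) -
      ∑ j ∈ range r, (-1) ^ j * ((x.descFactorial (m + j) : ℝ) / (m.factorial * j.factorial))| ≤
        x.descFactorial (m + r) / (m.factorial * r.factorial) := by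
  rcases lt_or_ge x m with hx | hx
  · have hzero (j : ℕ) : x.descFactorial (m + j) = 0 :=
      Nat.descFactorial_eq_zero_iff_lt.2 (hx.trans_le (Nat.le_add_right m j))
    simp [hzero, hx.ne]
  · obtain ⟨y, rfl⟩ := Nat.exists_eq_add_of_le hx
    simp only [descFactorial_add_div_factorial_mul_factorial, Nat.add_eq_left]
    have hfactor : (if y = 0 then (1 : ℝ) else 0) -
        ∑ j ∈ range r, (-1) ^ j * ((m + y).choose m * y.choose j : ℝ) = (m + y).choose m *
          ((if y = 0 then 1 else 0) - ∑ j ∈ range r, (-1) ^ j * (y.choose j : ℝ)) := by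
      rw [mul_sub, mul_sum]
      congr 1
      · split_ifs with hy <;> simp [hy]
      · exact sum_congr rfl fun j _ => mul_left_comm _ _ _
    rw [hfactor, abs_mul, Nat.abs_cast]
    gcongr
    exact_mod_cast abs_ite_sub_alternating_sum_choose_le y r

/-- The `k`-th factorial moment `E[X (X - 1) ⋯ (X - k + 1)]` of the random variable `X` when its
argument is chosen uniformly at random from `s`. -/
noncomputable def factorialMoment {Ω : Type*} (s : Finset Ω) (X : Ω → ℕ) (k : ℕ) : ℝ :=
  𝔼 x ∈ s, ((X x).descFactorial k : ℝ)

/-- **Bonferroni inequalities.** -/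
theorem abs_card_filter_div_card_sub_bonferroni_sum_le {Ω : Type*} (s : Finset Ω) (X : Ω → ℕ)
    (m r : ℕ) :
    |(#{x ∈ s | X x = m} : ℝ) / #s -
      ∑ j ∈ range r, (-1) ^ j * (factorialMoment s X (m + j) / (m.factorial * j.factorial))| ≤
        factorialMoment s X (m + r) / (m.factorial * r.factorial) := by
  have hprob : (#{x ∈ s | X x = m} : ℝ) / #s = 𝔼 x ∈ s, if X x = m then (1 : ℝ) else 0 := by
    rw [expect_eq_sum_div_card, sum_boole]
  simp only [hprob, factorialMoment, expect_div, mul_expect]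
  rw [← expect_sum_comm, ← expect_sub_distrib]
  exact (abs_expect_le _ _).trans (expect_le_expect fun x _ =>
    abs_ite_sub_bonferroni_sum_le (X x) m r)

theorem tendsto_of_abs_sub_le_of_tendsto {α : Type*} {l : Filter α} {P : α → ℝ}
    {S E : ℕ → α → ℝ} {s e : ℕ → ℝ} {L : ℝ} (hbound : ∀ r a, |P a - S r a| ≤ E r a)
    (hS : ∀ r, Tendsto (S r) l (𝓝 (s r))) (hE : ∀ r, Tendsto (E r) l (𝓝 (e r)))
    (hs : Tendsto s atTop (𝓝 L)) (he : Tendsto e atTop (𝓝 0)) : Tendsto P l (𝓝 L) := by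
  rw [Metric.tendsto_nhds]
  intro ε hε
  have htail : Tendsto (fun r => e r + |s r - L|) atTop (𝓝 0) := by
    simpa using he.add (hs.sub_const L).abs
  obtain ⟨r, hr⟩ := (htail.eventually_lt_const hε).exists
  filter_upwards [((hE r).add ((hS r).sub_const L).abs).eventually_lt_const hr] with a ha
  calc dist (P a) L ≤ |P a - S r a| + |S r a - L| := abs_sub_le _ _ _
    _ ≤ E r a + |S r a - L| := by gcongr; exact hbound r a
    _ < ε := ha

theorem tendsto_sum_range_poisson (lam : ℝ) (m : ℕ) :
    Tendsto (fun r => ∑ j ∈ range r,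
      (-1) ^ j * (lam ^ (m + j) / (m.factorial * j.factorial))) atTop
        (𝓝 (Real.exp (-lam) * lam ^ m / m.factorial)) := by
  have hexp : HasSum (fun j : ℕ => (-lam) ^ j / j.factorial) (Real.exp (-lam)) := by
    rw [Real.exp_eq_exp_ℝ]
    exact NormedSpace.expSeries_div_hasSum_exp (-lam)
  have hscaled := (hexp.mul_right (lam ^ m / m.factorial)).tendsto_sum_nat
  rw [← mul_div_assoc] at hscaled
  refine hscaled.congr fun r => sum_congr rfl fun j _ => ?_
  rw [neg_pow, pow_add]
  field_simp

theorem tendsto_pow_add_div_factorial_mul_factorial (lam : ℝ) (m : ℕ) :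
    Tendsto (fun r : ℕ => lam ^ (m + r) / (m.factorial * r.factorial)) atTop (𝓝 0) := by
  have h := (FloorSemiring.tendsto_pow_div_factorial_atTop lam).const_mul (lam ^ m / m.factorial)
  rw [mul_zero] at h
  exact h.congr fun r => by rw [pow_add, div_mul_div_comm]

theorem tendsto_poisson_of_tendsto_factorialMoment {α : Type*} {l : Filter α} {Ω : α → Type*}
    {s : ∀ a, Finset (Ω a)} {X : ∀ a, Ω a → ℕ} {lam : ℝ}
    (h : ∀ k, Tendsto (fun a => factorialMoment (s a) (X a) k) l (𝓝 (lam ^ k))) (m : ℕ) :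
    Tendsto (fun a => (#{x ∈ s a | X a x = m} : ℝ) / #(s a)) l
      (𝓝 (Real.exp (-lam) * lam ^ m / m.factorial)) :=
  tendsto_of_abs_sub_le_of_tendsto
    (fun r a => abs_card_filter_div_card_sub_bonferroni_sum_le (s a) (X a) m r)
    (fun _ => tendsto_finsetSum _ fun j _ => ((h (m + j)).div_const _).const_mul _)
    (fun r => (h (m + r)).div_const _) (tendsto_sum_range_poisson lam m)
    (tendsto_pow_add_div_factorial_mul_factorial lam m)

end MethodOfMoments

section DetMoments

theorem card_filter_injective_and_forall_mem {E : Type*} [Fintype E] [DecidableEq E]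
    (S : Finset E) (k : ℕ) :
    #{g : Fin k → E | Injective g ∧ ∀ a, g a ∈ S} = (#S).descFactorial k := by
  have hemb := Fintype.card_embedding_eq (α := Fin k) (β := S)
  rw [Fintype.card_coe, Fintype.card_fin] at hemb
  rw [← hemb, ← card_univ]
  symm
  refine card_bij (fun φ _ a => (φ a : E)) (fun φ _ => ?_) (fun φ _ ψ _ h => ?_) fun g hg => ?_
  · rw [mem_filter_univ]
    exact ⟨Subtype.val_injective.comp φ.injective, fun a => (φ a).2⟩
  · exact DFunLike.ext _ _ fun a => Subtype.ext (congrFun h a)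
  · rw [mem_filter_univ] at hg
    exact ⟨⟨fun a => ⟨g a, hg.2 a⟩, fun a b hab => hg.1 (Subtype.ext_iff.1 hab)⟩, mem_univ _, rfl⟩

theorem IsDeterminantal.factorialMoment_card_inter {E : Type*} [Fintype E] [DecidableEq E]
    {𝒜 : Finset (Finset E)} {K : Matrix E E ℝ} (hK : IsDeterminantal 𝒜 K) (h𝒜 : 𝒜.Nonempty)
    (k : ℕ) :
    factorialMoment (𝒜 ×ˢ 𝒜) (fun x => #(x.1 ∩ x.2)) k =
      ∑ g : Fin k → E, (K.submatrix g g).det ^ 2 := by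
  have hcard : (#𝒜 : ℝ) ≠ 0 := Nat.cast_ne_zero.2 h𝒜.card_pos.ne'
  have hpair (x : Finset E × Finset E) : ((#(x.1 ∩ x.2)).descFactorial k : ℝ) =
      ∑ g : Fin k → E, if Injective g ∧ (∀ a, g a ∈ x.1) ∧ ∀ a, g a ∈ x.2 then 1 else 0 := by
    simp only [← card_filter_injective_and_forall_mem, mem_inter, forall_and, sum_boole]
  have hcount (g : Fin k → E) : (#{x ∈ 𝒜 ×ˢ 𝒜 | Injective g ∧ (∀ a, g a ∈ x.1) ∧
      ∀ a, g a ∈ x.2} : ℝ) = (#𝒜 * (K.submatrix g g).det) ^ 2 := by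
    by_cases hg : Injective g
    · simp only [hg, true_and]
      rw [filter_product (fun S => ∀ a, g a ∈ S) (fun S => ∀ a, g a ∈ S), card_product,
        Nat.cast_mul, hK k g hg, sq]
    · obtain ⟨a, b, hab, hne⟩ := not_injective_iff.1 hg
      have hdet : (K.submatrix g g).det = 0 :=
        Matrix.det_zero_of_row_eq hne (funext fun c => congrArg (K · (g c)) hab)
      simp [hg, hdet]
  simp only [factorialMoment, hpair]
  rw [expect_sum_comm]
  refine sum_congr rfl fun g _ => ?_
  rw [expect_eq_sum_div_card, sum_boole, hcount, card_product]
  push_cast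
  field_simp

end DetMoments

section PrincipalMinors

variable {ι E : Type*} [Fintype ι] [DecidableEq ι] [Fintype E]

theorem sum_apply_apply_le {F : E → E → ℝ} {B : ℝ} (hF : ∀ e, ∑ f, F e f ≤ B) {a b : ι}
    (hab : a ≠ b) : ∑ g : ι → E, F (g a) (g b) ≤ Fintype.card E ^ (Fintype.card ι - 1) * B := by
  classical
  calc ∑ g : ι → E, F (g a) (g b) = ∑ x : E × ({i // i ≠ b} → E), F (x.2 ⟨a, hab⟩) x.1 :=
        Fintype.sum_equiv (Equiv.funSplitAt b E) _ _ fun g => rfl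
    _ = ∑ h : {i // i ≠ b} → E, ∑ f, F (h ⟨a, hab⟩) f := Fintype.sum_prod_type_right _
    _ ≤ #(univ : Finset ({i // i ≠ b} → E)) • B := sum_le_card_nsmul _ _ _ fun h _ => hF _
    _ = Fintype.card E ^ (Fintype.card ι - 1) * B := by
        simp [Fintype.card_subtype_compl]

theorem sum_det_submatrix_sq (K : Matrix E E ℝ) :
    ∑ g : ι → E, (K.submatrix g g).det ^ 2 =
      ∑ x : Equiv.Perm ι × Equiv.Perm ι, ∑ g : ι → E,
        ((x.1.sign : ℤ) : ℝ) * ((x.2.sign : ℤ) : ℝ) *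
          ((∏ a, K (g (x.1 a)) (g a)) * ∏ a, K (g (x.2 a)) (g a)) := by
  rw [sum_comm]
  refine sum_congr rfl fun g _ => ?_
  rw [sq, Matrix.det_apply', Fintype.sum_mul_sum, Fintype.sum_prod_type]
  exact sum_congr rfl fun σ _ => sum_congr rfl fun τ _ => mul_mul_mul_comm _ _ _ _

variable {K : Matrix E E ℝ} {δ B : ℝ}

theorem sum_abs_prod_mul_prod_le (hδ0 : 0 ≤ δ) (hδ : ∀ e f, |K e f| ≤ δ)
    (hB : ∀ e, ∑ f, |K e f| ≤ B) {σ : Equiv.Perm ι} (hσ : σ ≠ 1) (τ : Equiv.Perm ι) :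
    ∑ g : ι → E, |(∏ a, K (g (σ a)) (g a)) * ∏ a, K (g (τ a)) (g a)| ≤
      (δ ^ 2 * Fintype.card E) ^ (Fintype.card ι - 1) * (δ * B) := by
  obtain ⟨a, ha⟩ : ∃ a, σ a ≠ a := by
    by_contra! h
    exact hσ (Equiv.ext h)
  have hcard : #(univ.erase a) = Fintype.card ι - 1 := card_erase_of_mem (mem_univ a)
  have hprod (g : ι → E) (ρ : ι → ι) (s : Finset ι) : |∏ b ∈ s, K (g (ρ b)) (g b)| ≤ δ ^ #s := by
    rw [abs_prod, ← prod_const]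
    exact prod_le_prod (fun b _ => abs_nonneg _) fun b _ => hδ _ _
  have hterm (g : ι → E) : |(∏ a, K (g (σ a)) (g a)) * ∏ a, K (g (τ a)) (g a)| ≤
      δ ^ (Fintype.card ι - 1) * δ ^ Fintype.card ι * |K (g (σ a)) (g a)| := by
    rw [← mul_prod_erase univ _ (mem_univ a), abs_mul, abs_mul]
    calc |K (g (σ a)) (g a)| * |∏ b ∈ univ.erase a, K (g (σ b)) (g b)| *
          |∏ b, K (g (τ b)) (g b)|
        ≤ |K (g (σ a)) (g a)| * δ ^ #(univ.erase a) * δ ^ #(univ : Finset ι) := by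
          gcongr <;> exact hprod g _ _
      _ = _ := by rw [hcard, card_univ]; ring
  have hpow : δ ^ Fintype.card ι = δ ^ (Fintype.card ι - 1) * δ :=
    (pow_sub_one_mul (Fintype.card_pos_iff.2 ⟨a⟩).ne' δ).symm
  calc ∑ g : ι → E, |(∏ a, K (g (σ a)) (g a)) * ∏ a, K (g (τ a)) (g a)|
      ≤ δ ^ (Fintype.card ι - 1) * δ ^ Fintype.card ι * ∑ g : ι → E, |K (g (σ a)) (g a)| := by
        rw [mul_sum]
        exact sum_le_sum fun g _ => hterm g
    _ ≤ δ ^ (Fintype.card ι - 1) * δ ^ Fintype.card ι *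
          (Fintype.card E ^ (Fintype.card ι - 1) * B) := by
        gcongr
        exact sum_apply_apply_le (F := fun e f => |K e f|) hB ha
    _ = _ := by rw [hpow, mul_pow, pow_right_comm]; ring

/-- For every pair of permutations other than `(1, 1)` in the expansion of the squared minors, some
factor `K (g (σ a)) (g a)` has two independent indices, so summing it over one of them costs a row
sum `B` instead of `δ * card E`. -/
theorem abs_sum_det_submatrix_sq_sub_pow_le (hδ0 : 0 ≤ δ) (hB0 : 0 ≤ B)
    (hδ : ∀ e f, |K e f| ≤ δ) (hB : ∀ e, ∑ f, |K e f| ≤ B) :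
    |∑ g : ι → E, (K.submatrix g g).det ^ 2 - (∑ e, K e e ^ 2) ^ Fintype.card ι| ≤
      (Fintype.card ι).factorial ^ 2 *
        ((δ ^ 2 * Fintype.card E) ^ (Fintype.card ι - 1) * (δ * B)) := by
  classical
  set bound := (δ ^ 2 * Fintype.card E) ^ (Fintype.card ι - 1) * (δ * B)
  set T : Equiv.Perm ι × Equiv.Perm ι → ℝ := fun x => ∑ g : ι → E,
    ((x.1.sign : ℤ) : ℝ) * ((x.2.sign : ℤ) : ℝ) *
      ((∏ a, K (g (x.1 a)) (g a)) * ∏ a, K (g (x.2 a)) (g a))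
  have hdiag : T 1 = (∑ e, K e e ^ 2) ^ Fintype.card ι := by
    rw [← card_univ, ← prod_const, prod_univ_sum, Fintype.piFinset_univ]
    simp [T, sq, prod_mul_distrib]
  have hoff (x : Equiv.Perm ι × Equiv.Perm ι) (hx : x ≠ 1) : |T x| ≤ bound := by
    have habs : |T x| ≤ ∑ g : ι → E,
        |(∏ a, K (g (x.1 a)) (g a)) * ∏ a, K (g (x.2 a)) (g a)| := by
      refine (abs_sum_le_sum_abs _ _).trans_eq (sum_congr rfl fun g _ => ?_)
      rw [abs_mul, abs_mul, ← Int.cast_abs, ← Int.cast_abs]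
      simp
    refine habs.trans ?_
    by_cases hσ : x.1 = 1
    · have hτ : x.2 ≠ 1 := fun hτ => hx (Prod.ext hσ hτ)
      exact (sum_congr rfl fun g _ => by rw [mul_comm]).trans_le
        (sum_abs_prod_mul_prod_le hδ0 hδ hB hτ x.1)
    · exact sum_abs_prod_mul_prod_le hδ0 hδ hB hσ x.2
  calc |∑ g : ι → E, (K.submatrix g g).det ^ 2 - (∑ e, K e e ^ 2) ^ Fintype.card ι|
      = |∑ x ∈ univ.erase 1, T x| := by
        rw [sum_det_submatrix_sq, ← hdiag, ← add_sum_erase univ T (mem_univ 1), add_sub_cancel_left]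
    _ ≤ ∑ x ∈ univ.erase 1, |T x| := abs_sum_le_sum_abs _ _
    _ ≤ #(univ.erase (1 : Equiv.Perm ι × Equiv.Perm ι)) • bound :=
        sum_le_card_nsmul _ _ _ fun x hx => hoff x (ne_of_mem_erase hx)
    _ ≤ #(univ : Finset (Equiv.Perm ι × Equiv.Perm ι)) • bound := by
        gcongr
        exact erase_subset _ _
    _ = _ := by
        rw [nsmul_eq_mul, card_univ, Fintype.card_prod, Fintype.card_perm]
        push_cast
        ring

end PrincipalMinors

section PoissonLimit

theorem tendsto_poisson_of_isDeterminantal {α : Type*} {l : Filter α} {E : α → Type*}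
    [∀ a, Fintype (E a)] [∀ a, DecidableEq (E a)] {𝒜 : ∀ a, Finset (Finset (E a))}
    {K : ∀ a, Matrix (E a) (E a) ℝ} {δ : α → ℝ} {B M lam : ℝ}
    (h𝒜 : ∀ᶠ a in l, (𝒜 a).Nonempty) (hK : ∀ᶠ a in l, IsDeterminantal (𝒜 a) (K a))
    (hδ : ∀ᶠ a in l, ∀ e f, |K a e f| ≤ δ a) (hB : ∀ᶠ a in l, ∀ e, ∑ f, |K a e f| ≤ B)
    (hM : ∀ᶠ a in l, δ a ^ 2 * Fintype.card (E a) ≤ M) (hδ0 : Tendsto δ l (𝓝 0))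
    (hlam : Tendsto (fun a => ∑ e, K a e e ^ 2) l (𝓝 lam)) (m : ℕ) :
    Tendsto (fun a => (#{x ∈ 𝒜 a ×ˢ 𝒜 a | #(x.1 ∩ x.2) = m} : ℝ) / #(𝒜 a ×ˢ 𝒜 a)) l
      (𝓝 (Real.exp (-lam) * lam ^ m / m.factorial)) := by
  refine tendsto_poisson_of_tendsto_factorialMoment (fun k => ?_) m
  have herr : Tendsto (fun a => (k.factorial : ℝ) ^ 2 * (M ^ (k - 1) * (|δ a| * |B|))) l
      (𝓝 0) := by
    simpa using ((hδ0.abs.mul_const |B|).const_mul (M ^ (k - 1))).const_mul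
      ((k.factorial : ℝ) ^ 2)
  refine tendsto_of_tendsto_of_dist (hlam.pow k) (squeeze_zero' (.of_forall fun _ => dist_nonneg)
    ?_ herr)
  filter_upwards [h𝒜, hK, hδ, hB, hM] with a h𝒜 hK hδ hB hM
  have hminors := abs_sum_det_submatrix_sq_sub_pow_le (ι := Fin k) (abs_nonneg (δ a))
    (abs_nonneg B) (fun e f => (hδ e f).trans (le_abs_self _))
    fun e => (hB e).trans (le_abs_self _)
  rw [Fintype.card_fin, sq_abs] at hminors
  rw [dist_comm, Real.dist_eq, hK.factorialMoment_card_inter h𝒜]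
  refine hminors.trans ?_
  gcongr

end PoissonLimit

section SimpleGraphTrees

variable {V E : Type*} {src tgt : E → V} (hinj : Injective fun e => s(src e, tgt e))
  {G : SimpleGraph V} (hG : Set.range (fun e => s(src e, tgt e)) = G.edgeSet)

include hG in
theorem edgeSet_edgeGraph_of_range_eq (S : Set E) :
    (edgeGraph src tgt S).edgeSet = (fun e => s(src e, tgt e)) '' S := by
  rw [edgeGraph, SimpleGraph.edgeSet_fromEdgeSet, sdiff_eq_left, Set.disjoint_left]
  rintro _ ⟨e, -, rfl⟩
  exact G.not_isDiag_of_mem_edgeSet (hG ▸ Set.mem_range_self e)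

include hG in
theorem edgeGraph_le_of_range_eq (S : Set E) : edgeGraph src tgt S ≤ G := by
  rw [← SimpleGraph.edgeSet_subset_edgeSet, edgeSet_edgeGraph_of_range_eq hG, ← hG]
  exact Set.image_subset_range _ _

include hG in
theorem exists_edgeGraph_eq_of_le [Finite E] {T : SimpleGraph V} (hT : T ≤ G) :
    ∃ S : Finset E, edgeGraph src tgt (S : Set E) = T := by
  refine ⟨(Set.toFinite {e | s(src e, tgt e) ∈ T.edgeSet}).toFinset,
    SimpleGraph.edgeSet_injective ?_⟩
  rw [edgeSet_edgeGraph_of_range_eq hG, Set.Finite.coe_toFinset]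
  exact Set.image_preimage_eq_of_subset (hG ▸ SimpleGraph.edgeSet_mono hT)

include hinj hG

theorem edgeGraph_injective : Injective (edgeGraph src tgt) := by
  intro S S' h
  rw [← SimpleGraph.edgeSet_inj, edgeSet_edgeGraph_of_range_eq hG,
    edgeSet_edgeGraph_of_range_eq hG] at h
  exact hinj.image_injective h

theorem card_edgeSet_edgeGraph (S : Finset E) :
    Nat.card (edgeGraph src tgt (S : Set E)).edgeSet = #S := by
  rw [edgeSet_edgeGraph_of_range_eq hG, Nat.card_image_of_injective hinj,
    Nat.card_coe_set_eq, Set.ncard_coe_finset]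

theorem card_edgeSet_edgeGraph_inf [DecidableEq E] (S S' : Finset E) :
    Nat.card (edgeGraph src tgt (S : Set E) ⊓ edgeGraph src tgt (S' : Set E)).edgeSet =
      #(S ∩ S') := by
  rw [← card_edgeSet_edgeGraph hinj hG, coe_inter]
  simp only [edgeGraph, Set.image_inter hinj, SimpleGraph.fromEdgeSet_inter]

variable [Fintype V] [Fintype E]

theorem mem_spanningTrees_iff_isTree (S : Finset E) :
    S ∈ spanningTrees src tgt ↔ (edgeGraph src tgt (S : Set E)).IsTree := by
  rw [mem_spanningTrees, SimpleGraph.isTree_iff_connected_and_card,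
    card_edgeSet_edgeGraph hinj hG, Nat.card_eq_fintype_card]

theorem spanningTrees_nonempty (hconn : G.Connected) : (spanningTrees src tgt).Nonempty := by
  obtain ⟨T, hT, htree⟩ := hconn.exists_isTree_le
  obtain ⟨S, rfl⟩ := exists_edgeGraph_eq_of_le hG hT
  exact ⟨S, (mem_spanningTrees_iff_isTree hinj hG S).2 htree⟩

theorem card_isTree_eq_card_spanningTrees :
    Nat.card {T : SimpleGraph V // T ≤ G ∧ T.IsTree} = #(spanningTrees src tgt) := by
  have himage : {T : SimpleGraph V | T ≤ G ∧ T.IsTree} =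
      (fun S : Finset E => edgeGraph src tgt (S : Set E)) '' spanningTrees src tgt := by
    ext T
    constructor
    · rintro ⟨hT, htree⟩
      obtain ⟨S, rfl⟩ := exists_edgeGraph_eq_of_le hG hT
      exact ⟨S, (mem_spanningTrees_iff_isTree hinj hG S).2 htree, rfl⟩
    · rintro ⟨S, hS, rfl⟩
      exact ⟨edgeGraph_le_of_range_eq hG _, (mem_spanningTrees_iff_isTree hinj hG S).1 hS⟩
  rw [← Set.ncard_coe_finset, ← Set.ncard_image_of_injective _
    ((edgeGraph_injective hinj hG).comp coe_injective)]
  exact congrArg Set.ncard himage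

theorem card_isTree_pairs_eq_card_filter_spanningTrees [DecidableEq E] (m : ℕ) :
    Nat.card {q : SimpleGraph V × SimpleGraph V // q.1 ≤ G ∧ q.2 ≤ G ∧ q.1.IsTree ∧ q.2.IsTree ∧
        Nat.card (q.1 ⊓ q.2).edgeSet = m} =
      #{x ∈ spanningTrees src tgt ×ˢ spanningTrees src tgt | #(x.1 ∩ x.2) = m} := by
  set graph := fun S : Finset E => edgeGraph src tgt (S : Set E)
  have hgraph : Injective graph := (edgeGraph_injective hinj hG).comp coe_injective
  have himage : {q : SimpleGraph V × SimpleGraph V | q.1 ≤ G ∧ q.2 ≤ G ∧ q.1.IsTree ∧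
        q.2.IsTree ∧ Nat.card (q.1 ⊓ q.2).edgeSet = m} = Prod.map graph graph ''
      (spanningTrees src tgt ×ˢ spanningTrees src tgt).filter fun x => #(x.1 ∩ x.2) = m := by
    ext ⟨T, T'⟩
    simp only [Set.mem_ofPred_eq, Set.mem_image, mem_coe, Finset.mem_filter, mem_product,
      mem_spanningTrees_iff_isTree hinj hG, ← card_edgeSet_edgeGraph_inf hinj hG]
    constructor
    · rintro ⟨hT, hT', h⟩
      obtain ⟨S, rfl⟩ := exists_edgeGraph_eq_of_le hG hT
      obtain ⟨S', rfl⟩ := exists_edgeGraph_eq_of_le hG hT'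
      exact ⟨(S, S'), ⟨⟨h.1, h.2.1⟩, h.2.2⟩, rfl⟩
    · rintro ⟨⟨S, S'⟩, ⟨⟨hS, hS'⟩, hm⟩, heq⟩
      obtain ⟨rfl, rfl⟩ := Prod.mk.inj heq
      exact ⟨edgeGraph_le_of_range_eq hG _, edgeGraph_le_of_range_eq hG _, hS, hS', hm⟩
  rw [← Set.ncard_coe_finset, ← Set.ncard_image_of_injective _ (hgraph.prodMap hgraph)]
  exact congrArg Set.ncard himage

end SimpleGraphTrees

section TransferBounds

variable {V E : Type*} [Fintype V] [DecidableEq V] (src tgt : E → V) {A : Matrix V V ℝ} {ε : ℝ}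

theorem transpose_orientedIncMatrix_mul_mul_apply {R : Type*} [CommRing R] (A : Matrix V V R)
    (e f : E) :
    ((orientedIncMatrix src tgt R)ᵀ * (A * orientedIncMatrix src tgt R)) e f =
      A (src e) (src f) - A (src e) (tgt f) - (A (tgt e) (src f) - A (tgt e) (tgt f)) := by
  have hcol (v : V) :
      (A * orientedIncMatrix src tgt R) v f = A v (src f) - A v (tgt f) :=
    vecMul_orientedIncMatrix_apply src tgt (A v) f
  rw [transpose_orientedIncMatrix_mul_apply, hcol, hcol]

theorem abs_transpose_orientedIncMatrix_mul_mul_apply_le (A : Matrix V V ℝ) (e f : E) :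
    |((orientedIncMatrix src tgt ℝ)ᵀ * (A * orientedIncMatrix src tgt ℝ)) e f| ≤
      (|A (src e) (src f)| + |A (src e) (tgt f)|) +
        (|A (tgt e) (src f)| + |A (tgt e) (tgt f)|) := by
  rw [transpose_orientedIncMatrix_mul_mul_apply]
  exact (abs_sub _ _).trans (add_le_add (abs_sub _ _) (abs_sub _ _))

theorem abs_transpose_orientedIncMatrix_mul_mul_apply_le_of_row_sum_le
    (hA : ∀ v, ∑ w, |A v w| ≤ ε) (e f : E) :
    |((orientedIncMatrix src tgt ℝ)ᵀ * (A * orientedIncMatrix src tgt ℝ)) e f| ≤ 4 * ε := by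
  have hentry (v w : V) : |A v w| ≤ ε :=
    (single_le_sum (fun w _ => abs_nonneg (A v w)) (mem_univ w)).trans (hA v)
  linarith [abs_transpose_orientedIncMatrix_mul_mul_apply_le src tgt A e f,
    hentry (src e) (src f), hentry (src e) (tgt f), hentry (tgt e) (src f), hentry (tgt e) (tgt f)]

variable [Fintype E]

theorem sum_abs_transpose_orientedIncMatrix_mul_mul_apply_le
    (hinj : Injective fun e => (src e, tgt e)) (hA : ∀ v, ∑ w, |A v w| ≤ ε) (e : E) :
    ∑ f, |((orientedIncMatrix src tgt ℝ)ᵀ * (A * orientedIncMatrix src tgt ℝ)) e f| ≤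
      4 * Fintype.card V * ε := by
  have hends (v : V) : ∑ f, (|A v (src f)| + |A v (tgt f)|) ≤ 2 * Fintype.card V * ε := by
    calc ∑ f, (|A v (src f)| + |A v (tgt f)|)
        = ∑ x ∈ univ.image fun f => (src f, tgt f), (|A v x.1| + |A v x.2|) :=
          (sum_image (f := fun x => |A v x.1| + |A v x.2|) hinj.injOn).symm
      _ ≤ ∑ x : V × V, (|A v x.1| + |A v x.2|) :=
          sum_le_univ_sum_of_nonneg fun x => by positivity
      _ = 2 * Fintype.card V * ∑ w, |A v w| := by
          simp only [Fintype.sum_prod_type, sum_add_distrib, sum_const, card_univ, nsmul_eq_mul,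
            ← mul_sum]
          ring
      _ ≤ 2 * Fintype.card V * ε := by gcongr; exact hA v
  calc ∑ f, |((orientedIncMatrix src tgt ℝ)ᵀ * (A * orientedIncMatrix src tgt ℝ)) e f|
      ≤ ∑ f, ((|A (src e) (src f)| + |A (src e) (tgt f)|) +
          (|A (tgt e) (src f)| + |A (tgt e) (tgt f)|)) :=
        sum_le_sum fun f _ => abs_transpose_orientedIncMatrix_mul_mul_apply_le src tgt A e f
    _ ≤ 4 * Fintype.card V * ε := by
        rw [sum_add_distrib]
        linarith [hends (src e), hends (tgt e)]

end TransferBounds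

section PartDegree

variable {ι : Type*} [Fintype ι] (V : ι → Type*) [∀ i, Fintype (V i)]

/-- The degree of the vertices of the part `V i` in the complete multipartite graph. -/
def partDegree (i : ι) : ℝ := Fintype.card (Σ j, V j) - Fintype.card (V i)

theorem partDegree_nonneg (i : ι) : 0 ≤ partDegree V i := by
  rw [partDegree, sub_nonneg, Nat.cast_le]
  exact Fintype.card_le_of_injective (Sigma.mk i) sigma_mk_injective

variable {V}

theorem exists_fst_ne_of_partDegree_ne_zero {i : ι} (hdeg : partDegree V i ≠ 0) :
    ∃ v : Σ j, V j, v.1 ≠ i := by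
  by_contra! hpart
  have hsurj : Surjective (Sigma.mk (β := V) i) := by
    rintro ⟨j, x⟩
    obtain rfl := hpart ⟨j, x⟩
    exact ⟨x, rfl⟩
  rw [partDegree, Fintype.card_of_bijective ⟨sigma_mk_injective, hsurj⟩, sub_self] at hdeg
  exact hdeg rfl

theorem completeMultipartiteGraph_connected [Nonempty (Σ i, V i)]
    (hdeg : ∀ i, partDegree V i ≠ 0) : (SimpleGraph.completeMultipartiteGraph V).Connected := by
  have hadj {u v : Σ i, V i} (h : u.1 ≠ v.1) :
      (SimpleGraph.completeMultipartiteGraph V).Reachable u v := SimpleGraph.Adj.reachable h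
  refine ⟨fun u v => ?_⟩
  by_cases huv : u.1 = v.1
  · obtain ⟨w, hw⟩ := exists_fst_ne_of_partDegree_ne_zero (hdeg u.1)
    exact (hadj hw.symm).trans (hadj (huv ▸ hw))
  · exact hadj huv

end PartDegree

section Multipartite

variable {ι : Type*} [LinearOrder ι] (V : ι → Type*)

/-- The edges of the complete multipartite graph with parts `V i`, each oriented from its endpoint
in the part of smaller index to the one in the part of larger index. -/
abbrev MultipartiteEdge := {x : (Σ i, V i) × (Σ i, V i) // x.1.1 < x.2.1}

namespace MultipartiteEdge

variable {V}

/-- The endpoint in the part of smaller index. -/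
def src (e : MultipartiteEdge V) : Σ i, V i := e.1.1

/-- The endpoint in the part of larger index. -/
def tgt (e : MultipartiteEdge V) : Σ i, V i := e.1.2

theorem sym2_mk_src_tgt_injective : Injective fun e : MultipartiteEdge V => s(e.src, e.tgt) := by
  rintro ⟨x, hx⟩ ⟨y, hy⟩ h
  rcases Sym2.mk_eq_mk_iff.1 h with rfl | rfl
  · rfl
  · exact absurd hx hy.asymm

theorem range_sym2_mk_src_tgt : Set.range (fun e : MultipartiteEdge V => s(e.src, e.tgt)) =
    (SimpleGraph.completeMultipartiteGraph V).edgeSet := by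
  ext z
  induction z with | h u v => ?_
  constructor
  · rintro ⟨e, he⟩
    rw [← he]
    exact e.2.ne
  · intro h
    rcases lt_or_gt_of_ne (h : u.1 ≠ v.1) with huv | hvu
    · exact ⟨⟨(u, v), huv⟩, rfl⟩
    · exact ⟨⟨(v, u), hvu⟩, Sym2.eq_swap⟩

variable [Fintype ι] [∀ i, Fintype (V i)]

theorem sum_src_tgt {M : Type*} [AddCommMonoid M] (F : (Σ i, V i) → (Σ i, V i) → M) :
    ∑ e : MultipartiteEdge V, F e.src e.tgt =
      ∑ u : Σ i, V i, ∑ v : Σ i, V i, if u.1 < v.1 then F u v else 0 := by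
  rw [← Fintype.sum_prod_type' (f := fun u v => if u.1 < v.1 then F u v else 0), ← sum_filter]
  exact (sum_subtype _ (fun x => mem_filter_univ x) fun x : _ × _ => F x.1 x.2).symm

end MultipartiteEdge

variable [Fintype ι] [∀ i, Fintype (V i)]

theorem card_multipartiteEdge_le :
    Fintype.card (MultipartiteEdge V) ≤ Fintype.card (Σ i, V i) ^ 2 := by
  rw [sq, ← Fintype.card_prod]
  exact Fintype.card_subtype_le _

/-- The edge sets of the spanning trees of the complete multipartite graph with parts `V i`. -/
noncomputable abbrev multipartiteSpanningTrees : Finset (Finset (MultipartiteEdge V)) :=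
  spanningTrees MultipartiteEdge.src MultipartiteEdge.tgt

variable [∀ i, DecidableEq (V i)]

/-- The oriented incidence matrix of the complete multipartite graph with parts `V i`. -/
abbrev multipartiteIncMatrix : Matrix (Σ i, V i) (MultipartiteEdge V) ℝ :=
  orientedIncMatrix MultipartiteEdge.src MultipartiteEdge.tgt ℝ

variable {V}

theorem multipartiteIncMatrix_mul_transpose_mul_apply {κ : Type*}
    (X : Matrix (Σ i, V i) κ ℝ) (u : Σ i, V i) (x : κ) :
    (multipartiteIncMatrix V * ((multipartiteIncMatrix V)ᵀ * X)) u x =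
      ∑ v : Σ i, V i, if v.1 = u.1 then 0 else X u x - X v x := by
  have hterm (a b : Σ i, V i) : (if a.1 < b.1 then
      ((if u = a then (1 : ℝ) else 0) - (if u = b then 1 else 0)) * (X a x - X b x) else 0) =
      (if u = a then (if u.1 < b.1 then X u x - X b x else 0) else 0) +
        (if u = b then (if a.1 < u.1 then X u x - X a x else 0) else 0) := by
    by_cases ha : u = a
    · subst ha
      by_cases hb : u = b
      · simp [hb]
      · simp [hb]
    · by_cases hb : u = b
      · subst hb
        simp [ha]
      · simp [ha, hb]
  calc (multipartiteIncMatrix V * ((multipartiteIncMatrix V)ᵀ * X)) u x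
      = ∑ e : MultipartiteEdge V,
          ((if u = e.src then (1 : ℝ) else 0) - (if u = e.tgt then 1 else 0)) *
            (X e.src x - X e.tgt x) := by
        rw [Matrix.mul_apply]
        refine sum_congr rfl fun e _ => ?_
        rw [transpose_orientedIncMatrix_mul_apply]
        simp [orientedIncMatrix, Pi.single_apply]
    _ = (∑ b : Σ i, V i, if u.1 < b.1 then X u x - X b x else 0) +
          ∑ a : Σ i, V i, if a.1 < u.1 then X u x - X a x else 0 := by
        rw [MultipartiteEdge.sum_src_tgt fun a b =>
          ((if u = a then (1 : ℝ) else 0) - (if u = b then 1 else 0)) * (X a x - X b x)]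
        simp only [hterm, sum_add_distrib]
        rw [sum_comm]
        simp
    _ = ∑ v : Σ i, V i, if v.1 = u.1 then 0 else X u x - X v x := by
        rw [← sum_add_distrib]
        refine sum_congr rfl fun v _ => ?_
        rcases lt_trichotomy v.1 u.1 with h | h | h
        · simp [h, h.ne, h.not_gt]
        · simp [h]
        · simp [h, h.ne', h.not_gt]

variable (V) in
/-- A Green function of the complete multipartite graph: it inverts the Laplacian up to a constant
function. -/
noncomputable def multipartiteGreen : Matrix (Σ i, V i) (Σ i, V i) ℝ :=
  .of fun u v => ((if u = v then 1 else 0) -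
    (if u.1 = v.1 then 1 else 0) / Fintype.card (Σ i, V i)) / partDegree V u.1

theorem sum_multipartiteGreen_part (hdeg : ∀ i, partDegree V i ≠ 0) (i : ι) (v : Σ i, V i) :
    ∑ x : V i, multipartiteGreen V ⟨i, x⟩ v =
      if i = v.1 then 1 / (Fintype.card (Σ i, V i) : ℝ) else 0 := by
  obtain ⟨j, y⟩ := v
  have hN : (Fintype.card (Σ i, V i) : ℝ) ≠ 0 :=
    Nat.cast_ne_zero.2 (Fintype.card_pos_iff.2 ⟨⟨j, y⟩⟩).ne'
  by_cases hij : i = j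
  · subst hij
    have hi := hdeg i
    simp only [multipartiteGreen, Matrix.of_apply, Sigma.mk.injEq, heq_eq_eq, true_and, if_true,
      ← sum_div, sum_sub_distrib, sum_ite_eq', mem_univ, sum_const, card_univ, nsmul_eq_mul]
    rw [div_eq_iff hi, partDegree]
    field_simp
  · simp [multipartiteGreen, hij]

theorem multipartiteIncMatrix_mul_transpose_mul_multipartiteGreen_apply
    (hdeg : ∀ i, partDegree V i ≠ 0) (u v : Σ i, V i) :
    (multipartiteIncMatrix V * ((multipartiteIncMatrix V)ᵀ * multipartiteGreen V)) u v =
      (if u = v then 1 else 0) - 1 / Fintype.card (Σ i, V i) := by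
  set g := multipartiteGreen V
  set N := (Fintype.card (Σ i, V i) : ℝ)
  have hpart (i : ι) : (∑ x : V i, if i = u.1 then 0 else g u v - g ⟨i, x⟩ v) =
      Fintype.card (V i) * g u v - (if i = v.1 then 1 / N else 0) -
        if i = u.1 then Fintype.card (V u.1) * g u v - (if u.1 = v.1 then 1 / N else 0) else 0 := by
    rcases eq_or_ne i u.1 with rfl | hi
    · simp
    · simp [hi, sum_multipartiteGreen_part hdeg, g, N]
  have hg : partDegree V u.1 * g u v =
      (if u = v then 1 else 0) - (if u.1 = v.1 then 1 else 0) / N :=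
    mul_div_cancel₀ _ (hdeg u.1)
  rw [multipartiteIncMatrix_mul_transpose_mul_apply, Fintype.sum_sigma]
  simp only [hpart, sum_sub_distrib, ← sum_mul, sum_ite_eq', mem_univ, if_true]
  rw [partDegree, Fintype.card_sigma, ite_div, zero_div] at hg
  push_cast at hg
  linear_combination hg

theorem multipartiteIncMatrix_mul_transpose_mul_multipartiteGreen_mul
    (hdeg : ∀ i, partDegree V i ≠ 0) :
    multipartiteIncMatrix V * (multipartiteIncMatrix V)ᵀ *
      (multipartiteGreen V * multipartiteIncMatrix V) = multipartiteIncMatrix V := by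
  ext u e
  rw [← Matrix.mul_assoc, Matrix.mul_assoc (multipartiteIncMatrix V),
    multipartiteIncMatrix]
  refine (vecMul_orientedIncMatrix_apply _ _ _ e).trans ?_
  rw [multipartiteIncMatrix_mul_transpose_mul_multipartiteGreen_apply hdeg,
    multipartiteIncMatrix_mul_transpose_mul_multipartiteGreen_apply hdeg]
  simp [orientedIncMatrix, Pi.single_apply]

theorem sum_abs_multipartiteGreen_le (u : Σ i, V i) :
    ∑ v, |multipartiteGreen V u v| ≤ 2 / partDegree V u.1 := by
  set N := (Fintype.card (Σ i, V i) : ℝ)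
  have hN : N ≠ 0 := Nat.cast_ne_zero.2 (Fintype.card_pos_iff.2 ⟨u⟩).ne'
  have hterm (v : Σ i, V i) : |multipartiteGreen V u v| ≤
      ((if u = v then 1 else 0) + 1 / N) / partDegree V u.1 := by
    rw [multipartiteGreen, Matrix.of_apply, abs_div, abs_of_nonneg (partDegree_nonneg V u.1)]
    refine div_le_div_of_nonneg_right ((abs_sub _ _).trans (add_le_add ?_ ?_))
      (partDegree_nonneg V u.1)
    · split_ifs <;> simp
    · rw [abs_div, Nat.abs_cast]
      gcongr
      split_ifs <;> simp
  calc ∑ v, |multipartiteGreen V u v|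
      ≤ ∑ v, ((if u = v then 1 else 0) + 1 / N) / partDegree V u.1 := sum_le_sum fun v _ => hterm v
    _ = (1 + N * (1 / N)) / partDegree V u.1 := by
        simp [← sum_div, sum_add_distrib, N]
    _ = 2 / partDegree V u.1 := by rw [mul_one_div_cancel hN, one_add_one_eq_two]

variable (V) in
/-- The matrix of transfer currents of the complete multipartite graph with parts `V i`. -/
noncomputable def multipartiteTransferMatrix : Matrix (MultipartiteEdge V) (MultipartiteEdge V) ℝ :=
  (multipartiteIncMatrix V)ᵀ * (multipartiteGreen V * multipartiteIncMatrix V)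

theorem isDeterminantal_multipartiteTransferMatrix (hdeg : ∀ i, partDegree V i ≠ 0) :
    IsDeterminantal (multipartiteSpanningTrees V) (multipartiteTransferMatrix V) :=
  isDeterminantal_spanningTrees _ _
    (multipartiteIncMatrix_mul_transpose_mul_multipartiteGreen_mul hdeg)

section Bounds

variable {C : ℝ} (hdeg : ∀ i, partDegree V i ≠ 0)
  (hC : ∀ i, Fintype.card (Σ i, V i) ≤ C * partDegree V i)

include hdeg hC

theorem sum_abs_multipartiteGreen_le_div (u : Σ i, V i) :
    ∑ v, |multipartiteGreen V u v| ≤ 2 * C / Fintype.card (Σ i, V i) := by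
  have hN : (0 : ℝ) < Fintype.card (Σ i, V i) := Nat.cast_pos.2 (Fintype.card_pos_iff.2 ⟨u⟩)
  have hpos := (partDegree_nonneg V u.1).lt_of_ne' (hdeg u.1)
  refine (sum_abs_multipartiteGreen_le u).trans ?_
  rw [div_le_div_iff₀ hpos hN]
  linarith [hC u.1]

theorem abs_multipartiteTransferMatrix_le (e f : MultipartiteEdge V) :
    |multipartiteTransferMatrix V e f| ≤ 8 * C / Fintype.card (Σ i, V i) :=
  (abs_transpose_orientedIncMatrix_mul_mul_apply_le_of_row_sum_le _ _
    (sum_abs_multipartiteGreen_le_div hdeg hC) e f).trans_eq (by ring)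

theorem sum_abs_multipartiteTransferMatrix_le (e : MultipartiteEdge V) :
    ∑ f, |multipartiteTransferMatrix V e f| ≤ 8 * C := by
  have hN : (Fintype.card (Σ i, V i) : ℝ) ≠ 0 :=
    Nat.cast_ne_zero.2 (Fintype.card_pos_iff.2 ⟨e.src⟩).ne'
  refine (sum_abs_transpose_orientedIncMatrix_mul_mul_apply_le _ _ Subtype.val_injective
    (sum_abs_multipartiteGreen_le_div hdeg hC) e).trans_eq ?_
  field_simp
  ring

end Bounds

theorem multipartiteTransferMatrix_apply_self (e : MultipartiteEdge V) :
    multipartiteTransferMatrix V e e = (1 - 1 / Fintype.card (Σ i, V i)) *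
      (1 / partDegree V e.src.1 + 1 / partDegree V e.tgt.1) := by
  have hpart : e.src.1 ≠ e.tgt.1 := e.2.ne
  have hends : e.src ≠ e.tgt := ne_of_apply_ne Sigma.fst hpart
  rw [multipartiteTransferMatrix, transpose_orientedIncMatrix_mul_mul_apply]
  simp only [multipartiteGreen, Matrix.of_apply, hends, hends.symm, hpart, hpart.symm, if_true,
    if_false]
  ring

theorem sum_multipartiteTransferMatrix_apply_self_sq :
    ∑ e, multipartiteTransferMatrix V e e ^ 2 =
      ∑ pq : ι × ι with pq.1 < pq.2, (Fintype.card (V pq.1) * Fintype.card (V pq.2) : ℝ) *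
        ((1 - 1 / Fintype.card (Σ i, V i)) *
          (1 / partDegree V pq.1 + 1 / partDegree V pq.2)) ^ 2 := by
  simp only [multipartiteTransferMatrix_apply_self]
  rw [MultipartiteEdge.sum_src_tgt fun u v => ((1 - 1 / (Fintype.card (Σ i, V i) : ℝ)) *
    (1 / partDegree V u.1 + 1 / partDegree V v.1)) ^ 2, sum_filter, Fintype.sum_prod_type]
  simp only [Fintype.sum_sigma, sum_const, card_univ, nsmul_eq_mul, mul_sum]
  simp [mul_assoc]

end Multipartite

/-- The expected value `λ` of the limiting Poisson distribution for the limiting proportions `c` of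
the part sizes. -/
noncomputable def multipartitePoissonParameter {ι : Type*} [Fintype ι] [LinearOrder ι] (c : ι → ℝ) :
    ℝ :=
  ∑ pq : ι × ι with pq.1 < pq.2,
    c pq.1 * c pq.2 * (2 - c pq.1 - c pq.2) ^ 2 / ((1 - c pq.1) ^ 2 * (1 - c pq.2) ^ 2)

section Asymptotics

variable {α : Type*} {l : Filter α} {ι : Type*} [Fintype ι] {V : α → ι → Type*}
  [∀ a i, Fintype (V a i)]

theorem tendsto_card_div_partDegree {i : ι} {x : ℝ} (hx : x ≠ 1)
    (htot : Tendsto (fun a => Fintype.card (Σ j, V a j)) l atTop)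
    (hconv : Tendsto (fun a => (Fintype.card (V a i) : ℝ) / Fintype.card (Σ j, V a j)) l (𝓝 x)) :
    Tendsto (fun a => Fintype.card (Σ j, V a j) / partDegree (V a) i) l (𝓝 (1 / (1 - x))) := by
  refine (tendsto_const_nhds.div (tendsto_const_nhds.sub hconv)
    (sub_ne_zero.2 hx.symm)).congr' ?_
  filter_upwards [htot.eventually_ne_atTop 0] with a ha
  rw [Pi.div_apply, one_sub_div (Nat.cast_ne_zero.2 ha), one_div_div, partDegree]

variable {c : ι → ℝ} (hc : ∀ i, c i ≠ 1)
  (htot : Tendsto (fun a => Fintype.card (Σ j, V a j)) l atTop)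
  (hconv : ∀ i, Tendsto (fun a => (Fintype.card (V a i) : ℝ) / Fintype.card (Σ j, V a j)) l
    (𝓝 (c i)))

include hc htot hconv

theorem eventually_partDegree_ne_zero : ∀ᶠ a in l, ∀ i, partDegree (V a) i ≠ 0 := by
  refine eventually_all.2 fun i => ?_
  have hne : 1 / (1 - c i) ≠ 0 := one_div_ne_zero (sub_ne_zero.2 (hc i).symm)
  filter_upwards [(tendsto_card_div_partDegree (hc i) htot (hconv i)).eventually_ne hne] with a ha
  exact (div_ne_zero_iff.1 ha).2

theorem exists_eventually_card_le_mul_partDegree :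
    ∃ C, ∀ᶠ a in l, ∀ i, Fintype.card (Σ j, V a j) ≤ C * partDegree (V a) i := by
  obtain ⟨C, hC⟩ := Finite.exists_le fun i => 1 / (1 - c i)
  refine ⟨C + 1, ?_⟩
  have hratio : ∀ᶠ a in l, ∀ i, Fintype.card (Σ j, V a j) / partDegree (V a) i < C + 1 :=
    eventually_all.2 fun i =>
      (tendsto_card_div_partDegree (hc i) htot (hconv i)).eventually_lt_const
        ((hC i).trans_lt (lt_add_one C))
  filter_upwards [hratio, eventually_partDegree_ne_zero hc htot hconv] with a ha hdeg i
  exact ((div_lt_iff₀ ((partDegree_nonneg _ i).lt_of_ne' (hdeg i))).1 (ha i)).le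

variable [LinearOrder ι] [∀ a i, DecidableEq (V a i)]

theorem tendsto_sum_multipartiteTransferMatrix_apply_self_sq :
    Tendsto (fun a => ∑ e, multipartiteTransferMatrix (V a) e e ^ 2) l
      (𝓝 (multipartitePoissonParameter c)) := by
  have hinv : Tendsto (fun a => 1 / (Fintype.card (Σ j, V a j) : ℝ)) l (𝓝 0) :=
    tendsto_one_div_atTop_nhds_zero_nat.comp htot
  simp only [sum_multipartiteTransferMatrix_apply_self_sq]
  refine tendsto_finsetSum _ fun pq _ => ?_
  have hdeg (i : ι) := tendsto_card_div_partDegree (hc i) htot (hconv i)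
  have hlim := ((hconv pq.1).mul (hconv pq.2)).mul
    (((tendsto_const_nhds (x := (1 : ℝ)).sub hinv).mul ((hdeg pq.1).add (hdeg pq.2))).pow 2)
  have hvalue : c pq.1 * c pq.2 * ((1 - 0) * (1 / (1 - c pq.1) + 1 / (1 - c pq.2))) ^ 2 =
      c pq.1 * c pq.2 * (2 - c pq.1 - c pq.2) ^ 2 / ((1 - c pq.1) ^ 2 * (1 - c pq.2) ^ 2) := by
    have hp := sub_ne_zero.2 (hc pq.1).symm
    have hq := sub_ne_zero.2 (hc pq.2).symm
    field_simp
    ring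
  rw [hvalue] at hlim
  refine hlim.congr' ?_
  filter_upwards [htot.eventually_ne_atTop 0] with a ha
  have hN : (Fintype.card (Σ j, V a j) : ℝ) ≠ 0 := Nat.cast_ne_zero.2 ha
  field_simp

theorem tendsto_poisson_multipartiteSpanningTrees (m : ℕ) :
    Tendsto (fun a => (#{x ∈ multipartiteSpanningTrees (V a) ×ˢ multipartiteSpanningTrees (V a) |
        #(x.1 ∩ x.2) = m} : ℝ) /
      #(multipartiteSpanningTrees (V a) ×ˢ multipartiteSpanningTrees (V a))) l
      (𝓝 (Real.exp (-multipartitePoissonParameter c) * multipartitePoissonParameter c ^ m /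
        m.factorial)) := by
  obtain ⟨C, hC⟩ := exists_eventually_card_le_mul_partDegree hc htot hconv
  have hdeg := eventually_partDegree_ne_zero hc htot hconv
  refine tendsto_poisson_of_isDeterminantal (K := fun a => multipartiteTransferMatrix (V a))
    (δ := fun a => 8 * C / Fintype.card (Σ j, V a j)) (B := 8 * C) (M := (8 * C) ^ 2)
    ?_ ?_ ?_ ?_ ?_ ?_ (tendsto_sum_multipartiteTransferMatrix_apply_self_sq hc htot hconv) m
  · filter_upwards [hdeg, htot.eventually_gt_atTop 0] with a hdeg hN
    have := Fintype.card_pos_iff.1 hN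
    exact spanningTrees_nonempty MultipartiteEdge.sym2_mk_src_tgt_injective
      MultipartiteEdge.range_sym2_mk_src_tgt (completeMultipartiteGraph_connected hdeg)
  · exact hdeg.mono fun a hdeg => isDeterminantal_multipartiteTransferMatrix hdeg
  · filter_upwards [hdeg, hC] with a hdeg hC
    exact abs_multipartiteTransferMatrix_le hdeg hC
  · filter_upwards [hdeg, hC] with a hdeg hC
    exact sum_abs_multipartiteTransferMatrix_le hdeg hC
  · filter_upwards [htot.eventually_ne_atTop 0] with a hN
    calc (8 * C / Fintype.card (Σ j, V a j)) ^ 2 * Fintype.card (MultipartiteEdge (V a))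
        ≤ (8 * C / Fintype.card (Σ j, V a j)) ^ 2 * Fintype.card (Σ j, V a j) ^ 2 := by
          gcongr
          exact_mod_cast card_multipartiteEdge_le (V a)
      _ = (8 * C) ^ 2 := by rw [← mul_pow, div_mul_cancel₀ _ (Nat.cast_ne_zero.2 hN)]
  · exact (tendsto_natCast_atTop_atTop.comp htot).const_div_atTop (8 * C)

end Asymptotics

theorem multipartiteProbCommonEdgesEq_eq_card_filter_div_card {d : ℕ} (nn : Fin d → ℕ) (m : ℕ) :
    multipartiteProbCommonEdgesEq nn m =
      #{x ∈ multipartiteSpanningTrees (fun i => Fin (nn i)) ×ˢ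
        multipartiteSpanningTrees (fun i => Fin (nn i)) | #(x.1 ∩ x.2) = m} /
      #(multipartiteSpanningTrees (fun i => Fin (nn i)) ×ˢ
        multipartiteSpanningTrees (fun i => Fin (nn i))) := by
  rw [multipartiteProbCommonEdgesEq, card_isTree_eq_card_spanningTrees
      MultipartiteEdge.sym2_mk_src_tgt_injective MultipartiteEdge.range_sym2_mk_src_tgt,
    card_isTree_pairs_eq_card_filter_spanningTrees
      MultipartiteEdge.sym2_mk_src_tgt_injective MultipartiteEdge.range_sym2_mk_src_tgt,
    card_product, Nat.cast_mul, sq]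

theorem lt_one_of_pos_of_sum_eq_one {ι : Type*} [Fintype ι] [Nontrivial ι] {c : ι → ℝ}
    (hc : ∀ i, 0 < c i) (hsum : ∑ i, c i = 1) (i : ι) : c i < 1 := by
  obtain ⟨j, hj⟩ := exists_ne i
  rw [← hsum]
  exact single_lt_sum hj (mem_univ i) (mem_univ j) (hc j) fun k _ _ => (hc k).le

theorem multipartite_poisson_limit_general {α : Type*} {l : Filter α} {d : ℕ} {c : Fin d → ℝ}
    (hc : ∀ i, c i ≠ 1) {nn : α → Fin d → ℕ} (htot : Tendsto (fun a => ∑ i, nn a i) l atTop)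
    (hconv : ∀ i, Tendsto (fun a => (nn a i : ℝ) / (∑ j, nn a j : ℕ)) l (𝓝 (c i))) (m : ℕ) :
    Tendsto (fun a => multipartiteProbCommonEdgesEq (nn a) m) l
      (𝓝 (Real.exp (-multipartitePoissonParameter c) * multipartitePoissonParameter c ^ m /
        m.factorial)) := by
  simp only [multipartiteProbCommonEdgesEq_eq_card_filter_div_card]
  exact tendsto_poisson_multipartiteSpanningTrees hc (by simpa using htot) (by simpa using hconv) m

/-- Fix `d ≥ 2` and positive reals `c₁, …, c_d` summing to `1`.
For complete multipartite graphs `K_{n₁,…,n_d}` with `n = n₁ + ⋯ + n_d` and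
`n_i/n → c_i`, the number `X` of common edges of two independent uniformly random
spanning trees satisfies `P(X = m) → e^(−λ) λ^m / m!` for every fixed `m`, where
`λ = Σ_{i<j} c_i c_j (2 − c_i − c_j)² / ((1−c_i)² (1−c_j)²)`; that is, `X` converges in
distribution to a Poisson distribution with expected value `λ`. -/
theorem multipartite_poisson_limit (d : ℕ) (hd : 2 ≤ d) (c : Fin d → ℝ)
    (hc : ∀ i, 0 < c i) (hsum : ∑ i, c i = 1)
    (nn : ℕ → Fin d → ℕ)
    (hpos : ∀ n, d ≤ n → ∀ i, 1 ≤ nn n i)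
    (htot : ∀ n, d ≤ n → ∑ i, nn n i = n)
    (hconv : ∀ i, Filter.Tendsto (fun n => (nn n i : ℝ) / n) Filter.atTop (nhds (c i)))
    (m : ℕ) :
    Filter.Tendsto (fun n => multipartiteProbCommonEdgesEq (nn n) m) Filter.atTop
      (nhds (Real.exp (-(∑ pq ∈ Finset.univ.filter
              (fun pq : Fin d × Fin d => pq.1 < pq.2),
            c pq.1 * c pq.2 * (2 - c pq.1 - c pq.2) ^ 2 /
              ((1 - c pq.1) ^ 2 * (1 - c pq.2) ^ 2))) *
          (∑ pq ∈ Finset.univ.filter (fun pq : Fin d × Fin d => pq.1 < pq.2),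
            c pq.1 * c pq.2 * (2 - c pq.1 - c pq.2) ^ 2 /
              ((1 - c pq.1) ^ 2 * (1 - c pq.2) ^ 2)) ^ m / m.factorial)) := by
  have : Nontrivial (Fin d) := Fin.nontrivial_iff_two_le.2 hd
  have hcard : ∀ᶠ n in atTop, n = ∑ i, nn n i :=
    (eventually_ge_atTop d).mono fun n hn => (htot n hn).symm
  exact multipartite_poisson_limit_general (fun i => (lt_one_of_pos_of_sum_eq_one hc hsum i).ne)
    (tendsto_id.congr' hcard)
    (fun i => (hconv i).congr' (hcard.mono fun n hn => congrArg (fun N : ℕ => (nn n i : ℝ) / N) hn))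
    m
end

section
/- Fix positive reals c_1, c_2 with c_1 + c_2 = 1. Consider complete bipartite graphs K_{n_1,n_2} with n_1/n → c_1 and n_2/n → c_2 as n = n_1 + n_2 → ∞. Let X be the number of common edges of two spanning trees of K_{n_1,n_2} chosen independently and uniformly at random. Then for every fixed nonnegative integer m, P(X = m) → e^{−1/(c_1 c_2)} (1/(c_1 c_2))^m / m!; that is, X converges in distribution to a Poisson distribution with expected value 1/(c_1 c_2). -/
/-- `P(X = m)` for the complete bipartite graph `K_{n₁,n₂}`: the number of ordered
pairs `(T₁, T₂)` of spanning trees with exactly `m` common edges, divided by the square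
of the total number of spanning trees. -/
noncomputable def bipartiteProbCommonEdgesEq (n₁ n₂ m : ℕ) : ℝ :=
  (Nat.card {q : SimpleGraph (Fin n₁ ⊕ Fin n₂) × SimpleGraph (Fin n₁ ⊕ Fin n₂) //
      q.1 ≤ completeBipartiteGraph (Fin n₁) (Fin n₂) ∧
      q.2 ≤ completeBipartiteGraph (Fin n₁) (Fin n₂) ∧
      q.1.IsTree ∧ q.2.IsTree ∧ Nat.card (q.1 ⊓ q.2).edgeSet = m} : ℝ) /
    (Nat.card {T : SimpleGraph (Fin n₁ ⊕ Fin n₂) //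
        T ≤ completeBipartiteGraph (Fin n₁) (Fin n₂) ∧ T.IsTree} : ℝ) ^ 2

/-!
Let a forest in `K_{p,q}` have components with `aᵢ` left and `bᵢ` right vertices, and put
`dᵢ = p bᵢ + q aᵢ`. By downward induction on the number of components, the number of spanning trees
containing the forest is `(p q)⁻¹ ∏ dᵢ (1 - ∑ aᵢ bᵢ / dᵢ)`. Adding an edge replaces a factor
`dᵢ dⱼ` by `dᵢ + dⱼ`, so with `ρ = 1 / p + 1 / q` a uniform spanning tree contains `k` given edges
with probability at most `ρ ^ k`, and with probability exactly `ρ ^ k (1 - k / (p + q))` if they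
form a matching.

For two independent trees, `E[X choose k]` is the sum of the squares of these probabilities over all
sets of `k` edges. Almost all of these sets are matchings, so the moment is asymptotic to
`(p q ρ²) ^ k / k!`, and `p q ρ² = (p + q)² / (p q)` tends to `1 / (c₁ c₂)`. Binomial moments
`λ ^ k / k!` characterize the Poisson distribution through inclusion-exclusion.
-/

namespace BipartiteSpanningTree

open Finset Filter Topology
open scoped Nat

section BinomialMoments

variable {Ω : Type*}

/-- The `k`-th binomial moment `E[X choose k]` of a counting variable `X` on the uniform
probability space `s`. -/
noncomputable def binomialMoment (s : Finset Ω) (X : Ω → ℕ) (k : ℕ) : ℝ :=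
  (∑ ω ∈ s, ((X ω).choose k : ℝ)) / #s

lemma binomialMoment_nonneg (s : Finset Ω) (X : Ω → ℕ) (k : ℕ) : 0 ≤ binomialMoment s X k := by
  unfold binomialMoment
  positivity

lemma hasSum_alternating_choose_mul_choose (x m : ℕ) :
    HasSum (fun j ↦ (-1 : ℝ) ^ j * (m + j).choose m * x.choose (m + j))
      (if x = m then 1 else 0) := by
  have hterm (j : ℕ) : (-1 : ℝ) ^ j * (m + j).choose m * x.choose (m + j) =
      x.choose m * ((-1) ^ j * (x - m).choose j) := by
    have h := Nat.choose_mul (n := x) (Nat.le_add_right m j)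
    rw [Nat.add_sub_cancel_left] at h
    have h' : (x.choose (m + j) : ℝ) * (m + j).choose m = x.choose m * (x - m).choose j := by
      exact_mod_cast h
    linear_combination (-1 : ℝ) ^ j * h'
  have halt : ∑ j ∈ range (x - m + 1), (-1 : ℝ) ^ j * (x - m).choose j =
      if x - m = 0 then 1 else 0 := by
    exact_mod_cast Int.alternating_sum_range_choose (n := x - m)
  have hsum : HasSum (fun j ↦ (-1 : ℝ) ^ j * (x - m).choose j) (if x - m = 0 then 1 else 0) := by
    rw [← halt]
    refine hasSum_sum_of_ne_finset_zero fun j hj ↦ ?_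
    rw [Nat.choose_eq_zero_of_lt (by simpa using hj), Nat.cast_zero, mul_zero]
  have hval : (if x = m then 1 else 0 : ℝ) = x.choose m * if x - m = 0 then 1 else 0 := by
    rcases lt_trichotomy x m with h | rfl | h
    · simp [h.ne, Nat.choose_eq_zero_of_lt h]
    · simp
    · simp [h.ne', Nat.sub_ne_zero_of_lt h]
  rw [funext hterm, hval]
  exact hsum.mul_left _

lemma hasSum_binomialMoment (s : Finset Ω) (X : Ω → ℕ) (m : ℕ) :
    HasSum (fun j ↦ (-1 : ℝ) ^ j * (m + j).choose m * binomialMoment s X (m + j))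
      (#{ω ∈ s | X ω = m} / #s : ℝ) := by
  have h := (hasSum_sum fun ω (_ : ω ∈ s) ↦
    hasSum_alternating_choose_mul_choose (X ω) m).div_const (#s : ℝ)
  simp only [← mul_sum, mul_div_assoc, sum_boole] at h
  exact h

lemma choose_mul_pow_div_factorial (m j : ℕ) (x : ℝ) :
    (m + j).choose m * (x ^ (m + j) / (m + j)!) = x ^ m / m ! * (x ^ j / j !) := by
  rw [Nat.cast_add_choose]
  field_simp
  ring

lemma hasSum_poisson_inclusion_exclusion (lam : ℝ) (m : ℕ) :
    HasSum (fun j ↦ (-1 : ℝ) ^ j * (m + j).choose m * (lam ^ (m + j) / (m + j)!))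
      (Real.exp (-lam) * lam ^ m / m !) := by
  have h := (NormedSpace.expSeries_div_hasSum_exp (-lam)).mul_left (lam ^ m / m !)
  rw [← congrFun Real.exp_eq_exp_ℝ] at h
  have hterm (j : ℕ) : (-1 : ℝ) ^ j * (m + j).choose m * (lam ^ (m + j) / (m + j)!) =
      lam ^ m / m ! * ((-lam) ^ j / j !) := by
    rw [mul_assoc, choose_mul_pow_div_factorial, neg_pow]
    ring
  rw [funext hterm, mul_div_assoc, mul_comm]
  exact h

/-- Dominated convergence in `P(X = m) = ∑ⱼ (-1)ʲ (m+j choose m) E[X choose (m+j)]`. -/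
theorem tendsto_poisson_of_tendsto_binomialMoment {ι : Type*} {l : Filter ι} {Ω : ι → Type*}
    {s : ∀ i, Finset (Ω i)} {X : ∀ i, Ω i → ℕ} {lam C : ℝ}
    (hlim : ∀ k, Tendsto (fun i ↦ binomialMoment (s i) (X i) k) l (𝓝 (lam ^ k / k !)))
    (hbound : ∀ᶠ i in l, ∀ k, binomialMoment (s i) (X i) k ≤ C ^ k / k !) (m : ℕ) :
    Tendsto (fun i ↦ (#{ω ∈ s i | X i ω = m} / #(s i) : ℝ)) l
      (𝓝 (Real.exp (-lam) * lam ^ m / m !)) := by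
  simp only [← (hasSum_binomialMoment _ _ m).tsum_eq,
    ← (hasSum_poisson_inclusion_exclusion lam m).tsum_eq]
  refine tendsto_tsum_of_dominated_convergence
    (bound := fun j ↦ (m + j).choose m * (C ^ (m + j) / (m + j)!)) ?_
    (fun j ↦ (hlim (m + j)).const_mul _) ?_
  · simp only [choose_mul_pow_div_factorial]
    exact (NormedSpace.expSeries_div_summable C).mul_left _
  · filter_upwards [hbound] with i hi j
    rw [norm_mul, norm_mul, norm_pow, norm_neg, norm_one, one_pow, one_mul,
      Real.norm_of_nonneg (Nat.cast_nonneg _), Real.norm_of_nonneg (binomialMoment_nonneg ..)]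
    gcongr
    exact hi _

end BinomialMoments

section EdgeSets

open SimpleGraph

variable {α β : Type*}

/-- The edge of `K_{α,β}` joining `e.1` to `e.2`; subgraphs are encoded by their finite sets of
pairs `e`. -/
def edge (e : α × β) : Sym2 (α ⊕ β) := s(.inl e.1, .inr e.2)

lemma edge_injective : Function.Injective (edge : α × β → Sym2 (α ⊕ β)) := by
  rintro ⟨a, b⟩ ⟨c, d⟩ h
  simpa [edge] using h

lemma edgeSet_completeBipartiteGraph :
    (completeBipartiteGraph α β).edgeSet = Set.range edge := by
  ext e
  induction e with | _ x y
  rcases x with x | x <;> rcases y with y | y <;> simp [edge]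

/-- The spanning subgraph of `K_{α,β}` with edge set `F`. -/
def edgeGraph (F : Finset (α × β)) : SimpleGraph (α ⊕ β) := fromEdgeSet (edge '' F)

lemma edgeSet_edgeGraph (F : Finset (α × β)) : (edgeGraph F).edgeSet = edge '' F := by
  rw [edgeGraph, edgeSet_fromEdgeSet, sdiff_eq_left, Set.disjoint_left]
  rintro _ ⟨e, _, rfl⟩
  simp [edge]

lemma card_edgeSet_edgeGraph (F : Finset (α × β)) : Nat.card (edgeGraph F).edgeSet = #F := by
  rw [edgeSet_edgeGraph, Nat.card_image_of_injective edge_injective, Nat.card_coe_set_eq,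
    Set.ncard_coe_finset]

lemma edgeGraph_adj {F : Finset (α × β)} {e : α × β} :
    (edgeGraph F).Adj (.inl e.1) (.inr e.2) ↔ e ∈ F := by
  rw [← mem_edgeSet, edgeSet_edgeGraph]
  exact edge_injective.mem_set_image

lemma edgeGraph_mono {F G : Finset (α × β)} (h : F ⊆ G) : edgeGraph F ≤ edgeGraph G :=
  fromEdgeSet_mono (Set.image_mono (coe_subset.2 h))

lemma edgeGraph_injective :
    Function.Injective (edgeGraph : Finset (α × β) → SimpleGraph (α ⊕ β)) := fun F G h ↦ by
  ext e
  rw [← edgeGraph_adj, h, edgeGraph_adj]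

lemma edgeGraph_inf [DecidableEq α] [DecidableEq β] (F G : Finset (α × β)) :
    edgeGraph F ⊓ edgeGraph G = edgeGraph (F ∩ G) := by
  rw [← edgeSet_inj, edgeSet_inf, edgeSet_edgeGraph, edgeSet_edgeGraph, edgeSet_edgeGraph,
    coe_inter, Set.image_inter edge_injective]

lemma range_edgeGraph [Finite α] [Finite β] :
    Set.range (edgeGraph : Finset (α × β) → SimpleGraph (α ⊕ β)) =
      Set.Iic (completeBipartiteGraph α β) := by
  ext G
  rw [Set.mem_range, Set.mem_Iic, ← edgeSet_subset_edgeSet, edgeSet_completeBipartiteGraph]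
  refine ⟨?_, fun hG ↦ ⟨(edge ⁻¹' G.edgeSet).toFinite.toFinset, ?_⟩⟩
  · rintro ⟨F, rfl⟩
    rw [edgeSet_edgeGraph]
    exact Set.image_subset_range _ _
  · rw [← edgeSet_inj, edgeSet_edgeGraph, Set.Finite.coe_toFinset,
      Set.image_preimage_eq_of_subset hG]

variable (α β) in
open Classical in
/-- The edge sets of the spanning trees of `K_{α,β}`. -/
noncomputable def spanningTrees [Fintype α] [Fintype β] : Finset (Finset (α × β)) :=
  {F | (edgeGraph F).IsTree}

variable [Fintype α] [Fintype β]

lemma mem_spanningTrees {T : Finset (α × β)} :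
    T ∈ spanningTrees α β ↔ (edgeGraph T).IsTree := by
  simp [spanningTrees]

lemma image_edgeGraph_spanningTrees :
    edgeGraph '' (spanningTrees α β) =
      {T : SimpleGraph (α ⊕ β) | T ≤ completeBipartiteGraph α β ∧ T.IsTree} := by
  ext T
  rw [Set.mem_ofPred_eq, ← Set.mem_Iic, ← range_edgeGraph]
  constructor
  · rintro ⟨F, hF, rfl⟩
    exact ⟨⟨F, rfl⟩, mem_spanningTrees.1 hF⟩
  · rintro ⟨⟨F, rfl⟩, hF⟩
    exact ⟨F, mem_spanningTrees.2 hF, rfl⟩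

lemma card_add_one_of_mem_spanningTrees {T : Finset (α × β)} (hT : T ∈ spanningTrees α β) :
    #T + 1 = Fintype.card α + Fintype.card β := by
  have h := (isTree_iff_connected_and_card.1 (mem_spanningTrees.1 hT)).2
  rwa [card_edgeSet_edgeGraph, Nat.card_eq_fintype_card, Fintype.card_sum] at h

lemma not_reachable_of_mem_spanningTrees {F T : Finset (α × β)} (hT : T ∈ spanningTrees α β)
    (hF : F ⊆ T) {e : α × β} (he : e ∈ T) (heF : e ∉ F) :
    ¬ (edgeGraph F).Reachable (.inl e.1) (.inr e.2) := by
  have hbridge := isBridge_iff.1 <|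
    isAcyclic_iff_forall_adj_isBridge.1 (mem_spanningTrees.1 hT).isAcyclic (edgeGraph_adj.2 he)
  refine fun h ↦ hbridge (h.mono ?_)
  rw [← edgeSet_subset_edgeSet, edgeSet_deleteEdges, edgeSet_edgeGraph, edgeSet_edgeGraph]
  rintro _ ⟨f, hf, rfl⟩
  exact ⟨⟨f, hF hf, rfl⟩, fun h ↦ heF (edge_injective h ▸ hf)⟩

variable [DecidableEq α] [DecidableEq β]

/-- The spanning trees of `K_{α,β}` that contain the edges of `F`. -/
noncomputable def treesContaining (F : Finset (α × β)) : Finset (Finset (α × β)) :=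
  {T ∈ spanningTrees α β | F ⊆ T}

lemma mem_treesContaining {F T : Finset (α × β)} :
    T ∈ treesContaining F ↔ T ∈ spanningTrees α β ∧ F ⊆ T := by
  simp [treesContaining]

lemma treesContaining_empty : treesContaining (∅ : Finset (α × β)) = spanningTrees α β := by
  simp [treesContaining]

lemma treesContaining_insert (e : α × β) (F : Finset (α × β)) :
    treesContaining (insert e F) = {T ∈ treesContaining F | e ∈ T} := by
  ext T
  simp only [mem_filter, mem_treesContaining, insert_subset_iff]
  tauto

lemma image_prodMap_edgeGraph_spanningTrees (m : ℕ) :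
    Prod.map edgeGraph edgeGraph ''
        ↑{t ∈ spanningTrees α β ×ˢ spanningTrees α β | #(t.1 ∩ t.2) = m} =
      {t : SimpleGraph (α ⊕ β) × SimpleGraph (α ⊕ β) |
        t.1 ≤ completeBipartiteGraph α β ∧ t.2 ≤ completeBipartiteGraph α β ∧
        t.1.IsTree ∧ t.2.IsTree ∧ Nat.card (t.1 ⊓ t.2).edgeSet = m} := by
  have hmem := Set.ext_iff.1 (image_edgeGraph_spanningTrees (α := α) (β := β))
  ext ⟨T₁, T₂⟩
  constructor
  · rintro ⟨⟨F₁, F₂⟩, hF, hT⟩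
    obtain ⟨rfl, rfl⟩ := Prod.mk.inj hT
    obtain ⟨⟨hF₁, hF₂⟩, h⟩ : (F₁ ∈ spanningTrees α β ∧ F₂ ∈ spanningTrees α β) ∧
      #(F₁ ∩ F₂) = m := by simpa using hF
    obtain ⟨h₁, ht₁⟩ := (hmem _).1 ⟨F₁, hF₁, rfl⟩
    obtain ⟨h₂, ht₂⟩ := (hmem _).1 ⟨F₂, hF₂, rfl⟩
    refine ⟨h₁, h₂, ht₁, ht₂, ?_⟩
    rw [edgeGraph_inf, card_edgeSet_edgeGraph, h]
  · rintro ⟨h₁, h₂, ht₁, ht₂, h⟩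
    obtain ⟨F₁, hF₁, rfl⟩ := (hmem T₁).2 ⟨h₁, ht₁⟩
    obtain ⟨F₂, hF₂, rfl⟩ := (hmem T₂).2 ⟨h₂, ht₂⟩
    rw [edgeGraph_inf, card_edgeSet_edgeGraph] at h
    exact ⟨(F₁, F₂), by simpa using ⟨⟨hF₁, hF₂⟩, h⟩, rfl⟩

end EdgeSets

lemma bipartiteProbCommonEdgesEq_eq_card_div_card (p q m : ℕ) :
    bipartiteProbCommonEdgesEq p q m =
      #{t ∈ spanningTrees (Fin p) (Fin q) ×ˢ spanningTrees (Fin p) (Fin q) |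
          #(t.1 ∩ t.2) = m} /
        #(spanningTrees (Fin p) (Fin q) ×ˢ spanningTrees (Fin p) (Fin q)) := by
  rw [bipartiteProbCommonEdgesEq, ← Set.coe_ofPred, ← Set.coe_ofPred,
    ← image_prodMap_edgeGraph_spanningTrees, ← image_edgeGraph_spanningTrees,
    Nat.card_image_of_injective edgeGraph_injective,
    Nat.card_image_of_injective (edgeGraph_injective.prodMap edgeGraph_injective)]
  simp only [Nat.card_coe_set_eq, Set.ncard_coe_finset, card_product, sq, Nat.cast_mul]

section Merge

variable {κ : Type*} [DecidableEq κ]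

/-- Relabelling of classes that renames `j` to `i`: the effect on the labels of the components of
a forest when an edge joining the components `i` and `j` is added. -/
def merge (i j k : κ) : κ := if k = j then i else k

@[simp] lemma merge_left (i j : κ) : merge i j i = i := by simp [merge]

@[simp] lemma merge_right (i j : κ) : merge i j j = i := by simp [merge]

lemma merge_of_ne {j k : κ} (h : k ≠ j) (i : κ) : merge i j k = k := if_neg h

lemma image_merge {s : Finset κ} {i j : κ} (hij : i ≠ j) (hi : i ∈ s) :
    s.image (merge i j) = s.erase j := by
  ext k
  simp only [mem_image, mem_erase]
  constructor
  · rintro ⟨k', hk', rfl⟩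
    rcases eq_or_ne k' j with rfl | h
    · simpa [hij] using hi
    · simpa [merge_of_ne h, h] using hk'
  · rintro ⟨hkj, hk⟩
    exact ⟨k, hk, merge_of_ne hkj i⟩

lemma merge_eq_left_iff {i j k : κ} : merge i j k = i ↔ k = i ∨ k = j := by
  grind [merge]

lemma merge_eq_iff_of_ne {i j k k' : κ} (hi : k' ≠ i) (hj : k' ≠ j) :
    merge i j k = k' ↔ k = k' := by
  grind [merge]

variable {γ : Type*} [Fintype γ]

/-- The number of points of the fibre `f ⁻¹ {i}`, as a real number. -/
def fiberCard (f : γ → κ) (i : κ) : ℝ := #{x | f x = i}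

lemma fiberCard_nonneg (f : γ → κ) (i : κ) : 0 ≤ fiberCard f i := Nat.cast_nonneg _

lemma one_le_fiberCard (f : γ → κ) (x : γ) : 1 ≤ fiberCard f (f x) :=
  Nat.one_le_cast.2 (card_pos.2 ⟨x, by simp⟩)

lemma sum_fiberCard {f : γ → κ} {s : Finset κ} (h : ∀ x, f x ∈ s) :
    ∑ i ∈ s, fiberCard f i = Fintype.card γ := by
  simp only [fiberCard, ← Nat.cast_sum]
  rw [← card_eq_sum_card_fiberwise fun x _ ↦ h x, card_univ]

lemma fiberCard_merge_left (f : γ → κ) {i j : κ} (hij : i ≠ j) :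
    fiberCard (merge i j ∘ f) i = fiberCard f i + fiberCard f j := by
  classical
  simp only [fiberCard, Function.comp_apply, merge_eq_left_iff, filter_or]
  rw [card_union_of_disjoint (disjoint_filter.2 fun x _ (hi : f x = i) hj ↦
    hij (hi.symm.trans hj)), Nat.cast_add]

lemma fiberCard_merge_of_ne (f : γ → κ) {i j k : κ} (hi : k ≠ i) (hj : k ≠ j) :
    fiberCard (merge i j ∘ f) k = fiberCard f k := by
  simp only [fiberCard, Function.comp_apply, merge_eq_iff_of_ne hi hj]

end Merge

section ForestLabelling

open SimpleGraph

variable {α β κ : Type*} [Fintype α] [Fintype β] [DecidableEq κ]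

/-- `F` is the edge set of a forest and `π` labels the vertices by the connected components of
that forest. Acyclicity is expressed by the number of components. -/
structure IsForestLabelling (F : Finset (α × β)) (π : α ⊕ β → κ) : Prop where
  eq_of_mem : ∀ e ∈ F, π (.inl e.1) = π (.inr e.2)
  reachable : ∀ u v, π u = π v → (edgeGraph F).Reachable u v
  card_add_card : #F + #(univ.image π) = Fintype.card α + Fintype.card β

lemma isForestLabelling_empty [DecidableEq α] [DecidableEq β] :
    IsForestLabelling (∅ : Finset (α × β)) id where
  eq_of_mem := by simp
  reachable := by
    rintro u _ rfl
    rfl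
  card_add_card := by simp

variable {F : Finset (α × β)} {π : α ⊕ β → κ}

lemma image_merge_comp {i j : κ} (hij : i ≠ j) (hi : i ∈ univ.image π) :
    univ.image (merge i j ∘ π) = (univ.image π).erase j := by
  rw [← image_image, image_merge hij hi]

lemma IsForestLabelling.eq_of_isolated (hπ : IsForestLabelling F π) {u v : α ⊕ β}
    (hu : ∀ w, ¬ (edgeGraph F).Adj u w) (h : π u = π v) : u = v := by
  obtain ⟨walk⟩ := hπ.reachable u v h
  cases walk with
  | nil => rfl
  | cons hadj _ => exact (hu _ hadj).elim

variable [DecidableEq α] [DecidableEq β]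

lemma IsForestLabelling.insert_edge (hπ : IsForestLabelling F π) {e : α × β}
    (he : π (.inl e.1) ≠ π (.inr e.2)) :
    IsForestLabelling (insert e F) (merge (π (.inl e.1)) (π (.inr e.2)) ∘ π) where
  eq_of_mem f hf := by
    rcases mem_insert.1 hf with rfl | hf
    · simp
    · simp [hπ.eq_of_mem f hf]
  reachable u v huv := by
    have hmono : edgeGraph F ≤ edgeGraph (insert e F) := edgeGraph_mono (subset_insert e F)
    have hreach {u v : α ⊕ β} (h : π u = π v) : (edgeGraph (insert e F)).Reachable u v :=
      (hπ.reachable u v h).mono hmono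
    have hadj : (edgeGraph (insert e F)).Reachable (.inl e.1) (.inr e.2) :=
      (edgeGraph_adj.2 (mem_insert_self e F)).reachable
    by_cases hu : π u = π (.inr e.2) <;> by_cases hv : π v = π (.inr e.2)
    · exact hreach (hu.trans hv.symm)
    · have hv' : π (.inl e.1) = π v := by simpa [hu, merge_of_ne hv] using huv
      exact (hreach hu).trans (hadj.symm.trans (hreach hv'))
    · have hu' : π u = π (.inl e.1) := by simpa [hv, merge_of_ne hu] using huv
      exact (hreach hu').trans (hadj.trans (hreach hv.symm))
    · exact hreach (by simpa [merge_of_ne hu, merge_of_ne hv] using huv)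
  card_add_card := by
    have heF : e ∉ F := fun h ↦ he (hπ.eq_of_mem e h)
    have hmem (v : α ⊕ β) : π v ∈ univ.image π := mem_image_of_mem π (mem_univ v)
    rw [image_merge_comp he (hmem _), card_insert_of_notMem heF, ← hπ.card_add_card,
      add_right_comm, add_assoc, card_erase_add_one (hmem _)]

lemma IsForestLabelling.card_filter_ne_add_one (hπ : IsForestLabelling F π)
    {T : Finset (α × β)} (hT : T ∈ treesContaining F) :
    #{e ∈ T | π (.inl e.1) ≠ π (.inr e.2)} + 1 = #(univ.image π) := by
  obtain ⟨hT, hFT⟩ := mem_treesContaining.1 hT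
  have hsdiff : T.filter (fun e ↦ π (.inl e.1) ≠ π (.inr e.2)) = T \ F := by
    ext e
    simp only [mem_filter, Finset.mem_sdiff]
    refine and_congr_right fun he ↦ ⟨fun h heF ↦ h (hπ.eq_of_mem e heF), fun heF h ↦ ?_⟩
    exact not_reachable_of_mem_spanningTrees hT hFT he heF (hπ.reachable _ _ h)
  have hcard := hπ.card_add_card
  rw [← card_add_one_of_mem_spanningTrees hT, ← card_sdiff_add_card_eq_card hFT] at hcard
  rw [hsdiff]
  lia

lemma IsForestLabelling.sum_card_treesContaining_insert (hπ : IsForestLabelling F π) :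
    ∑ e with π (.inl e.1) ≠ π (.inr e.2), #(treesContaining (insert e F)) =
      (#(univ.image π) - 1) * #(treesContaining F) := by
  have hswap := sum_card_bipartiteAbove_eq_sum_card_bipartiteBelow (s := treesContaining F)
    (t := ({e | π (.inl e.1) ≠ π (.inr e.2)} : Finset (α × β))) (fun T e ↦ e ∈ T)
  simp only [bipartiteAbove, bipartiteBelow, ← treesContaining_insert] at hswap
  rw [← hswap, mul_comm, ← smul_eq_mul, ← sum_const]
  refine sum_congr rfl fun T hT ↦ ?_
  rw [← hπ.card_filter_ne_add_one hT, Nat.add_sub_cancel, filter_filter]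
  congr 1
  ext e
  simp [and_comm]

end ForestLabelling

section WeightedPairs

variable {κ : Type*} {I : Finset κ} {a b d : κ → ℝ} {p q : ℝ}

lemma sum_offDiag_eq_sub (f : κ → κ → ℝ) :
    ∑ x ∈ I.offDiag, f x.1 x.2 = ∑ i ∈ I, ∑ j ∈ I, f i j - ∑ i ∈ I, f i i := by
  classical
  rw [← sum_product', ← diag_union_offDiag, sum_union (disjoint_diag_offDiag I), sum_diag,
    add_sub_cancel_left]

lemma mul_sum_div_add_mul_sum_div (hd : ∀ i ∈ I, p * b i + q * a i = d i)
    (hd₀ : ∀ i ∈ I, d i ≠ 0) (g : κ → ℝ) :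
    p * ∑ i ∈ I, g i * b i / d i + q * ∑ i ∈ I, g i * a i / d i = ∑ i ∈ I, g i := by
  rw [mul_sum, mul_sum, ← sum_add_distrib]
  refine sum_congr rfl fun i hi ↦ ?_
  field_simp [hd₀ i hi]
  rw [← hd i hi]

lemma sum_sq_div_mul_sum_sq_div (hd : ∀ i ∈ I, p * b i + q * a i = d i)
    (hd₀ : ∀ i ∈ I, d i ≠ 0) (hp : p ≠ 0) (hq : q ≠ 0) (ha : ∑ i ∈ I, a i = p)
    (hb : ∑ i ∈ I, b i = q) :
    (∑ i ∈ I, a i ^ 2 / d i) * ∑ i ∈ I, b i ^ 2 / d i = (1 - ∑ i ∈ I, a i * b i / d i) ^ 2 := by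
  have hA : q * ∑ i ∈ I, a i ^ 2 / d i = p * (1 - ∑ i ∈ I, a i * b i / d i) := by
    have h := mul_sum_div_add_mul_sum_div hd hd₀ a
    simp only [← sq] at h
    linear_combination h + ha
  have hB : p * ∑ i ∈ I, b i ^ 2 / d i = q * (1 - ∑ i ∈ I, a i * b i / d i) := by
    have h := mul_sum_div_add_mul_sum_div hd hd₀ b
    simp only [← sq, mul_comm (b _) (a _)] at h
    linear_combination h + hb
  refine mul_left_cancel₀ (mul_ne_zero hp hq) ?_
  linear_combination (p * ∑ i ∈ I, b i ^ 2 / d i) * hA +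
    p * (1 - ∑ i ∈ I, a i * b i / d i) * hB

lemma mul_inv_add_inv_mul_one_sub {x y x' y' w w' : ℝ} (hw : w ≠ 0) (hw' : w' ≠ 0)
    (hww' : w + w' ≠ 0) (S : ℝ) :
    x * y' * ((w⁻¹ + w'⁻¹) *
        (1 - (S - x * y / w - x' * y' / w' + (x + x') * (y + y') / (w + w')))) =
      (1 - S) * (x / w * y' + x * (y' / w')) + x * y / w * x / w * y' +
        x * (x' * y' / w' * y' / w') - x ^ 2 / w * (y' ^ 2 / w') -
        x * y / w * (x' * y' / w') := by
  field_simp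
  ring

/-- The recursion satisfied by `∏ dᵢ (1 - ∑ aᵢ bᵢ / dᵢ)` when two classes are merged: a class with
`a` left and `b` right vertices has weight `d = p b + q a`, and merging adds these numbers. -/
lemma sum_offDiag_merge (hd : ∀ i ∈ I, p * b i + q * a i = d i)
    (hd₀ : ∀ i ∈ I, 0 < d i) (hp : p ≠ 0) (hq : q ≠ 0) (ha : ∑ i ∈ I, a i = p)
    (hb : ∑ i ∈ I, b i = q) {S : ℝ} (hS : ∑ i ∈ I, a i * b i / d i = S) :
    ∑ x ∈ I.offDiag, a x.1 * b x.2 * (((d x.1)⁻¹ + (d x.2)⁻¹) *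
        (1 - (S - a x.1 * b x.1 / d x.1 - a x.2 * b x.2 / d x.2 +
          (a x.1 + a x.2) * (b x.1 + b x.2) / (d x.1 + d x.2)))) =
      (#I - 1) * (1 - S) := by
  have hd₀' (i) (hi : i ∈ I) : d i ≠ 0 := (hd₀ i hi).ne'
  rw [sum_congr rfl fun x hx ↦ mul_inv_add_inv_mul_one_sub (hd₀' _ (mem_offDiag.1 hx).1)
      (hd₀' _ (mem_offDiag.1 hx).2.1)
      (add_pos (hd₀ _ (mem_offDiag.1 hx).1) (hd₀ _ (mem_offDiag.1 hx).2.1)).ne' S,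
    sum_offDiag_eq_sub fun i j ↦ (1 - S) * (a i / d i * b j + a i * (b j / d j)) +
      a i * b i / d i * a i / d i * b j + a i * (a j * b j / d j * b j / d j) -
      a i ^ 2 / d i * (b j ^ 2 / d j) - a i * b i / d i * (a j * b j / d j)]
  have hdiag : ∑ i ∈ I, ((1 - S) * (a i / d i * b i + a i * (b i / d i)) +
      a i * b i / d i * a i / d i * b i + a i * (a i * b i / d i * b i / d i) -
      a i ^ 2 / d i * (b i ^ 2 / d i) - a i * b i / d i * (a i * b i / d i)) =
      2 * (1 - S) * S := by
    rw [← hS, mul_sum]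
    refine sum_congr rfl fun i _ ↦ ?_
    ring
  have hone := mul_sum_div_add_mul_sum_div hd hd₀' 1
  have hself := mul_sum_div_add_mul_sum_div hd hd₀' fun i ↦ a i * b i / d i
  simp only [Pi.one_apply, one_mul, sum_const, nsmul_eq_mul, mul_one] at hone
  rw [hdiag]
  simp only [sum_add_distrib, sum_sub_distrib, ← mul_sum, ← sum_mul]
  have hsq := sum_sq_div_mul_sum_sq_div hd hd₀' hp hq ha hb
  rw [hS] at hsq hself
  rw [ha, hb, hS]
  linear_combination (1 - S) * hone + hself - hsq

end WeightedPairs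

section ClassWeights

variable {α β κ : Type*} [DecidableEq κ]

/-- The number of left vertices in the class `i` of the labelling `π`. -/
def leftSize [Fintype α] (π : α ⊕ β → κ) (i : κ) : ℝ := fiberCard (fun u ↦ π (.inl u)) i

/-- The number of right vertices in the class `i` of the labelling `π`. -/
def rightSize [Fintype β] (π : α ⊕ β → κ) (i : κ) : ℝ := fiberCard (fun v ↦ π (.inr v)) i

lemma leftSize_merge_left [Fintype α] {π : α ⊕ β → κ} {i j : κ} (hij : i ≠ j) :
    leftSize (merge i j ∘ π) i = leftSize π i + leftSize π j :=
  fiberCard_merge_left _ hij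

lemma rightSize_merge_left [Fintype β] {π : α ⊕ β → κ} {i j : κ} (hij : i ≠ j) :
    rightSize (merge i j ∘ π) i = rightSize π i + rightSize π j :=
  fiberCard_merge_left _ hij

lemma leftSize_merge_of_ne [Fintype α] {π : α ⊕ β → κ} {i j k : κ} (hi : k ≠ i) (hj : k ≠ j) :
    leftSize (merge i j ∘ π) k = leftSize π k :=
  fiberCard_merge_of_ne _ hi hj

lemma rightSize_merge_of_ne [Fintype β] {π : α ⊕ β → κ} {i j k : κ} (hi : k ≠ i) (hj : k ≠ j) :
    rightSize (merge i j ∘ π) k = rightSize π k :=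
  fiberCard_merge_of_ne _ hi hj

variable [Fintype α] [Fintype β] (π : α ⊕ β → κ)

/-- The sum of the degrees in `K_{α,β}` of the vertices in the class `i`. -/
def classWeight (i : κ) : ℝ := Fintype.card α * rightSize π i + Fintype.card β * leftSize π i

/-- The product of the weights of all classes. -/
def weightProd : ℝ := ∏ i ∈ univ.image π, classWeight π i

/-- The correction `∑ aᵢ bᵢ / dᵢ` for classes with `aᵢ` left vertices, `bᵢ` right vertices and
weight `dᵢ`; only classes meeting both sides contribute. -/
noncomputable def crossSum : ℝ :=
  ∑ i ∈ univ.image π, leftSize π i * rightSize π i / classWeight π i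

lemma sum_leftSize : ∑ i ∈ univ.image π, leftSize π i = Fintype.card α :=
  sum_fiberCard fun u ↦ mem_image_of_mem π (mem_univ (Sum.inl u))

lemma sum_rightSize : ∑ i ∈ univ.image π, rightSize π i = Fintype.card β :=
  sum_fiberCard fun v ↦ mem_image_of_mem π (mem_univ (Sum.inr v))

lemma classWeight_nonneg (i : κ) : 0 ≤ classWeight π i :=
  add_nonneg (mul_nonneg (Nat.cast_nonneg _) (fiberCard_nonneg _ i))
    (mul_nonneg (Nat.cast_nonneg _) (fiberCard_nonneg _ i))

lemma card_le_classWeight_inl (u : α) : (Fintype.card β : ℝ) ≤ classWeight π (π (.inl u)) :=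
  (le_mul_of_one_le_right (Nat.cast_nonneg _) (one_le_fiberCard (fun u ↦ π (.inl u)) u)).trans
    (le_add_of_nonneg_left (mul_nonneg (Nat.cast_nonneg _) (fiberCard_nonneg _ _)))

lemma card_le_classWeight_inr (v : β) : (Fintype.card α : ℝ) ≤ classWeight π (π (.inr v)) :=
  (le_mul_of_one_le_right (Nat.cast_nonneg _) (one_le_fiberCard (fun v ↦ π (.inr v)) v)).trans
    (le_add_of_nonneg_right (mul_nonneg (Nat.cast_nonneg _) (fiberCard_nonneg _ _)))

lemma crossSum_nonneg : 0 ≤ crossSum π := sum_nonneg fun i _ ↦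
  div_nonneg (mul_nonneg (fiberCard_nonneg _ i) (fiberCard_nonneg _ i)) (classWeight_nonneg π i)

variable {π} in
lemma classWeight_merge_left {i j : κ} (hij : i ≠ j) :
    classWeight (merge i j ∘ π) i = classWeight π i + classWeight π j := by
  rw [classWeight, leftSize_merge_left hij, rightSize_merge_left hij, classWeight, classWeight]
  ring

variable {π} in
lemma classWeight_merge_of_ne {i j k : κ} (hi : k ≠ i) (hj : k ≠ j) :
    classWeight (merge i j ∘ π) k = classWeight π k := by
  rw [classWeight, leftSize_merge_of_ne hi hj, rightSize_merge_of_ne hi hj, classWeight]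

variable {π} in
lemma crossSum_merge {i j : κ} (hij : i ≠ j) (hi : i ∈ univ.image π) (hj : j ∈ univ.image π) :
    crossSum (merge i j ∘ π) =
      crossSum π - leftSize π i * rightSize π i / classWeight π i -
        leftSize π j * rightSize π j / classWeight π j +
        (leftSize π i + leftSize π j) * (rightSize π i + rightSize π j) /
          (classWeight π i + classWeight π j) := by
  have hij' : i ∈ (univ.image π).erase j := mem_erase.2 ⟨hij, hi⟩
  have hrest : ∀ k ∈ ((univ.image π).erase j).erase i,
      leftSize (merge i j ∘ π) k * rightSize (merge i j ∘ π) k / classWeight (merge i j ∘ π) k =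
        leftSize π k * rightSize π k / classWeight π k := fun k hk ↦ by
    have hki := ne_of_mem_erase hk
    have hkj := ne_of_mem_erase (mem_of_mem_erase hk)
    rw [leftSize_merge_of_ne hki hkj, rightSize_merge_of_ne hki hkj,
      classWeight_merge_of_ne hki hkj]
  unfold crossSum
  rw [image_merge_comp hij hi, ← add_sum_erase (univ.image π) _ hj,
    ← add_sum_erase ((univ.image π).erase j) _ hij',
    ← add_sum_erase ((univ.image π).erase j) _ hij', sum_congr rfl hrest,
    leftSize_merge_left hij, rightSize_merge_left hij,
    classWeight_merge_left hij]
  ring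

lemma sum_filter_label_ne (G : κ → κ → ℝ) :
    ∑ e : α × β with π (.inl e.1) ≠ π (.inr e.2), G (π (.inl e.1)) (π (.inr e.2)) =
      ∑ x ∈ (univ.image π).offDiag, leftSize π x.1 * rightSize π x.2 * G x.1 x.2 := by
  rw [← sum_fiberwise_of_maps_to (s := {e : α × β | π (.inl e.1) ≠ π (.inr e.2)})
    (t := (univ.image π).offDiag) (g := fun e ↦ (π (.inl e.1), π (.inr e.2)))
    fun e he ↦ mem_offDiag.2 ⟨by simp, by simp, by simpa using he⟩]
  refine sum_congr rfl fun ⟨i, j⟩ hij ↦ ?_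
  have hfibre : ({e ∈ {e : α × β | π (.inl e.1) ≠ π (.inr e.2)} |
      (π (.inl e.1), π (.inr e.2)) = (i, j)} : Finset (α × β)) =
      ({u | π (.inl u) = i} : Finset α) ×ˢ ({v | π (.inr v) = j} : Finset β) := by
    have hne : i ≠ j := (mem_offDiag.1 hij).2.2
    ext ⟨u, v⟩
    simp only [mem_filter, mem_univ, true_and, Prod.mk.injEq, mem_product]
    exact and_iff_right_of_imp fun ⟨hu, hv⟩ ↦ by rwa [hu, hv]
  rw [hfibre, leftSize, rightSize, fiberCard, fiberCard, ← Nat.cast_mul,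
    ← card_product, ← nsmul_eq_mul, ← sum_const]
  refine sum_congr rfl fun e he ↦ ?_
  simp only [mem_product, mem_filter_univ] at he
  rw [he.1, he.2]

section Nonempty

variable [Nonempty α] [Nonempty β]

lemma classWeight_pos {i : κ} (hi : i ∈ univ.image π) : 0 < classWeight π i := by
  obtain ⟨u | v, -, rfl⟩ := mem_image.1 hi
  · exact (Nat.cast_pos.2 Fintype.card_pos).trans_le (card_le_classWeight_inl π u)
  · exact (Nat.cast_pos.2 Fintype.card_pos).trans_le (card_le_classWeight_inr π v)

lemma weightProd_pos : 0 < weightProd π := prod_pos fun _ ↦ classWeight_pos π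

variable {π} in
lemma weightProd_merge {i j : κ} (hij : i ≠ j) (hi : i ∈ univ.image π) (hj : j ∈ univ.image π) :
    weightProd (merge i j ∘ π) =
      weightProd π * ((classWeight π i)⁻¹ + (classWeight π j)⁻¹) := by
  have hij' : i ∈ (univ.image π).erase j := mem_erase.2 ⟨hij, hi⟩
  have hrest : ∏ k ∈ ((univ.image π).erase j).erase i, classWeight (merge i j ∘ π) k =
      ∏ k ∈ ((univ.image π).erase j).erase i, classWeight π k :=
    prod_congr rfl fun k hk ↦ classWeight_merge_of_ne (ne_of_mem_erase hk)
      (ne_of_mem_erase (mem_of_mem_erase hk))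
  have hi₀ := (classWeight_pos π hi).ne'
  have hj₀ := (classWeight_pos π hj).ne'
  unfold weightProd
  rw [image_merge_comp hij hi, ← mul_prod_erase (univ.image π) _ hj,
    ← mul_prod_erase ((univ.image π).erase j) _ hij',
    ← mul_prod_erase ((univ.image π).erase j) _ hij', hrest, classWeight_merge_left hij]
  field_simp
  ring

variable {π} in
lemma weightProd_mul_one_sub_crossSum_of_image_eq_singleton {i : κ} (h : univ.image π = {i}) :
    weightProd π * (1 - crossSum π) = Fintype.card α * Fintype.card β := by
  have hleft : leftSize π i = Fintype.card α := by
    simpa [h] using sum_leftSize π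
  have hright : rightSize π i = Fintype.card β := by
    simpa [h] using sum_rightSize π
  have hα : (Fintype.card α : ℝ) ≠ 0 := Nat.cast_ne_zero.2 Fintype.card_ne_zero
  have hβ : (Fintype.card β : ℝ) ≠ 0 := Nat.cast_ne_zero.2 Fintype.card_ne_zero
  rw [weightProd, crossSum, h, prod_singleton, sum_singleton, classWeight, hleft, hright]
  field_simp
  ring

variable {π} in
lemma sum_weightProd_merge :
    ∑ e : α × β with π (.inl e.1) ≠ π (.inr e.2),
        weightProd (merge (π (.inl e.1)) (π (.inr e.2)) ∘ π) *
          (1 - crossSum (merge (π (.inl e.1)) (π (.inr e.2)) ∘ π)) =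
      (#(univ.image π) - 1) * (weightProd π * (1 - crossSum π)) := by
  have hmerge := sum_offDiag_merge (I := univ.image π) (a := leftSize π) (b := rightSize π)
    (d := classWeight π) (fun _ _ ↦ rfl) (fun _ ↦ classWeight_pos π)
    (Nat.cast_ne_zero.2 Fintype.card_ne_zero) (Nat.cast_ne_zero.2 Fintype.card_ne_zero)
    (sum_leftSize π) (sum_rightSize π) (S := crossSum π) rfl
  rw [sum_filter_label_ne π fun i j ↦
    weightProd (merge i j ∘ π) * (1 - crossSum (merge i j ∘ π)), mul_left_comm, ← hmerge, mul_sum]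
  refine sum_congr rfl fun ⟨i, j⟩ hij ↦ ?_
  obtain ⟨hi, hj, hij⟩ := mem_offDiag.1 hij
  rw [weightProd_merge hij hi hj, crossSum_merge hij hi hj]
  ring

end Nonempty

end ClassWeights

section TreeCount

open SimpleGraph

variable {α β κ : Type*} [Fintype α] [Fintype β] [DecidableEq α] [DecidableEq β] [DecidableEq κ]
  {F : Finset (α × β)} {π : α ⊕ β → κ}

lemma IsForestLabelling.treesContaining_of_card_image_eq_one (hπ : IsForestLabelling F π)
    (h : #(univ.image π) = 1) : treesContaining F = {F} := by
  obtain ⟨i, hi⟩ := card_eq_one.1 h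
  have : Nonempty (α ⊕ β) :=
    univ_nonempty_iff.1 (image_nonempty.1 (hi ▸ singleton_nonempty i))
  have hlabel (u : α ⊕ β) : π u = i := mem_singleton.1 (hi ▸ mem_image_of_mem π (mem_univ u))
  have hcard : #F + 1 = Fintype.card α + Fintype.card β := h ▸ hπ.card_add_card
  have hF : F ∈ spanningTrees α β := by
    rw [mem_spanningTrees, isTree_iff_connected_and_card, card_edgeSet_edgeGraph,
      Nat.card_eq_fintype_card, Fintype.card_sum]
    exact ⟨⟨fun u v ↦ hπ.reachable u v ((hlabel u).trans (hlabel v).symm)⟩, hcard⟩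
  ext T
  rw [mem_treesContaining, mem_singleton]
  constructor
  · rintro ⟨hT, hFT⟩
    refine (eq_of_subset_of_card_le hFT ?_).symm
    have := card_add_one_of_mem_spanningTrees hT
    lia
  · rintro rfl
    exact ⟨hF, Subset.rfl⟩

variable [Nonempty α] [Nonempty β]

/-- Downward induction on the number of components, through `sum_card_treesContaining_insert`. -/
theorem IsForestLabelling.card_mul_card_treesContaining (hπ : IsForestLabelling F π) :
    (Fintype.card α * Fintype.card β * #(treesContaining F) : ℝ) =
      weightProd π * (1 - crossSum π) := by
  obtain ⟨n, hn⟩ : ∃ n, #(univ.image π) = n + 1 :=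
    Nat.exists_eq_add_one.2 (card_pos.2 (univ_nonempty.image π))
  induction n generalizing F π with
  | zero =>
    obtain ⟨i, hi⟩ := card_eq_one.1 hn
    rw [hπ.treesContaining_of_card_image_eq_one hn, card_singleton, Nat.cast_one, mul_one,
      weightProd_mul_one_sub_crossSum_of_image_eq_singleton hi]
  | succ n ih =>
    have hcount := hπ.sum_card_treesContaining_insert
    rw [hn, Nat.add_sub_cancel] at hcount
    refine mul_left_cancel₀ (Nat.cast_add_one_ne_zero n : (n + 1 : ℝ) ≠ 0) ?_
    calc (n + 1 : ℝ) * (Fintype.card α * Fintype.card β * #(treesContaining F))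
      _ = ∑ e : α × β with π (.inl e.1) ≠ π (.inr e.2),
            (Fintype.card α * Fintype.card β * #(treesContaining (insert e F)) : ℝ) := by
        rw [← mul_sum, ← Nat.cast_sum, hcount]
        push_cast
        ring
      _ = ∑ e : α × β with π (.inl e.1) ≠ π (.inr e.2),
            weightProd (merge (π (.inl e.1)) (π (.inr e.2)) ∘ π) *
              (1 - crossSum (merge (π (.inl e.1)) (π (.inr e.2)) ∘ π)) := by
        refine sum_congr rfl fun e he ↦ ih (hπ.insert_edge (mem_filter.1 he).2) ?_
        have hmem (v : α ⊕ β) : π v ∈ univ.image π := mem_image_of_mem π (mem_univ v)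
        rw [image_merge_comp (mem_filter.1 he).2 (hmem _), card_erase_of_mem (hmem _), hn,
          Nat.add_sub_cancel]
      _ = (n + 1) * (weightProd π * (1 - crossSum π)) := by
        rw [sum_weightProd_merge, hn]
        push_cast
        ring

end TreeCount

section IsolatedVertices

variable {α β κ : Type*} [Fintype α] [Fintype β] [DecidableEq κ] {F : Finset (α × β)}
  {π : α ⊕ β → κ}

namespace IsForestLabelling

lemma leftSize_inl_of_isolated (hπ : IsForestLabelling F π) {u : α}
    (hu : ∀ w, ¬ (edgeGraph F).Adj (.inl u) w) : leftSize π (π (.inl u)) = 1 := by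
  have hfibre (u' : α) : π (.inl u') = π (.inl u) ↔ u' = u :=
    ⟨fun h ↦ (Sum.inl_injective (hπ.eq_of_isolated hu h.symm)).symm, fun h ↦ h ▸ rfl⟩
  rw [leftSize, fiberCard, Nat.cast_eq_one, card_eq_one]
  exact ⟨u, by ext; simp [hfibre]⟩

lemma rightSize_inl_of_isolated (hπ : IsForestLabelling F π) {u : α}
    (hu : ∀ w, ¬ (edgeGraph F).Adj (.inl u) w) : rightSize π (π (.inl u)) = 0 := by
  have hfibre (v : β) : π (.inr v) ≠ π (.inl u) :=
    fun h ↦ Sum.inl_ne_inr (hπ.eq_of_isolated hu h.symm)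
  simp [rightSize, fiberCard, hfibre]

lemma classWeight_inl_of_isolated (hπ : IsForestLabelling F π) {u : α}
    (hu : ∀ w, ¬ (edgeGraph F).Adj (.inl u) w) :
    classWeight π (π (.inl u)) = Fintype.card β := by
  rw [classWeight, hπ.leftSize_inl_of_isolated hu, hπ.rightSize_inl_of_isolated hu, mul_zero,
    zero_add, mul_one]

lemma leftSize_inr_of_isolated (hπ : IsForestLabelling F π) {v : β}
    (hv : ∀ w, ¬ (edgeGraph F).Adj (.inr v) w) : leftSize π (π (.inr v)) = 0 := by
  have hfibre (u : α) : π (.inl u) ≠ π (.inr v) :=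
    fun h ↦ Sum.inr_ne_inl (hπ.eq_of_isolated hv h.symm)
  simp [leftSize, fiberCard, hfibre]

lemma rightSize_inr_of_isolated (hπ : IsForestLabelling F π) {v : β}
    (hv : ∀ w, ¬ (edgeGraph F).Adj (.inr v) w) : rightSize π (π (.inr v)) = 1 := by
  have hfibre (v' : β) : π (.inr v') = π (.inr v) ↔ v' = v :=
    ⟨fun h ↦ (Sum.inr_injective (hπ.eq_of_isolated hv h.symm)).symm, fun h ↦ h ▸ rfl⟩
  rw [rightSize, fiberCard, Nat.cast_eq_one, card_eq_one]
  exact ⟨v, by ext; simp [hfibre]⟩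

lemma classWeight_inr_of_isolated (hπ : IsForestLabelling F π) {v : β}
    (hv : ∀ w, ¬ (edgeGraph F).Adj (.inr v) w) :
    classWeight π (π (.inr v)) = Fintype.card α := by
  rw [classWeight, hπ.leftSize_inr_of_isolated hv, hπ.rightSize_inr_of_isolated hv, mul_zero,
    add_zero, mul_one]

end IsForestLabelling

end IsolatedVertices

section ContainmentProbability

variable {α β κ : Type*} [Fintype α] [Fintype β]

variable (α β) in
/-- The probability, up to lower order terms, that a uniform spanning tree of `K_{α,β}` contains a
given edge. -/
noncomputable def edgeRate : ℝ := (Fintype.card α : ℝ)⁻¹ + (Fintype.card β : ℝ)⁻¹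

variable (α β) in
lemma edgeRate_nonneg : 0 ≤ edgeRate α β := by
  unfold edgeRate
  positivity

lemma weightProd_merge_le [Nonempty α] [Nonempty β] [DecidableEq κ] {π : α ⊕ β → κ} {u : α}
    {v : β} (huv : π (.inl u) ≠ π (.inr v)) :
    weightProd (merge (π (.inl u)) (π (.inr v)) ∘ π) ≤ edgeRate α β * weightProd π := by
  rw [weightProd_merge huv (mem_image_of_mem π (mem_univ _)) (mem_image_of_mem π (mem_univ _)),
    mul_comm, edgeRate, add_comm (Fintype.card α : ℝ)⁻¹]
  have hα : (0 : ℝ) < Fintype.card α := Nat.cast_pos.2 Fintype.card_pos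
  have hβ : (0 : ℝ) < Fintype.card β := Nat.cast_pos.2 Fintype.card_pos
  exact mul_le_mul_of_nonneg_right (add_le_add (inv_anti₀ hβ (card_le_classWeight_inl π u))
    (inv_anti₀ hα (card_le_classWeight_inr π v))) (weightProd_pos π).le

variable [DecidableEq α] [DecidableEq β] [DecidableEq κ] {F : Finset (α × β)} {π : α ⊕ β → κ}

/-- The probability that a uniform spanning tree of `K_{α,β}` contains all edges of `F`. -/
noncomputable def containProb (F : Finset (α × β)) : ℝ :=
  #(treesContaining F) / #(spanningTrees α β)

lemma containProb_nonneg (F : Finset (α × β)) : 0 ≤ containProb F :=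
  div_nonneg (Nat.cast_nonneg _) (Nat.cast_nonneg _)

variable (α β) in
lemma crossSum_id : crossSum (id : α ⊕ β → α ⊕ β) = 0 := by
  have hisolated (u w : α ⊕ β) : ¬ (edgeGraph (∅ : Finset (α × β))).Adj u w := by
    simp [edgeGraph]
  refine sum_eq_zero fun i _ ↦ ?_
  rcases i with u | v
  · have h : rightSize (id : α ⊕ β → α ⊕ β) (.inl u) = 0 :=
      isForestLabelling_empty.rightSize_inl_of_isolated (hisolated (.inl u))
    rw [h, mul_zero, zero_div]
  · have h : leftSize (id : α ⊕ β → α ⊕ β) (.inr v) = 0 :=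
      isForestLabelling_empty.leftSize_inr_of_isolated (hisolated (.inr v))
    rw [h, zero_mul, zero_div]

variable [Nonempty α] [Nonempty β]

lemma IsForestLabelling.containProb_eq (hπ : IsForestLabelling F π) :
    containProb F =
      weightProd π * (1 - crossSum π) / weightProd (id : α ⊕ β → α ⊕ β) := by
  have hempty := (isForestLabelling_empty (α := α) (β := β)).card_mul_card_treesContaining
  rw [crossSum_id, sub_zero, mul_one, treesContaining_empty] at hempty
  have hcard : (Fintype.card α * Fintype.card β : ℝ) ≠ 0 :=
    mul_ne_zero (Nat.cast_ne_zero.2 Fintype.card_ne_zero) (Nat.cast_ne_zero.2 Fintype.card_ne_zero)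
  rw [← hπ.card_mul_card_treesContaining, ← hempty, mul_div_mul_left _ _ hcard, containProb]

lemma exists_isForestLabelling_weightProd_le {T : Finset (α × β)} (hT : T ∈ spanningTrees α β)
    (hF : F ⊆ T) :
    ∃ π : α ⊕ β → α ⊕ β, IsForestLabelling F π ∧
      weightProd π ≤ edgeRate α β ^ #F * weightProd (id : α ⊕ β → α ⊕ β) := by
  induction F using Finset.induction with
  | empty => exact ⟨id, isForestLabelling_empty, by simp⟩
  | insert e F heF ih =>
    obtain ⟨heT, hFT⟩ := insert_subset_iff.1 hF
    obtain ⟨π, hπ, hle⟩ := ih hFT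
    have he : π (.inl e.1) ≠ π (.inr e.2) := fun h ↦
      not_reachable_of_mem_spanningTrees hT hFT heT heF (hπ.reachable _ _ h)
    refine ⟨_, hπ.insert_edge he, (weightProd_merge_le he).trans ?_⟩
    rw [card_insert_of_notMem heF, pow_succ', mul_assoc]
    exact mul_le_mul_of_nonneg_left hle (edgeRate_nonneg α β)

lemma containProb_le_edgeRate_pow (F : Finset (α × β)) : containProb F ≤ edgeRate α β ^ #F := by
  rcases (treesContaining F).eq_empty_or_nonempty with h | ⟨T, hT⟩
  · rw [containProb, h, card_empty, Nat.cast_zero, zero_div]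
    exact pow_nonneg (edgeRate_nonneg α β) _
  · obtain ⟨hT, hFT⟩ := mem_treesContaining.1 hT
    obtain ⟨π, hπ, hle⟩ := exists_isForestLabelling_weightProd_le hT hFT
    rw [hπ.containProb_eq, div_le_iff₀ (weightProd_pos _)]
    refine (mul_le_of_le_one_right (weightProd_pos π).le ?_).trans hle
    exact sub_le_self _ (crossSum_nonneg π)

end ContainmentProbability

section Matchings

variable {α β κ : Type*}

/-- `F` is the edge set of a matching of `K_{α,β}`. -/
def IsEdgeMatching (F : Finset (α × β)) : Prop :=
  Set.InjOn Prod.fst (F : Set (α × β)) ∧ Set.InjOn Prod.snd (F : Set (α × β))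

lemma IsEdgeMatching.mono {F G : Finset (α × β)} (hG : IsEdgeMatching G) (h : F ⊆ G) :
    IsEdgeMatching F :=
  ⟨hG.1.mono (coe_subset.2 h), hG.2.mono (coe_subset.2 h)⟩

variable (α β) in
open Classical in
/-- The edge sets of the matchings of `K_{α,β}` with `k` edges. -/
noncomputable def matchings [Fintype α] [Fintype β] (k : ℕ) : Finset (Finset (α × β)) :=
  {F ∈ powersetCard k univ | IsEdgeMatching F}

lemma mem_matchings [Fintype α] [Fintype β] {k : ℕ} {F : Finset (α × β)} :
    F ∈ matchings α β k ↔ #F = k ∧ IsEdgeMatching F := by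
  simp [matchings, mem_powersetCard]

lemma not_adj_inl_of_notMem_image [DecidableEq α] {F : Finset (α × β)} {u : α}
    (hu : u ∉ F.image Prod.fst) (w : α ⊕ β) : ¬ (edgeGraph F).Adj (.inl u) w := by
  rintro ⟨⟨f, hf, h⟩, -⟩
  have h' : f.1 = u ∧ .inr f.2 = w := by simpa [edge] using h
  exact hu (mem_image.2 ⟨f, hf, h'.1⟩)

lemma not_adj_inr_of_notMem_image [DecidableEq β] {F : Finset (α × β)} {v : β}
    (hv : v ∉ F.image Prod.snd) (w : α ⊕ β) : ¬ (edgeGraph F).Adj (.inr v) w := by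
  rintro ⟨⟨f, hf, h⟩, -⟩
  have h' : .inl f.1 = w ∧ f.2 = v := by simpa [edge] using h
  exact hv (mem_image.2 ⟨f, hf, h'.2⟩)

section Labelling

variable [Fintype α] [Fintype β] [DecidableEq κ] {F : Finset (α × β)} {π : α ⊕ β → κ} {u : α}
  {v : β}

namespace IsForestLabelling

lemma inl_ne_inr_of_isolated (hπ : IsForestLabelling F π)
    (hu : ∀ w, ¬ (edgeGraph F).Adj (.inl u) w) : π (.inl u) ≠ π (.inr v) :=
  fun h ↦ Sum.inl_ne_inr (hπ.eq_of_isolated hu h)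

lemma weightProd_merge_of_isolated [Nonempty α] [Nonempty β] (hπ : IsForestLabelling F π)
    (hu : ∀ w, ¬ (edgeGraph F).Adj (.inl u) w) (hv : ∀ w, ¬ (edgeGraph F).Adj (.inr v) w) :
    weightProd (merge (π (.inl u)) (π (.inr v)) ∘ π) = edgeRate α β * weightProd π := by
  rw [weightProd_merge (hπ.inl_ne_inr_of_isolated hu) (mem_image_of_mem π (mem_univ _))
    (mem_image_of_mem π (mem_univ _)), hπ.classWeight_inl_of_isolated hu,
    hπ.classWeight_inr_of_isolated hv, edgeRate, mul_comm, add_comm (Fintype.card β : ℝ)⁻¹]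

lemma crossSum_merge_of_isolated (hπ : IsForestLabelling F π)
    (hu : ∀ w, ¬ (edgeGraph F).Adj (.inl u) w) (hv : ∀ w, ¬ (edgeGraph F).Adj (.inr v) w) :
    crossSum (merge (π (.inl u)) (π (.inr v)) ∘ π) =
      crossSum π + (Fintype.card α + Fintype.card β : ℝ)⁻¹ := by
  rw [crossSum_merge (hπ.inl_ne_inr_of_isolated hu) (mem_image_of_mem π (mem_univ _))
    (mem_image_of_mem π (mem_univ _)), hπ.classWeight_inl_of_isolated hu,
    hπ.classWeight_inr_of_isolated hv, hπ.leftSize_inl_of_isolated hu,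
    hπ.rightSize_inl_of_isolated hu, hπ.leftSize_inr_of_isolated hv,
    hπ.rightSize_inr_of_isolated hv, add_comm (Fintype.card β : ℝ)]
  ring

end IsForestLabelling

end Labelling

variable [DecidableEq α] [DecidableEq β] {F : Finset (α × β)}

lemma isEdgeMatching_insert {e : α × β} (he : e ∉ F) :
    IsEdgeMatching (insert e F) ↔
      IsEdgeMatching F ∧ e.1 ∉ F.image Prod.fst ∧ e.2 ∉ F.image Prod.snd := by
  have he' : e ∉ (F : Set (α × β)) := he
  simp only [IsEdgeMatching, coe_insert, Set.injOn_insert he', ← coe_image, mem_coe]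
  tauto

variable [Fintype α] [Fintype β]

section Containment

variable [Nonempty α] [Nonempty β]

lemma IsEdgeMatching.exists_isForestLabelling (hF : IsEdgeMatching F) :
    ∃ π : α ⊕ β → α ⊕ β, IsForestLabelling F π ∧
      weightProd π = edgeRate α β ^ #F * weightProd (id : α ⊕ β → α ⊕ β) ∧
      crossSum π = #F / (Fintype.card α + Fintype.card β) := by
  induction F using Finset.induction with
  | empty => exact ⟨id, isForestLabelling_empty, by simp, by simp [crossSum_id]⟩
  | insert e F heF ih =>
    obtain ⟨hF, hfst, hsnd⟩ := (isEdgeMatching_insert heF).1 hF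
    obtain ⟨π, hπ, hprod, hcross⟩ := ih hF
    have hu := not_adj_inl_of_notMem_image hfst
    have hv := not_adj_inr_of_notMem_image hsnd
    refine ⟨_, hπ.insert_edge (hπ.inl_ne_inr_of_isolated hu), ?_, ?_⟩
    · rw [hπ.weightProd_merge_of_isolated hu hv, hprod, card_insert_of_notMem heF, pow_succ',
        mul_assoc]
    · rw [hπ.crossSum_merge_of_isolated hu hv, hcross, card_insert_of_notMem heF, Nat.cast_succ,
        add_div, one_div]

lemma IsEdgeMatching.containProb_eq (hF : IsEdgeMatching F) :
    containProb F =
      edgeRate α β ^ #F * (1 - #F / (Fintype.card α + Fintype.card β)) := by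
  obtain ⟨π, hπ, hprod, hcross⟩ := hF.exists_isForestLabelling
  rw [hπ.containProb_eq, hprod, hcross, mul_right_comm, mul_div_assoc,
    div_self (weightProd_pos _).ne', mul_one]

end Containment

lemma card_filter_subset_matchings_succ {k : ℕ} (hF : F ∈ matchings α β k) :
    #{G ∈ matchings α β (k + 1) | F ⊆ G} = (Fintype.card α - k) * (Fintype.card β - k) := by
  obtain ⟨hcard, hF⟩ := mem_matchings.1 hF
  have hnot {e : α × β} (he : e ∈ (F.image Prod.fst)ᶜ ×ˢ (F.image Prod.snd)ᶜ) : e ∉ F :=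
    fun h ↦ mem_compl.1 (mem_product.1 he).1 (mem_image_of_mem _ h)
  have himage : {G ∈ matchings α β (k + 1) | F ⊆ G} =
      ((F.image Prod.fst)ᶜ ×ˢ (F.image Prod.snd)ᶜ).image (insert · F) := by
    ext G
    simp only [mem_filter, mem_matchings, mem_image]
    constructor
    · rintro ⟨⟨hGcard, hG⟩, hFG⟩
      obtain ⟨e, he, rfl⟩ := exists_eq_insert_iff.2 ⟨hFG, by rw [hcard, hGcard]⟩
      obtain ⟨-, hfst, hsnd⟩ := (isEdgeMatching_insert he).1 hG
      exact ⟨e, mem_product.2 ⟨mem_compl.2 hfst, mem_compl.2 hsnd⟩, rfl⟩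
    · rintro ⟨e, he, rfl⟩
      refine ⟨⟨by rw [card_insert_of_notMem (hnot he), hcard], ?_⟩, subset_insert e F⟩
      obtain ⟨hfst, hsnd⟩ := mem_product.1 he
      exact (isEdgeMatching_insert (hnot he)).2 ⟨hF, mem_compl.1 hfst, mem_compl.1 hsnd⟩
  rw [himage, card_image_of_injOn, card_product, card_compl, card_compl,
    card_image_of_injOn hF.1, card_image_of_injOn hF.2, hcard]
  exact fun e he f _ h ↦ (insert_inj (hnot he)).1 h

lemma IsEdgeMatching.filter_subset_matchings (hF : IsEdgeMatching F) (k : ℕ) :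
    {G ∈ matchings α β k | G ⊆ F} = powersetCard k F := by
  ext G
  rw [mem_filter, mem_matchings, mem_powersetCard]
  exact ⟨fun h ↦ ⟨h.2, h.1.1⟩, fun h ↦ ⟨⟨h.2, hF.mono h.1⟩, h.1⟩⟩

end Matchings

lemma card_matchings_mul_factorial (α β : Type*) [Fintype α] [Fintype β] (k : ℕ) :
    #(matchings α β k) * k ! =
      (Fintype.card α).descFactorial k * (Fintype.card β).descFactorial k := by
  classical
  induction k with
  | zero =>
    have h : matchings α β 0 = {∅} := by
      ext F
      rw [mem_matchings, card_eq_zero, mem_singleton, and_iff_left_of_imp]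
      rintro rfl
      simp [IsEdgeMatching]
    simp [h]
  | succ k ih =>
    have hdouble : #(matchings α β k) * ((Fintype.card α - k) * (Fintype.card β - k)) =
        #(matchings α β (k + 1)) * (k + 1) := by
      refine card_mul_eq_card_mul (fun F G : Finset (α × β) ↦ F ⊆ G)
        (fun F hF ↦ card_filter_subset_matchings_succ hF) fun F hF ↦ ?_
      obtain ⟨hcard, hF⟩ := mem_matchings.1 hF
      rw [bipartiteBelow, hF.filter_subset_matchings, card_powersetCard, hcard,
        Nat.choose_succ_self_right]
    rw [Nat.factorial_succ, ← mul_assoc, ← hdouble, mul_right_comm, ih, Nat.descFactorial_succ,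
      Nat.descFactorial_succ]
    ring

section Moments

variable (α β : Type*) [Fintype α] [Fintype β]

lemma card_mul_card_mul_edgeRate_sq [Nonempty α] [Nonempty β] :
    (Fintype.card α * Fintype.card β * edgeRate α β ^ 2 : ℝ) =
      (Fintype.card α + Fintype.card β) ^ 2 / (Fintype.card α * Fintype.card β) := by
  have hα : (Fintype.card α : ℝ) ≠ 0 := Nat.cast_ne_zero.2 Fintype.card_ne_zero
  have hβ : (Fintype.card β : ℝ) ≠ 0 := Nat.cast_ne_zero.2 Fintype.card_ne_zero
  rw [edgeRate]
  field_simp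
  ring

variable [DecidableEq α] [DecidableEq β]

/-- The `k`-th binomial moment of the number of common edges of two independent uniform spanning
trees of `K_{α,β}`. -/
noncomputable def commonEdgesMoment (k : ℕ) : ℝ :=
  binomialMoment (spanningTrees α β ×ˢ spanningTrees α β) (fun t ↦ #(t.1 ∩ t.2)) k

lemma commonEdgesMoment_eq_sum (k : ℕ) :
    commonEdgesMoment α β k = ∑ F ∈ powersetCard k (univ : Finset (α × β)), containProb F ^ 2 := by
  have hchoose (t : Finset (α × β) × Finset (α × β)) : (#(t.1 ∩ t.2)).choose k =
      #{F ∈ powersetCard k (univ : Finset (α × β)) | F ⊆ t.1 ∧ F ⊆ t.2} := by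
    rw [← card_powersetCard]
    congr 1
    ext F
    simp only [mem_powersetCard, mem_filter, subset_inter_iff, subset_univ, true_and]
    exact and_comm
  have hpairs (F : Finset (α × β)) :
      #{t ∈ spanningTrees α β ×ˢ spanningTrees α β | F ⊆ t.1 ∧ F ⊆ t.2} =
        #(treesContaining F) ^ 2 := by
    rw [filter_product (p := (F ⊆ ·)) (q := (F ⊆ ·)), card_product, sq, treesContaining]
  have hswap := sum_card_bipartiteAbove_eq_sum_card_bipartiteBelow
    (s := spanningTrees α β ×ˢ spanningTrees α β) (t := powersetCard k (univ : Finset (α × β)))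
    fun t F ↦ F ⊆ t.1 ∧ F ⊆ t.2
  simp only [bipartiteAbove, bipartiteBelow, ← hchoose, hpairs] at hswap
  rw [commonEdgesMoment, binomialMoment, ← Nat.cast_sum, hswap, card_product, ← sq]
  simp only [containProb, div_pow, ← sum_div, Nat.cast_sum, Nat.cast_pow]

variable [Nonempty α] [Nonempty β]

lemma commonEdgesMoment_le (k : ℕ) :
    commonEdgesMoment α β k ≤
      ((Fintype.card α + Fintype.card β) ^ 2 / (Fintype.card α * Fintype.card β) : ℝ) ^ k / k ! :=
  calc commonEdgesMoment α β k
    _ ≤ ∑ F ∈ powersetCard k (univ : Finset (α × β)), (edgeRate α β ^ k) ^ 2 := by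
      rw [commonEdgesMoment_eq_sum]
      refine sum_le_sum fun F hF ↦ pow_le_pow_left₀ (containProb_nonneg F) ?_ 2
      exact (mem_powersetCard.1 hF).2 ▸ containProb_le_edgeRate_pow F
    _ = ((Fintype.card α * Fintype.card β).choose k : ℝ) * (edgeRate α β ^ k) ^ 2 := by
      rw [sum_const, card_powersetCard, card_univ, Fintype.card_prod, nsmul_eq_mul]
    _ ≤ (Fintype.card α * Fintype.card β : ℝ) ^ k / k ! * (edgeRate α β ^ k) ^ 2 := by
      gcongr
      exact_mod_cast Nat.choose_le_pow_div (α := ℝ) k (Fintype.card α * Fintype.card β)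
    _ = _ := by
      rw [← card_mul_card_mul_edgeRate_sq]
      ring

lemma le_commonEdgesMoment (k : ℕ) :
    (((Fintype.card α).descFactorial k / Fintype.card α ^ k) *
        ((Fintype.card β).descFactorial k / Fintype.card β ^ k) *
        (1 - k / (Fintype.card α + Fintype.card β)) ^ 2 *
      (((Fintype.card α + Fintype.card β) ^ 2 / (Fintype.card α * Fintype.card β)) ^ k / k !) : ℝ) ≤
      commonEdgesMoment α β k := by
  have hcount : (#(matchings α β k) : ℝ) =
      (Fintype.card α).descFactorial k * (Fintype.card β).descFactorial k / k ! := by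
    rw [eq_div_iff (Nat.cast_ne_zero.2 k.factorial_ne_zero)]
    exact_mod_cast card_matchings_mul_factorial α β k
  calc _ = ∑ F ∈ matchings α β k, containProb F ^ 2 := by
        rw [sum_congr rfl fun F hF ↦ by
          rw [(mem_matchings.1 hF).2.containProb_eq, (mem_matchings.1 hF).1], sum_const,
          nsmul_eq_mul, hcount, ← card_mul_card_mul_edgeRate_sq, mul_pow, mul_pow]
        field_simp
        ring
    _ ≤ commonEdgesMoment α β k := by
      rw [commonEdgesMoment_eq_sum]
      refine sum_le_sum_of_subset_of_nonneg (fun F hF ↦ ?_) fun _ _ _ ↦ sq_nonneg _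
      exact mem_powersetCard.2 ⟨subset_univ F, (mem_matchings.1 hF).1⟩

end Moments

section Limit

variable {ι : Type*} {l : Filter ι} {p q : ι → ℕ} {lam : ℝ}

lemma tendsto_descFactorial_div_pow (k : ℕ) :
    Tendsto (fun n : ℕ ↦ (n.descFactorial k / n ^ k : ℝ)) atTop (𝓝 1) := by
  refine (Asymptotics.isEquivalent_iff_tendsto_one ?_).1 (isEquivalent_descFactorial k)
  filter_upwards [eventually_ne_atTop 0] with n hn
  positivity

lemma tendsto_commonEdgesMoment (hp : Tendsto p l atTop) (hq : Tendsto q l atTop)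
    (h : Tendsto (fun i ↦ ((p i + q i) ^ 2 / (p i * q i) : ℝ)) l (𝓝 lam)) (k : ℕ) :
    Tendsto (fun i ↦ commonEdgesMoment (Fin (p i)) (Fin (q i)) k) l (𝓝 (lam ^ k / k !)) := by
  have hupper := (h.pow k).div_const (k ! : ℝ)
  have hcorr : Tendsto (fun i ↦ (1 - k / (p i + q i) : ℝ)) l (𝓝 1) := by
    have hpq := (tendsto_natCast_atTop_atTop (R := ℝ).comp hp).atTop_add_atTop
      (tendsto_natCast_atTop_atTop (R := ℝ).comp hq)
    simpa using tendsto_const_nhds.sub (hpq.const_div_atTop (k : ℝ))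
  have hlower := ((((tendsto_descFactorial_div_pow k).comp hp).mul
    ((tendsto_descFactorial_div_pow k).comp hq)).mul (hcorr.pow 2)).mul hupper
  simp only [one_pow, one_mul] at hlower
  refine tendsto_of_tendsto_of_tendsto_of_le_of_le' hlower hupper ?_ ?_
  all_goals
    filter_upwards [hp.eventually_gt_atTop 0, hq.eventually_gt_atTop 0] with i hpi hqi
    have := Fin.pos_iff_nonempty.1 hpi
    have := Fin.pos_iff_nonempty.1 hqi
  · simpa only [Fintype.card_fin, Function.comp_apply] using
      le_commonEdgesMoment (Fin (p i)) (Fin (q i)) k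
  · simpa only [Fintype.card_fin] using commonEdgesMoment_le (Fin (p i)) (Fin (q i)) k

lemma eventually_commonEdgesMoment_le (hp : Tendsto p l atTop) (hq : Tendsto q l atTop)
    (h : Tendsto (fun i ↦ ((p i + q i) ^ 2 / (p i * q i) : ℝ)) l (𝓝 lam)) :
    ∀ᶠ i in l, ∀ k, commonEdgesMoment (Fin (p i)) (Fin (q i)) k ≤ (lam + 1) ^ k / k ! := by
  filter_upwards [hp.eventually_gt_atTop 0, hq.eventually_gt_atTop 0,
    h.eventually_le_const (lt_add_one lam)] with i hpi hqi hle k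
  have := Fin.pos_iff_nonempty.1 hpi
  have := Fin.pos_iff_nonempty.1 hqi
  refine (commonEdgesMoment_le (Fin (p i)) (Fin (q i)) k).trans ?_
  rw [Fintype.card_fin, Fintype.card_fin]
  gcongr

end Limit

section LinearGrowth

variable {p q : ℕ → ℕ}

lemma tendsto_atTop_of_tendsto_div {c : ℝ} (hc : 0 < c)
    (h : Tendsto (fun n ↦ (p n / n : ℝ)) atTop (𝓝 c)) : Tendsto p atTop atTop := by
  refine (tendsto_natCast_atTop_iff (R := ℝ)).1 ?_
  refine (h.pos_mul_atTop hc tendsto_natCast_atTop_atTop).congr' ?_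
  filter_upwards [eventually_ne_atTop 0] with n hn
  exact div_mul_cancel₀ _ (Nat.cast_ne_zero.2 hn)

lemma tendsto_add_sq_div_mul {c₁ c₂ : ℝ} (hc : c₁ * c₂ ≠ 0) (hpq : ∀ᶠ n in atTop, p n + q n = n)
    (hp : Tendsto (fun n ↦ (p n / n : ℝ)) atTop (𝓝 c₁))
    (hq : Tendsto (fun n ↦ (q n / n : ℝ)) atTop (𝓝 c₂)) :
    Tendsto (fun n ↦ ((p n + q n) ^ 2 / (p n * q n) : ℝ)) atTop (𝓝 (1 / (c₁ * c₂))) := by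
  rw [one_div]
  refine ((hp.mul hq).inv₀ hc).congr' ?_
  filter_upwards [hpq] with n hn
  have hn' : (p n + q n : ℝ) = n := by exact_mod_cast hn
  rw [hn', div_mul_div_comm, inv_div, sq]

end LinearGrowth

end BipartiteSpanningTree

open BipartiteSpanningTree Filter Topology Nat in
theorem bipartite_poisson_limit_general {ι : Type*} {l : Filter ι} {p q : ι → ℕ} {lam : ℝ}
    (hp : Tendsto p l atTop) (hq : Tendsto q l atTop)
    (h : Tendsto (fun i ↦ ((p i + q i) ^ 2 / (p i * q i) : ℝ)) l (𝓝 lam)) (m : ℕ) :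
    Tendsto (fun i ↦ bipartiteProbCommonEdgesEq (p i) (q i) m) l
      (𝓝 (Real.exp (-lam) * lam ^ m / m !)) := by
  simp only [bipartiteProbCommonEdgesEq_eq_card_div_card]
  exact tendsto_poisson_of_tendsto_binomialMoment (tendsto_commonEdgesMoment hp hq h)
    (eventually_commonEdgesMoment_le hp hq h) m

/-- Fix positive reals `c₁, c₂` with `c₁ + c₂ = 1`.  For complete
bipartite graphs `K_{n₁,n₂}` with `n = n₁ + n₂ → ∞`, `n₁/n → c₁` and `n₂/n → c₂`, the
number `X` of common edges of two independent uniformly random spanning trees satisfies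
`P(X = m) → e^(−1/(c₁c₂)) (1/(c₁c₂))^m / m!` for every fixed `m`; that is, `X`
converges in distribution to a Poisson distribution with expected value `1/(c₁c₂)`. -/
theorem bipartite_poisson_limit (c₁ c₂ : ℝ) (hc₁ : 0 < c₁) (hc₂ : 0 < c₂)
    (hsum : c₁ + c₂ = 1) (n₁ n₂ : ℕ → ℕ)
    (hpos : ∀ n, 2 ≤ n → 1 ≤ n₁ n ∧ 1 ≤ n₂ n)
    (htot : ∀ n, 2 ≤ n → n₁ n + n₂ n = n)
    (hconv₁ : Filter.Tendsto (fun n => (n₁ n : ℝ) / n) Filter.atTop (nhds c₁))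
    (hconv₂ : Filter.Tendsto (fun n => (n₂ n : ℝ) / n) Filter.atTop (nhds c₂))
    (m : ℕ) :
    Filter.Tendsto (fun n => bipartiteProbCommonEdgesEq (n₁ n) (n₂ n) m) Filter.atTop
      (nhds (Real.exp (-(1 / (c₁ * c₂))) * (1 / (c₁ * c₂)) ^ m / m.factorial)) :=
  bipartite_poisson_limit_general
    (BipartiteSpanningTree.tendsto_atTop_of_tendsto_div hc₁ hconv₁)
    (BipartiteSpanningTree.tendsto_atTop_of_tendsto_div hc₂ hconv₂)
    (BipartiteSpanningTree.tendsto_add_sq_div_mul (mul_pos hc₁ hc₂).ne'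
      (Filter.eventually_atTop.2 ⟨2, htot⟩) hconv₁ hconv₂) m
end

section
/- For all integers n ≥ 2 and 0 ≤ m ≤ n−1, the number of ordered pairs (T_1, T_2) of spanning trees of the complete graph K_n with exactly m common edges equals Σ_{j=0}^{n−m−1} (−1)^j C(m+j, m) n^{2(n−m−j−2)} ((n−1)!/(n−m−j−1)!) Σ_{k=0}^{m+j} C(n−k, m+j−k) n^k / k!, where the expression is evaluated in the rationals (so that n^{2(n−m−j−2)} is interpreted as a possibly negative power of n). -/
/-!
For a graph `F` with components of sizes `a₁, …, a_c`, put `P F = a₁ ⋯ a_c`. A forest `F` on `n`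
vertices with `c` components lies in `n ^ (c - 2) * P F` spanning trees. Counting the triples
`(T₁, T₂, F)` of two spanning trees and a forest `F ⊆ T₁ ∩ T₂` with `r` edges therefore gives
`∑ C(|T₁ ∩ T₂|, r) = n ^ (2 * (n - r - 2)) * A_r`, where `A_r` is the sum of `(P F) ^ 2` over the
forests with `r` edges, and binomial inversion recovers the number of pairs with exactly `m` common
edges.

Adding an edge that merges components of sizes `a` and `b` multiplies `P F` by `1 / a + 1 / b`.
Summing this over all forests and all admissible edges, `A_r` and the companion sum `B_r` of
`(P F) ^ 2 * (1 / a₁ + ⋯ + 1 / a_c)` satisfy a linear recursion, which is solved by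
`A_r = (n - 1)! / d! * [X ^ r] exp (n X) / (1 - X) ^ (d + 2)` with `d = n - 1 - r`.
-/

namespace Moon

open Finset

section ExpGeom

open PowerSeries

lemma derivative_mk_one (R : Type*) [CommRing R] :
    d⁄dX R (PowerSeries.mk 1) = PowerSeries.mk 1 ^ 2 := by
  ext n
  simp [mk_one_pow_eq_mk_choose_add, coeff_derivative, add_comm]

lemma derivative_rescale {R : Type*} [CommRing R] (x : R) (f : R⟦X⟧) :
    d⁄dX R (rescale x f) = x • rescale x (d⁄dX R f) := by
  ext n
  simp only [coeff_derivative, coeff_rescale, map_smul, smul_eq_mul, pow_succ]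
  ring

variable {K : Type*} [Field K] [CharZero K]

/-- The power series `exp (x X) / (1 - X) ^ a`, whose coefficients solve the recursion for weighted
sums over forests. The factor `1 / (1 - X)` is encoded as the geometric series `mk 1`. -/
noncomputable def expGeom (x : K) (a : ℕ) : K⟦X⟧ := rescale x (exp K) * PowerSeries.mk 1 ^ a

lemma X_mul_expGeom_succ (x : K) (a : ℕ) :
    X * expGeom x (a + 1) = expGeom x (a + 1) - expGeom x a := by
  rw [expGeom, expGeom, pow_succ]
  linear_combination -(rescale x (exp K) * PowerSeries.mk 1 ^ a) * mk_one_mul_one_sub_eq_one K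

lemma derivative_expGeom (x : K) (a : ℕ) :
    d⁄dX K (expGeom x a) = x • expGeom x a + a • expGeom x (a + 1) := by
  rw [expGeom, expGeom, Derivation.leibniz, derivative_pow, derivative_mk_one,
    derivative_rescale, derivative_exp]
  rcases a with _ | a
  · simp [smul_eq_C_mul, mul_comm]
  · simp only [smul_eq_mul, smul_eq_C_mul, nsmul_eq_mul, Nat.add_sub_cancel]
    ring

lemma coeff_zero_expGeom (x : K) (a : ℕ) : coeff 0 (expGeom x a) = 1 := by
  simp [expGeom, coeff_mul]

lemma coeff_expGeom_succ_right (x : K) (a N : ℕ) :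
    coeff (N + 1) (expGeom x (a + 1)) =
      coeff (N + 1) (expGeom x a) + coeff N (expGeom x (a + 1)) := by
  have h := congrArg (coeff (N + 1)) (X_mul_expGeom_succ x a)
  rw [coeff_succ_X_mul, map_sub] at h
  linear_combination -h

lemma succ_mul_coeff_succ_expGeom (x : K) (a N : ℕ) :
    (N + 1) * coeff (N + 1) (expGeom x a) =
      x * coeff N (expGeom x a) + a * coeff N (expGeom x (a + 1)) := by
  have h := congrArg (coeff N) (derivative_expGeom x a)
  rw [coeff_derivative, map_add, map_smul, map_nsmul, smul_eq_mul, nsmul_eq_mul] at h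
  linear_combination h

lemma mul_coeff_expGeom (x : K) (a N : ℕ) :
    x * coeff N (expGeom x a) = (a + 1) * coeff N (expGeom x (a + 2)) +
      (x - (a + 1 + N)) * coeff N (expGeom x (a + 1)) := by
  have hX : X * d⁄dX K (expGeom x (a + 1)) =
      x • (expGeom x (a + 1) - expGeom x a) +
        (a + 1) • (expGeom x (a + 2) - expGeom x (a + 1)) := by
    rw [derivative_expGeom, ← X_mul_expGeom_succ x a, ← X_mul_expGeom_succ x (a + 1), mul_add,
      mul_smul_comm, mul_smul_comm]
  have h := congrArg (coeff N) hX
  have hN : coeff N (X * d⁄dX K (expGeom x (a + 1))) = N * coeff N (expGeom x (a + 1)) := by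
    rcases N with _ | N
    · simp
    · rw [coeff_succ_X_mul, coeff_derivative, mul_comm]
      push_cast
      rfl
  rw [hN, map_add, map_smul, map_nsmul, map_sub, map_sub, smul_eq_mul, nsmul_eq_mul] at h
  push_cast at h
  linear_combination h

lemma succ_mul_coeff_succ_expGeom_of_eq {x : K} {a N : ℕ} (hx : x = a + 1 + N) :
    (N + 1) * (a * coeff (N + 1) (expGeom x (a + 1))) =
      x * (a * coeff N (expGeom x (a + 1)) + coeff N (expGeom x a)) +
        (a + 1) * (a - 1) * coeff N (expGeom x (a + 2)) := by
  have hsucc := succ_mul_coeff_succ_expGeom x (a + 1) N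
  push_cast at hsucc
  linear_combination a * hsucc - mul_coeff_expGeom x a N - coeff N (expGeom x (a + 1)) * hx

lemma coeff_expGeom_succ (x : K) (a N : ℕ) :
    coeff N (expGeom x (a + 1)) =
      ∑ k ∈ range (N + 1), (a + (N - k)).choose a * x ^ k / k.factorial := by
  rw [expGeom, mk_one_pow_eq_mk_choose_add, coeff_mul,
    Nat.sum_antidiagonal_eq_sum_range_succ_mk]
  refine sum_congr rfl fun k _ ↦ ?_
  simp only [coeff_rescale, coeff_exp, coeff_mk, one_div, map_inv₀, map_natCast]
  ring

end ExpGeom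

lemma sum_neg_one_pow_mul_choose_mul_choose {R : Type*} [CommRing R] {n q : ℕ} (hq : q < n)
    (m : ℕ) :
    ∑ j ∈ range (n - m), (-1 : R) ^ j * (m + j).choose m * q.choose (m + j) =
      if q = m then 1 else 0 := by
  rcases lt_or_ge q m with hqm | hqm
  · rw [if_neg hqm.ne]
    exact sum_eq_zero fun j _ ↦ by simp [Nat.choose_eq_zero_of_lt (show q < m + j by lia)]
  obtain ⟨s, rfl⟩ := Nat.exists_eq_add_of_le hqm
  have trinomial (j : ℕ) : ((m + j).choose m * (m + s).choose (m + j) : R) =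
      (m + s).choose m * s.choose j := by
    have := Nat.choose_mul (n := m + s) (Nat.le_add_right m j)
    rw [Nat.add_sub_cancel_left, Nat.add_sub_cancel_left] at this
    rw [mul_comm]
    exact_mod_cast congrArg (Nat.cast : ℕ → R) this
  have alternating : ∑ j ∈ range (n - m), (-1 : R) ^ j * s.choose j = if s = 0 then 1 else 0 := by
    rw [← sum_subset (range_subset_range.2 (show s + 1 ≤ n - m by lia))]
    · exact_mod_cast congrArg (Int.cast : ℤ → R) (Int.alternating_sum_range_choose (n := s))
    · intro j _ hj
      simp [Nat.choose_eq_zero_of_lt (show s < j by simpa using hj)]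
  simp_rw [mul_assoc, trinomial, mul_left_comm _ ((m + s).choose m : R), ← mul_sum, alternating]
  rcases s with _ | s <;> simp

open SimpleGraph PowerSeries
open scoped Classical

lemma sum_eq_sum_parts {α M : Type*} [AddCommMonoid M] {s : Finset α} (P : Finpartition s)
    (f : α → M) : ∑ v ∈ s, f v = ∑ C ∈ P.parts, ∑ v ∈ C, f v :=
  (sum_congr P.biUnion_parts.symm fun _ _ ↦ rfl).trans (sum_biUnion P.disjoint)

section Components

lemma apply_eq_of_reachable {V α : Type*} {G : SimpleGraph V} {f : V → α}
    (hf : ∀ x y, G.Adj x y → f x = f y) {v w : V} (h : G.Reachable v w) : f v = f w := by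
  obtain ⟨p⟩ := h
  induction p with
  | nil => rfl
  | cons hadj _ ih => exact (hf _ _ hadj).trans ih

variable {V : Type*} [Fintype V] {G : SimpleGraph V} {u v w : V}

/-- The partition of the vertex set of a finite graph into its connected components. -/
noncomputable def components (G : SimpleGraph V) : Finpartition (univ : Finset V) :=
  Finpartition.ofSetoid G.reachableSetoid

/-- The number of vertices of the connected component containing a given vertex, so that sums over
components can be written as sums over vertices. -/
noncomputable def componentSize (G : SimpleGraph V) (v : V) : ℕ := #((components G).part v)

lemma mem_part_components : w ∈ (components G).part v ↔ G.Reachable v w :=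
  Finpartition.mem_part_ofSetoid_iff_rel

lemma part_components_mem (G : SimpleGraph V) (v : V) :
    (components G).part v ∈ (components G).parts :=
  (components G).part_mem.2 (mem_univ v)

lemma exists_part_components_eq {C : Finset V} (hC : C ∈ (components G).parts) :
    ∃ v, (components G).part v = C := by
  obtain ⟨v, -, hv⟩ := (components G).part_surjOn hC
  exact ⟨v, hv⟩

lemma part_components_eq_iff :
    (components G).part v = (components G).part w ↔ G.Reachable v w := by
  rw [(components G).part_eq_iff_mem (part_components_mem G w), mem_part_components,
    reachable_comm]

lemma disjoint_part_components (h : ¬G.Reachable u v) :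
    Disjoint ((components G).part u) ((components G).part v) :=
  (components G).disjoint (part_components_mem G u) (part_components_mem G v)
    (part_components_eq_iff.not.2 h)

lemma componentSize_pos (G : SimpleGraph V) (v : V) : 0 < componentSize G v :=
  card_pos.2 ⟨v, mem_part_components.2 .rfl⟩

lemma componentSize_eq_card {C : Finset V} (hC : C ∈ (components G).parts) (hv : v ∈ C) :
    componentSize G v = #C := by
  rw [componentSize, (components G).part_eq_of_mem hC hv]

lemma sum_componentSize_eq_sum_parts {M : Type*} [AddCommMonoid M] (G : SimpleGraph V) (f : ℕ → M) :
    ∑ v, f (componentSize G v) = ∑ C ∈ (components G).parts, #C • f #C := by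
  rw [sum_eq_sum_parts (components G)]
  refine sum_congr rfl fun C hC ↦ ?_
  rw [← sum_const]
  exact sum_congr rfl fun v hv ↦ by rw [componentSize_eq_card hC hv]

lemma sum_componentSize_inv (G : SimpleGraph V) :
    ∑ v, (componentSize G v : ℚ)⁻¹ = #(components G).parts := by
  rw [sum_componentSize_eq_sum_parts G fun k ↦ (k : ℚ)⁻¹, card_eq_sum_ones, Nat.cast_sum]
  refine sum_congr rfl fun C hC ↦ ?_
  have := card_pos.2 ((components G).nonempty_of_mem_parts hC)
  rw [nsmul_eq_mul, mul_inv_cancel₀ (by positivity), Nat.cast_one]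

lemma part_components_eq_apply {f : V → Finset V} (hadj : ∀ x y, G.Adj x y → f x = f y)
    (hself : ∀ x, x ∈ f x) (hreach : ∀ x, ∀ y ∈ f x, G.Reachable x y) (v : V) :
    (components G).part v = f v := by
  ext w
  rw [mem_part_components]
  exact ⟨fun h ↦ apply_eq_of_reachable hadj h ▸ hself w, hreach v w⟩

lemma part_components_sup_edge (G : SimpleGraph V) (u v w : V) :
    (components (G ⊔ edge u v)).part w =
      if w ∈ (components G).part u ∪ (components G).part v then
        (components G).part u ∪ (components G).part v
      else (components G).part w := by
  have self (x) : x ∈ (components G).part x := mem_part_components.2 .rfl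
  have mono {y z} (h : G.Reachable y z) : (G ⊔ edge u v).Reachable y z := h.mono le_sup_left
  refine part_components_eq_apply (f := fun w ↦ if w ∈ _ then _ else (components G).part w)
    (fun x y h ↦ ?_) (fun x ↦ ?_) (fun x y hy ↦ ?_) w
  · rcases h with h | h
    · have hmem (z) : x ∈ (components G).part z ↔ y ∈ (components G).part z := by
        simp only [mem_part_components]
        exact ⟨fun hz ↦ hz.trans h.reachable, fun hz ↦ hz.trans h.reachable.symm⟩
      simp only [mem_union, hmem, part_components_eq_iff.2 h.reachable]
    · obtain ⟨⟨rfl, rfl⟩ | ⟨rfl, rfl⟩, -⟩ := (edge_adj ..).1 h <;> simp [self]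
  · split_ifs with hx
    exacts [hx, self x]
  · have huv : (G ⊔ edge u v).Reachable u v := by
      rcases eq_or_ne u v with rfl | huv
      · rfl
      · exact Adj.reachable (by simp [edge_adj, huv])
    have from_u {z} (hz : z ∈ (components G).part u ∪ (components G).part v) :
        (G ⊔ edge u v).Reachable u z := by
      rcases mem_union.1 hz with hz | hz
      exacts [mono (mem_part_components.1 hz), huv.trans (mono (mem_part_components.1 hz))]
    split_ifs at hy with hx
    exacts [(from_u hx).symm.trans (from_u hy), mono (mem_part_components.1 hy)]

lemma parts_components (G : SimpleGraph V) :
    (components G).parts = univ.image (components G).part := by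
  ext C
  simp only [mem_image, mem_univ, true_and]
  exact ⟨exists_part_components_eq, fun ⟨v, hv⟩ ↦ hv ▸ part_components_mem G v⟩

lemma parts_components_sup_edge (G : SimpleGraph V) (u v : V) :
    (components (G ⊔ edge u v)).parts =
      insert ((components G).part u ∪ (components G).part v)
        (((components G).parts.erase ((components G).part u)).erase ((components G).part v)) := by
  have self (x) : x ∈ (components G).part x := mem_part_components.2 .rfl
  ext C
  simp only [parts_components, mem_image, mem_univ, true_and, mem_insert, mem_erase,
    part_components_sup_edge]
  constructor
  · rintro ⟨w, rfl⟩
    split_ifs with hw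
    · exact .inl rfl
    · refine .inr ⟨?_, ?_, w, rfl⟩ <;> rintro h <;> simp [← h, self] at hw
  · rintro (rfl | ⟨hv, hu, w, rfl⟩)
    · exact ⟨u, by simp [self]⟩
    · refine ⟨w, if_neg ?_⟩
      rw [mem_union, mem_part_components, mem_part_components, ← part_components_eq_iff,
        ← part_components_eq_iff]
      rintro (h | h)
      exacts [hu h.symm, hv h.symm]

lemma componentSize_sup_edge (h : ¬G.Reachable u v) :
    componentSize (G ⊔ edge u v) u = componentSize G u + componentSize G v := by
  rw [componentSize, part_components_sup_edge, if_pos, card_union_of_disjoint]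
  · rfl
  · exact disjoint_part_components h
  · exact mem_union_left _ (mem_part_components.2 .rfl)

lemma prod_parts_sup_edge {M : Type*} [CommMonoid M] (h : ¬G.Reachable u v) (f : Finset V → M) :
    f ((components G).part u) * f ((components G).part v) *
        ∏ C ∈ (components (G ⊔ edge u v)).parts, f C =
      f ((components G).part u ∪ (components G).part v) * ∏ C ∈ (components G).parts, f C := by
  have self (x) : x ∈ (components G).part x := mem_part_components.2 .rfl
  have hne : (components G).part v ≠ (components G).part u :=
    part_components_eq_iff.not.2 (mt Reachable.symm h)
  have hunion : (components G).part u ∪ (components G).part v ∉ (components G).parts := fun hmem ↦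
    hne <| ((components G).part_eq_of_mem hmem (mem_union_right _ (self v))).trans
      ((components G).part_eq_of_mem hmem (mem_union_left _ (self u))).symm
  rw [parts_components_sup_edge, prod_insert fun h ↦ hunion (mem_of_mem_erase (mem_of_mem_erase h)),
    ← mul_prod_erase _ f (part_components_mem G u),
    ← mul_prod_erase _ f (mem_erase.2 ⟨hne, part_components_mem G v⟩)]
  ac_rfl

/-- The product of the component sizes. A forest `F` with `c` components is contained in
`n ^ (c - 2) * componentProd F` spanning trees. -/
noncomputable def componentProd (G : SimpleGraph V) : ℚ := ∏ C ∈ (components G).parts, (#C : ℚ)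

/-- The sum of the reciprocals of the component sizes, the correction term in the weighted counts of
the edges joining two components. -/
noncomputable def componentInvSum (G : SimpleGraph V) : ℚ :=
  ∑ C ∈ (components G).parts, (#C : ℚ)⁻¹

lemma componentProd_sup_edge (h : ¬G.Reachable u v) :
    componentProd (G ⊔ edge u v) =
      componentProd G * ((componentSize G u : ℚ)⁻¹ + (componentSize G v : ℚ)⁻¹) := by
  have hprod := prod_parts_sup_edge h fun C ↦ (#C : ℚ)
  rw [card_union_of_disjoint (disjoint_part_components h), Nat.cast_add] at hprod
  change (componentSize G u : ℚ) * componentSize G v * componentProd (G ⊔ edge u v) =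
    (componentSize G u + componentSize G v) * componentProd G at hprod
  have hu := componentSize_pos G u
  have hv := componentSize_pos G v
  field_simp
  linear_combination hprod

lemma isTree_induce_of_mem_parts_components (hG : G.IsAcyclic) {C : Finset V}
    (hC : C ∈ (components G).parts) : (G.induce (C : Set V)).IsTree := by
  obtain ⟨v, rfl⟩ := exists_part_components_eq hC
  have hsupp : (G.connectedComponentMk v).supp = (components G).part v := by
    ext w
    rw [mem_coe, mem_part_components, reachable_comm, ConnectedComponent.mem_supp_iff,
      ConnectedComponent.eq]
  exact hsupp ▸ hG.isTree_connectedComponent (G.connectedComponentMk v)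

lemma sum_degree_component (hG : G.IsAcyclic) {C : Finset V} (hC : C ∈ (components G).parts) :
    ∑ v ∈ C, G.degree v + 2 = 2 * #C := by
  have degree_eq (w : (C : Set V)) : (G.induce (C : Set V)).degree w = G.degree w := by
    convert! degree_induce_of_neighborSet_subset (s := (C : Set V)) (v := w) fun x hx ↦ ?_
    rw [mem_coe, ← (components G).part_eq_of_mem hC w.2, mem_part_components]
    exact hx.reachable
  have card_edges := (isTree_induce_of_mem_parts_components hG hC).card_edgeFinset
  have sum_degree := (G.induce (C : Set V)).sum_degrees_eq_twice_card_edges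
  rw [Fintype.sum_congr _ _ degree_eq, ← sum_subtype C (fun _ ↦ by simp) fun w ↦ G.degree w]
    at sum_degree
  simp only [coe_sort_coe, Fintype.card_coe] at card_edges
  rw [sum_degree, ← card_edges, mul_add_one]

lemma sum_degree_mul_componentSize_inv (hG : G.IsAcyclic) :
    ∑ v, (G.degree v : ℚ) * (componentSize G v : ℚ)⁻¹ =
      2 * (#(components G).parts - componentInvSum G) := by
  rw [sum_eq_sum_parts (components G), componentInvSum, card_eq_sum_ones, Nat.cast_sum,
    ← sum_sub_distrib, mul_sum]
  refine sum_congr rfl fun C hC ↦ ?_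
  have hpos := card_pos.2 ((components G).nonempty_of_mem_parts hC)
  have hdeg : (∑ v ∈ C, (G.degree v : ℚ)) + 2 = 2 * #C := by
    exact_mod_cast sum_degree_component hG hC
  rw [sum_congr rfl fun v hv ↦ by rw [componentSize_eq_card hC hv], ← sum_mul]
  field_simp
  linear_combination hdeg

lemma card_parts_add_ncard_edgeSet (hG : G.IsAcyclic) :
    #(components G).parts + G.edgeSet.ncard = Fintype.card V := by
  have hdeg : ∑ C ∈ (components G).parts, (∑ v ∈ C, G.degree v + 2) =
      ∑ C ∈ (components G).parts, 2 * #C := sum_congr rfl fun C hC ↦ sum_degree_component hG hC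
  rw [sum_add_distrib, ← sum_eq_sum_parts, sum_degrees_eq_twice_card_edges, ← mul_sum,
    (components G).sum_card_parts, card_univ, sum_const, smul_eq_mul] at hdeg
  rw [Set.ncard_eq_toFinset_card', ← edgeFinset]
  lia

end Components

section SeparatedPairs

variable {V : Type*} [Fintype V] {G : SimpleGraph V}

/-- The ordered pairs of vertices lying in different components, that is, the oriented edges that
can be added to a forest. -/
noncomputable def separatedPairs (G : SimpleGraph V) : Finset (V × V) :=
  {p | ¬G.Reachable p.1 p.2}

lemma mem_separatedPairs {p : V × V} : p ∈ separatedPairs G ↔ ¬G.Reachable p.1 p.2 := by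
  simp [separatedPairs]

lemma sum_separatedPairs_eq_sum_sum {M : Type*} [AddCommMonoid M] (G : SimpleGraph V)
    (f : V → V → M) :
    ∑ p ∈ separatedPairs G, f p.1 p.2 = ∑ u, ∑ v ∈ ((components G).part u)ᶜ, f u v :=
  sum_finset_product' _ _ _ fun p ↦ by simp [mem_separatedPairs, mem_part_components]

lemma sum_separatedPairs_swap {M : Type*} [AddCommMonoid M] (G : SimpleGraph V) (f : V × V → M) :
    ∑ p ∈ separatedPairs G, f p.swap = ∑ p ∈ separatedPairs G, f p :=
  sum_equiv (Equiv.prodComm V V)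
    (fun p ↦ by simp [mem_separatedPairs, reachable_comm (u := p.1)]) fun _ _ ↦ rfl

lemma sum_separatedPairs_fst (G : SimpleGraph V) (f : V → ℚ) :
    ∑ p ∈ separatedPairs G, f p.1 = ∑ u, (Fintype.card V - componentSize G u : ℚ) * f u := by
  rw [sum_separatedPairs_eq_sum_sum G fun u _ ↦ f u]
  refine sum_congr rfl fun u _ ↦ ?_
  rw [sum_const, card_compl, nsmul_eq_mul, Nat.cast_sub (card_le_univ _), componentSize]

lemma sum_separatedPairs_mul_inv (G : SimpleGraph V) (f : V → ℚ) :
    ∑ p ∈ separatedPairs G, f p.1 * (componentSize G p.2 : ℚ)⁻¹ =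
      (#(components G).parts - 1) * ∑ u, f u := by
  rw [sum_separatedPairs_eq_sum_sum G fun u v ↦ f u * (componentSize G v : ℚ)⁻¹, mul_sum]
  refine sum_congr rfl fun u _ ↦ ?_
  have hpart : ∑ v ∈ (components G).part u, (componentSize G v : ℚ)⁻¹ = 1 := by
    have := componentSize_pos G u
    rw [sum_congr rfl fun v hv ↦ by rw [componentSize_eq_card (part_components_mem G u) hv],
      sum_const, nsmul_eq_mul]
    exact mul_inv_cancel₀ (by exact_mod_cast this.ne')
  rw [← mul_sum, ← sum_componentSize_inv, ← sum_add_sum_compl ((components G).part u), hpart]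
  ring

lemma sum_componentSize_inv_sq (G : SimpleGraph V) :
    ∑ v, (componentSize G v : ℚ)⁻¹ ^ 2 = componentInvSum G := by
  rw [sum_componentSize_eq_sum_parts G fun k ↦ (k : ℚ)⁻¹ ^ 2, componentInvSum]
  refine sum_congr rfl fun C hC ↦ ?_
  have := card_pos.2 ((components G).nonempty_of_mem_parts hC)
  rw [nsmul_eq_mul]
  field_simp

lemma sum_separatedPairs_add_inv (G : SimpleGraph V) :
    ∑ p ∈ separatedPairs G, ((componentSize G p.1 : ℚ)⁻¹ + (componentSize G p.2 : ℚ)⁻¹) =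
      2 * (Fintype.card V * (#(components G).parts - 1)) := by
  have hswap := sum_separatedPairs_swap G fun p ↦ (componentSize G p.1 : ℚ)⁻¹
  have hone := sum_separatedPairs_mul_inv G fun _ ↦ 1
  simp only [one_mul, sum_const, card_univ, nsmul_eq_mul, mul_one] at hone
  simp only [Prod.fst_swap] at hswap
  rw [sum_add_distrib, ← hswap, hone]
  ring

lemma sum_separatedPairs_add_inv_sq (G : SimpleGraph V) :
    ∑ p ∈ separatedPairs G, ((componentSize G p.1 : ℚ)⁻¹ + (componentSize G p.2 : ℚ)⁻¹) ^ 2 =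
      2 * (Fintype.card V * componentInvSum G +
        #(components G).parts * (#(components G).parts - 2)) := by
  have hswap := sum_separatedPairs_swap G fun p ↦ (componentSize G p.1 : ℚ)⁻¹ ^ 2
  have hsq : ∑ p ∈ separatedPairs G, (componentSize G p.1 : ℚ)⁻¹ ^ 2 =
      Fintype.card V * componentInvSum G - #(components G).parts := by
    rw [sum_separatedPairs_fst G fun u ↦ (componentSize G u : ℚ)⁻¹ ^ 2,
      ← sum_componentSize_inv_sq, ← sum_componentSize_inv, mul_sum, ← sum_sub_distrib]
    refine sum_congr rfl fun u _ ↦ ?_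
    have := componentSize_pos G u
    field_simp
  have hmul := sum_separatedPairs_mul_inv G fun u ↦ (componentSize G u : ℚ)⁻¹
  rw [sum_componentSize_inv] at hmul
  simp only [Prod.fst_swap] at hswap
  simp only [add_sq, sum_add_distrib, mul_assoc, ← mul_sum, hswap, hsq, hmul]
  ring

lemma sum_separatedPairs_add_inv_sq_mul_inv (G : SimpleGraph V) :
    ∑ p ∈ separatedPairs G, ((componentSize G p.1 : ℚ)⁻¹ + (componentSize G p.2 : ℚ)⁻¹) ^ 2 *
        (componentSize G p.1 + componentSize G p.2 : ℚ)⁻¹ =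
      2 * ((#(components G).parts - 1) * componentInvSum G) := by
  have hmul := sum_separatedPairs_mul_inv G fun u ↦ (componentSize G u : ℚ)⁻¹ ^ 2
  have hswap := sum_separatedPairs_swap G fun p ↦
    (componentSize G p.1 : ℚ)⁻¹ ^ 2 * (componentSize G p.2 : ℚ)⁻¹
  simp only [Prod.fst_swap, Prod.snd_swap] at hswap
  rw [sum_componentSize_inv_sq] at hmul
  rw [two_mul, ← hmul]
  nth_rw 2 [← hswap]
  rw [← sum_add_distrib]
  refine sum_congr rfl fun p _ ↦ ?_
  have := componentSize_pos G p.1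
  have := componentSize_pos G p.2
  field_simp
  ring

end SeparatedPairs

section Forests

variable {V : Type*} {F T : SimpleGraph V} {u v : V}

lemma ne_of_not_reachable (h : ¬F.Reachable u v) : u ≠ v := by
  rintro rfl
  exact h .rfl

lemma not_reachable_of_adj (hT : T.IsAcyclic) (hle : F ≤ T) (hadj : T.Adj u v)
    (hF : ¬F.Adj u v) : ¬F.Reachable u v := fun hreach ↦
  have hsup : F ⊔ edge u v ≤ T := sup_le hle ((edge_le_iff _).2 (.inr hadj))
  ((isAcyclic_sup_fromEdgeSet_iff.1 (hT.anti hsup)).2 hreach).elim hadj.ne hF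

lemma not_reachable_sdiff_edge (hF : F.IsAcyclic) (h : F.Adj u v) :
    ¬(F \ edge u v).Reachable u v :=
  not_reachable_of_adj hF sdiff_le h (by simp [edge_adj, h.ne])

lemma sdiff_edge_sup_edge (h : F.Adj u v) : F \ edge u v ⊔ edge u v = F :=
  sdiff_sup_cancel ((edge_le_iff _).2 (.inr h))

lemma sup_edge_sdiff_edge (h : ¬F.Adj u v) : (F ⊔ edge u v) \ edge u v = F := by
  rw [sup_sdiff_right_self, sdiff_edge _ h]

lemma ncard_edgeSet_sup_edge [Finite V] (h : ¬F.Reachable u v) :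
    (F ⊔ edge u v).edgeSet.ncard = F.edgeSet.ncard + 1 := by
  have hnot : s(u, v) ∉ F.edgeSet := fun hmem ↦ h (Adj.reachable hmem)
  rw [edgeSet_sup, edgeSet_edge_of_ne (ne_of_not_reachable h), Set.union_singleton,
    Set.ncard_insert_of_notMem hnot]

variable [Fintype V] {r d : ℕ}

lemma card_adj_pairs (G : SimpleGraph V) :
    #{p : V × V | G.Adj p.1 p.2} = 2 * G.edgeSet.ncard := by
  rw [Set.ncard_eq_toFinset_card']
  exact G.two_mul_card_edgeFinset.symm

/-- The spanning forests of the complete graph on `V` with `r` edges, over which common subgraphs of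
two spanning trees range. -/
noncomputable def forests (V : Type*) [Fintype V] (r : ℕ) : Finset (SimpleGraph V) :=
  {F | F.IsAcyclic ∧ F.edgeSet.ncard = r}

lemma mem_forests : F ∈ forests V r ↔ F.IsAcyclic ∧ F.edgeSet.ncard = r := by
  simp [forests]

lemma card_parts_of_mem_forests (hF : F ∈ forests V r) (h : Fintype.card V = d + r) :
    #(components F).parts = d := by
  have := card_parts_add_ncard_edgeSet (mem_forests.1 hF).1
  rw [(mem_forests.1 hF).2] at this
  lia

lemma sup_edge_mem_forests (hF : F ∈ forests V r) (h : ¬F.Reachable u v) :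
    F ⊔ edge u v ∈ forests V (r + 1) := by
  rw [mem_forests] at hF ⊢
  refine ⟨hF.1.sup_edge_of_not_reachable h, ?_⟩
  rw [ncard_edgeSet_sup_edge h, hF.2]

lemma sdiff_edge_mem_forests (hF : F ∈ forests V (r + 1)) (h : F.Adj u v) :
    F \ edge u v ∈ forests V r := by
  rw [mem_forests] at hF ⊢
  refine ⟨hF.1.anti sdiff_le, ?_⟩
  have hcard := ncard_edgeSet_sup_edge (not_reachable_sdiff_edge hF.1 h)
  rw [sdiff_edge_sup_edge h] at hcard
  lia

lemma sum_forests_succ {M : Type*} [AddCommMonoid M] (φ : SimpleGraph V → V × V → M) :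
    ∑ F ∈ forests V (r + 1), ∑ p with F.Adj p.1 p.2, φ F p =
      ∑ F ∈ forests V r, ∑ p ∈ separatedPairs F, φ (F ⊔ edge p.1 p.2) p := by
  rw [sum_sigma', sum_sigma']
  refine sum_bij' (fun x _ ↦ ⟨x.1 \ edge x.2.1 x.2.2, x.2⟩)
    (fun x _ ↦ ⟨x.1 ⊔ edge x.2.1 x.2.2, x.2⟩) ?_ ?_ ?_ ?_ ?_ <;> rintro ⟨F, u, v⟩ h <;>
    simp only [mem_sigma, mem_filter, mem_univ, true_and, mem_separatedPairs] at h ⊢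
  · exact ⟨sdiff_edge_mem_forests h.1 h.2, not_reachable_sdiff_edge (mem_forests.1 h.1).1 h.2⟩
  · exact ⟨sup_edge_mem_forests h.1 h.2, .inr (by simp [edge_adj, ne_of_not_reachable h.2])⟩
  · rw [sdiff_edge_sup_edge h.2]
  · rw [sup_edge_sdiff_edge (mt Adj.reachable h.2)]
  · rw [sdiff_edge_sup_edge h.2]

lemma sum_adj_fst (G : SimpleGraph V) (f : V → ℚ) :
    ∑ p : V × V with G.Adj p.1 p.2, f p.1 = ∑ u, G.degree u * f u := by
  rw [sum_finset_product' _ univ (fun u ↦ G.neighborFinset u) (by simp) (f := fun u _ ↦ f u)]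
  simp

/-- The sum of `componentProd F ^ 2` over all forests `F` with `r` edges, which up to a power of
`Fintype.card V` counts the pairs of spanning trees with `r` marked common edges. -/
noncomputable def sumProdSq (V : Type*) [Fintype V] (r : ℕ) : ℚ :=
  ∑ F ∈ forests V r, componentProd F ^ 2

/-- The sum of `componentProd F ^ 2 * componentInvSum F` over all forests `F` with `r` edges. It
arises when an edge is added to the forests counted by `sumProdSq`, and closes the recursion. -/
noncomputable def sumProdSqMulInvSum (V : Type*) [Fintype V] (r : ℕ) : ℚ :=
  ∑ F ∈ forests V r, componentProd F ^ 2 * componentInvSum F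

lemma succ_mul_sumProdSq_succ (h : Fintype.card V = d + r) :
    (r + 1) * sumProdSq V (r + 1) =
      Fintype.card V * sumProdSqMulInvSum V r + d * (d - 2) * sumProdSq V r := by
  have hcount := sum_forests_succ (V := V) (r := r) fun F _ ↦ componentProd F ^ 2
  have hleft : ∑ F ∈ forests V (r + 1), ∑ p : V × V with F.Adj p.1 p.2, componentProd F ^ 2 =
      2 * ((r + 1) * sumProdSq V (r + 1)) := by
    rw [sumProdSq, ← mul_assoc, mul_sum]
    refine sum_congr rfl fun F hF ↦ ?_
    rw [sum_const, card_adj_pairs, (mem_forests.1 hF).2]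
    push_cast [nsmul_eq_mul]
    ring
  have hright : ∑ F ∈ forests V r, ∑ p ∈ separatedPairs F, componentProd (F ⊔ edge p.1 p.2) ^ 2 =
      2 * (Fintype.card V * sumProdSqMulInvSum V r + d * (d - 2) * sumProdSq V r) := by
    rw [sumProdSq, sumProdSqMulInvSum, mul_sum, mul_sum, ← sum_add_distrib, mul_sum]
    refine sum_congr rfl fun F hF ↦ ?_
    have hd := card_parts_of_mem_forests hF h
    rw [sum_congr rfl fun p hp ↦ by rw [componentProd_sup_edge (mem_separatedPairs.1 hp), mul_pow],
      ← mul_sum, sum_separatedPairs_add_inv_sq, hd]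
    ring
  linarith

lemma mul_sumProdSq_succ_sub (h : Fintype.card V = d + 1 + r) :
    d * sumProdSq V (r + 1) - sumProdSqMulInvSum V (r + 1) = d * sumProdSqMulInvSum V r := by
  have hcount := sum_forests_succ (V := V) (r := r) fun F p ↦
    componentProd F ^ 2 * (componentSize F p.1 : ℚ)⁻¹
  have hleft : ∑ F ∈ forests V (r + 1), ∑ p : V × V with F.Adj p.1 p.2,
      componentProd F ^ 2 * (componentSize F p.1 : ℚ)⁻¹ =
      2 * (d * sumProdSq V (r + 1) - sumProdSqMulInvSum V (r + 1)) := by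
    rw [sumProdSq, sumProdSqMulInvSum, mul_sum, ← sum_sub_distrib, mul_sum]
    refine sum_congr rfl fun F hF ↦ ?_
    have hd : #(components F).parts = d := card_parts_of_mem_forests hF (by lia)
    rw [← mul_sum, sum_adj_fst F fun u ↦ (componentSize F u : ℚ)⁻¹,
      sum_degree_mul_componentSize_inv (mem_forests.1 hF).1, hd]
    ring
  have hright : ∑ F ∈ forests V r, ∑ p ∈ separatedPairs F,
      componentProd (F ⊔ edge p.1 p.2) ^ 2 * (componentSize (F ⊔ edge p.1 p.2) p.1 : ℚ)⁻¹ =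
      2 * (d * sumProdSqMulInvSum V r) := by
    rw [sumProdSqMulInvSum, mul_sum, mul_sum]
    refine sum_congr rfl fun F hF ↦ ?_
    have hd := card_parts_of_mem_forests hF h
    rw [sum_congr rfl fun p hp ↦ by
      rw [componentProd_sup_edge (mem_separatedPairs.1 hp),
        componentSize_sup_edge (mem_separatedPairs.1 hp), mul_pow, mul_assoc, Nat.cast_add],
      ← mul_sum, sum_separatedPairs_add_inv_sq_mul_inv, hd]
    push_cast
    ring
  linarith

lemma forests_zero : forests V 0 = {⊥} := by
  ext F
  rw [mem_forests, Set.ncard_eq_zero, edgeSet_eq_empty, mem_singleton]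
  exact and_iff_right_of_imp (· ▸ isAcyclic_bot)

lemma componentSize_bot (v : V) : componentSize (⊥ : SimpleGraph V) v = 1 := by
  refine card_eq_one.2 ⟨v, ?_⟩
  ext w
  rw [mem_part_components, reachable_bot, mem_singleton, eq_comm]

lemma card_eq_one_of_mem_parts_components_bot {C : Finset V}
    (hC : C ∈ (components (⊥ : SimpleGraph V)).parts) : #C = 1 := by
  obtain ⟨v, rfl⟩ := exists_part_components_eq hC
  exact componentSize_bot v

lemma componentProd_bot : componentProd (⊥ : SimpleGraph V) = 1 :=
  prod_eq_one fun _ hC ↦ by rw [card_eq_one_of_mem_parts_components_bot hC, Nat.cast_one]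

lemma componentInvSum_bot : componentInvSum (⊥ : SimpleGraph V) = Fintype.card V := by
  simp [← sum_componentSize_inv_sq, componentSize_bot]

lemma sumProdSq_zero (V : Type*) [Fintype V] : sumProdSq V 0 = 1 := by
  simp [sumProdSq, forests_zero, componentProd_bot]

lemma sumProdSqMulInvSum_zero (V : Type*) [Fintype V] :
    sumProdSqMulInvSum V 0 = Fintype.card V := by
  simp [sumProdSqMulInvSum, forests_zero, componentProd_bot, componentInvSum_bot]

lemma sumProdSq_eq_and_sumProdSqMulInvSum_eq (h : Fintype.card V = d + 1 + r) :
    sumProdSq V r = ((Fintype.card V - 1).factorial / d.factorial : ℚ) *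
        coeff r (expGeom (Fintype.card V : ℚ) (d + 2)) ∧
      sumProdSqMulInvSum V r = ((Fintype.card V - 1).factorial / d.factorial : ℚ) *
        (d * coeff r (expGeom (Fintype.card V : ℚ) (d + 1)) +
          coeff r (expGeom (Fintype.card V : ℚ) d)) := by
  induction r generalizing d with
  | zero =>
    have hd : (d.factorial : ℚ) ≠ 0 := by positivity
    rw [sumProdSq_zero, sumProdSqMulInvSum_zero, coeff_zero_expGeom, coeff_zero_expGeom,
      coeff_zero_expGeom, h, add_zero, Nat.add_sub_cancel, div_self hd]
    push_cast
    constructor <;> ring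
  | succ r ih =>
    obtain ⟨hA, hB⟩ := ih (d := d + 1) (by lia)
    have recA := succ_mul_sumProdSq_succ (V := V) (r := r) (d := d + 2) (by lia)
    have recB := mul_sumProdSq_succ_sub (V := V) (r := r) (d := d + 1) (by lia)
    have hfac : ((Fintype.card V - 1).factorial / d.factorial : ℚ) =
        (d + 1) * ((Fintype.card V - 1).factorial / (d + 1).factorial) := by
      rw [Nat.factorial_succ]
      push_cast
      field_simp
    have hcard : (Fintype.card V : ℚ) = (d + 1 : ℕ) + 1 + r := by
      rw [h]
      push_cast
      ring
    have hcoeff := succ_mul_coeff_succ_expGeom_of_eq hcard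
    have hright := coeff_expGeom_succ_right (Fintype.card V : ℚ) d r
    have hright' := coeff_expGeom_succ_right (Fintype.card V : ℚ) (d + 1) r
    rw [hfac]
    push_cast at recA recB hB hcoeff
    generalize ((Fintype.card V - 1).factorial / (d + 1).factorial : ℚ) = K at *
    have hA' : sumProdSq V (r + 1) =
        (d + 1) * K * coeff (r + 1) (expGeom (Fintype.card V : ℚ) (d + 2)) := by
      refine mul_left_cancel₀ (Nat.cast_add_one_ne_zero r) ?_
      linear_combination recA + Fintype.card V * hB + (d + 2) * d * hA - K * hcoeff
    refine ⟨hA', ?_⟩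
    linear_combination (d + 1) * (K * ((d + 1) * hright' + hright) + hA' - hB) - recB

end Forests

section SpanningTrees

variable {V : Type*} [Fintype V] {F T : SimpleGraph V} {u v : V} {r d : ℕ}

/-- The spanning trees of the complete graph on `V`, as a finset of graphs on `V`. -/
noncomputable def spanningTrees (V : Type*) [Fintype V] : Finset (SimpleGraph V) := {T | T.IsTree}

/-- The spanning trees of the complete graph on `V` that contain the graph `F`. -/
noncomputable def treesAbove (F : SimpleGraph V) : Finset (SimpleGraph V) :=
  {T ∈ spanningTrees V | F ≤ T}

lemma mem_spanningTrees : T ∈ spanningTrees V ↔ T.IsTree := by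
  simp [spanningTrees]

lemma mem_treesAbove : T ∈ treesAbove F ↔ T.IsTree ∧ F ≤ T := by
  simp [treesAbove, mem_spanningTrees]

lemma ncard_edgeSet_add_one_of_isTree (hT : T.IsTree) : T.edgeSet.ncard + 1 = Fintype.card V := by
  rw [Set.ncard_eq_toFinset_card']
  exact hT.card_edgeFinset

lemma treesAbove_sup_edge (h : ¬F.Reachable u v) :
    treesAbove (F ⊔ edge u v) = {T ∈ treesAbove F | T.Adj u v} := by
  ext T
  simp [mem_treesAbove, ne_of_not_reachable h, and_assoc]

lemma card_separatedPairs_adj (hF : #(components F).parts = d + 1) (hT : T ∈ treesAbove F) :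
    #{p ∈ separatedPairs F | T.Adj p.1 p.2} = 2 * d := by
  obtain ⟨htree, hle⟩ := mem_treesAbove.1 hT
  have hpairs : #{p ∈ separatedPairs F | T.Adj p.1 p.2} = 2 * (T \ F).edgeSet.ncard := by
    rw [← card_adj_pairs]
    congr 1
    ext p
    simp only [mem_filter, mem_univ, true_and, mem_separatedPairs, sdiff_adj]
    exact ⟨fun h ↦ ⟨h.2, mt Adj.reachable h.1⟩,
      fun h ↦ ⟨not_reachable_of_adj htree.isAcyclic hle h.1 h.2, h.1⟩⟩
  have hcardT := ncard_edgeSet_add_one_of_isTree htree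
  have hcardF := card_parts_add_ncard_edgeSet (htree.isAcyclic.anti hle)
  rw [hpairs, edgeSet_sdiff, Set.ncard_sdiff (edgeSet_mono hle)]
  lia

lemma sum_card_treesAbove_sup_edge (hF : #(components F).parts = d + 1) :
    ∑ p ∈ separatedPairs F, #(treesAbove (F ⊔ edge p.1 p.2)) = #(treesAbove F) * (2 * d) := by
  rw [← sum_const_nat fun T (hT : T ∈ treesAbove F) ↦ card_separatedPairs_adj hF hT,
    sum_congr rfl fun p hp ↦ by rw [treesAbove_sup_edge (mem_separatedPairs.1 hp)]]
  exact sum_card_bipartiteAbove_eq_sum_card_bipartiteBelow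
    fun (p : V × V) (T : SimpleGraph V) ↦ T.Adj p.1 p.2

lemma connected_of_card_parts_eq_one (hF : #(components F).parts = 1) : F.Connected := by
  obtain ⟨C, hC⟩ := card_eq_one.1 hF
  have hpart (v : V) : (components F).part v = C := by
    simpa [hC] using part_components_mem F v
  obtain ⟨v, -⟩ := exists_part_components_eq (hC ▸ mem_singleton_self C)
  have : Nonempty V := ⟨v⟩
  exact ⟨fun u v ↦ part_components_eq_iff.1 ((hpart u).trans (hpart v).symm)⟩

lemma treesAbove_eq_singleton (hF : F.IsTree) : treesAbove F = {F} := by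
  ext T
  rw [mem_treesAbove, mem_singleton]
  constructor
  · rintro ⟨hT, hle⟩
    refine hle.antisymm' fun u v hadj ↦ ?_
    by_contra hnot
    exact not_reachable_of_adj hT.isAcyclic hle hadj hnot (hF.connected u v)
  · rintro rfl
    exact ⟨hF, le_rfl⟩

lemma componentProd_of_card_parts_eq_one (hF : #(components F).parts = 1) :
    componentProd F = Fintype.card V := by
  obtain ⟨C, hC⟩ := card_eq_one.1 hF
  have hsum := (components F).sum_card_parts
  rw [hC, sum_singleton, card_univ] at hsum
  rw [componentProd, hC, prod_singleton, hsum]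

lemma card_parts_sup_edge (hF : F.IsAcyclic) (h : ¬F.Reachable u v) :
    #(components (F ⊔ edge u v)).parts + 1 = #(components F).parts := by
  have hcard := card_parts_add_ncard_edgeSet hF
  have hcard' := card_parts_add_ncard_edgeSet (hF.sup_edge_of_not_reachable h)
  rw [ncard_edgeSet_sup_edge h] at hcard'
  lia

lemma card_treesAbove_mul_card (hF : F.IsAcyclic) (hd : #(components F).parts = d + 1) :
    (#(treesAbove F) * Fintype.card V : ℚ) = Fintype.card V ^ d * componentProd F := by
  induction d generalizing F with
  | zero =>
    rw [treesAbove_eq_singleton ⟨connected_of_card_parts_eq_one hd, hF⟩,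
      componentProd_of_card_parts_eq_one hd]
    simp
  | succ d ih =>
    have hcount : ∑ p ∈ separatedPairs F, (#(treesAbove (F ⊔ edge p.1 p.2)) : ℚ) =
        #(treesAbove F) * (2 * (d + 1)) := by exact_mod_cast sum_card_treesAbove_sup_edge hd
    have hsum : ∑ p ∈ separatedPairs F,
        (#(treesAbove (F ⊔ edge p.1 p.2)) * Fintype.card V : ℚ) =
        Fintype.card V ^ d * componentProd F * (2 * (Fintype.card V * (d + 1))) := by
      have hparts := sum_separatedPairs_add_inv F
      rw [hd, Nat.cast_succ, Nat.cast_succ, add_sub_cancel_right] at hparts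
      rw [← hparts, mul_sum]
      refine sum_congr rfl fun p hp ↦ ?_
      have hsep := mem_separatedPairs.1 hp
      have hcard := card_parts_sup_edge hF hsep
      rw [ih (hF.sup_edge_of_not_reachable hsep) (by lia), componentProd_sup_edge hsep, mul_assoc]
    rw [← sum_mul, hcount] at hsum
    have hd0 : (2 * (d + 1) : ℚ) ≠ 0 := by positivity
    refine mul_right_cancel₀ hd0 ?_
    linear_combination hsum

lemma card_treesAbove [Nonempty V] (hF : F.IsAcyclic) (hd : #(components F).parts = d + 1) :
    (#(treesAbove F) : ℚ) = (Fintype.card V : ℚ) ^ ((d : ℤ) - 1) * componentProd F := by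
  have hV : (Fintype.card V : ℚ) ≠ 0 := by simp
  rw [zpow_sub_one₀ hV, zpow_natCast]
  field_simp
  exact card_treesAbove_mul_card hF hd

lemma card_subgraphs_ncard_edgeSet_eq (H : SimpleGraph V) (r : ℕ) :
    #{F | F ≤ H ∧ F.edgeSet.ncard = r} = H.edgeSet.ncard.choose r := by
  rw [← Set.ncard_powerset_ncard H.edgeSet.toFinite, ← Set.ncard_coe_finset,
    ← Set.ncard_image_of_injective _ edgeSet_injective]
  congr 1
  ext s
  simp only [coe_filter_univ, Set.mem_image, Set.mem_ofPred_eq]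
  constructor
  · rintro ⟨F, ⟨hle, hcard⟩, rfl⟩
    exact ⟨edgeSet_mono hle, hcard⟩
  · rintro ⟨hs, hcard⟩
    have hedge : (fromEdgeSet s).edgeSet = s :=
      (edgeSet_eq_iff _ s).2 ⟨rfl, Set.subset_compl_iff_disjoint_right.1
        (hs.trans H.edgeSet_subset_compl_diagSet)⟩
    exact ⟨fromEdgeSet s, ⟨edgeSet_subset_edgeSet.1 (hedge.symm ▸ hs), by rw [hedge, hcard]⟩, hedge⟩

lemma sum_choose_ncard_inf_edgeSet (V : Type*) [Fintype V] (r : ℕ) :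
    ∑ p ∈ spanningTrees V ×ˢ spanningTrees V, (p.1 ⊓ p.2).edgeSet.ncard.choose r =
      ∑ F ∈ forests V r, #(treesAbove F) ^ 2 := by
  trans ∑ F ∈ forests V r, #{p ∈ spanningTrees V ×ˢ spanningTrees V | F ≤ p.1 ⊓ p.2}
  · refine .trans ?_ (sum_card_bipartiteAbove_eq_sum_card_bipartiteBelow
      fun (F : SimpleGraph V) (p : SimpleGraph V × SimpleGraph V) ↦ F ≤ p.1 ⊓ p.2).symm
    refine sum_congr rfl fun p hp ↦ ?_
    rw [← card_subgraphs_ncard_edgeSet_eq]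
    congr 1
    ext F
    have hT := (mem_spanningTrees.1 (mem_product.1 hp).1).isAcyclic
    rw [mem_filter_univ, mem_bipartiteBelow, mem_forests]
    exact ⟨fun h ↦ ⟨⟨hT.anti (h.1.trans inf_le_left), h.2⟩, h.1⟩, fun h ↦ ⟨h.2, h.1.2⟩⟩
  · refine sum_congr rfl fun F _ ↦ ?_
    simp_rw [le_inf_iff]
    rw [filter_product, card_product, sq]
    rfl

lemma sum_choose_ncard_inf_edgeSet_eq [Nonempty V] (h : Fintype.card V = d + 1 + r) :
    ((∑ p ∈ spanningTrees V ×ˢ spanningTrees V,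
        (p.1 ⊓ p.2).edgeSet.ncard.choose r : ℕ) : ℚ) =
      (Fintype.card V : ℚ) ^ (2 * ((d : ℤ) - 1)) *
        ((Fintype.card V - 1).factorial / d.factorial) *
        ∑ k ∈ range (r + 1), (Fintype.card V - k).choose (r - k) *
          (Fintype.card V : ℚ) ^ k / k.factorial := by
  have hcoeff : coeff r (expGeom (Fintype.card V : ℚ) (d + 2)) = ∑ k ∈ range (r + 1),
      (Fintype.card V - k).choose (r - k) * (Fintype.card V : ℚ) ^ k / k.factorial := by
    rw [coeff_expGeom_succ]
    refine sum_congr rfl fun k hk ↦ ?_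
    have hk := mem_range_succ_iff.1 hk
    rw [show Fintype.card V - k = d + 1 + (r - k) by lia, Nat.choose_symm_add]
  rw [mul_assoc, ← hcoeff, ← (sumProdSq_eq_and_sumProdSqMulInvSum_eq h).1,
    sum_choose_ncard_inf_edgeSet, sumProdSq, mul_sum, Nat.cast_sum]
  refine sum_congr rfl fun F hF ↦ ?_
  rw [Nat.cast_pow, card_treesAbove (mem_forests.1 hF).1 (card_parts_of_mem_forests hF h), mul_pow,
    ← zpow_natCast, ← zpow_mul, mul_comm 2]
  rfl

lemma natCard_isTree_pairs_eq (V : Type*) [Fintype V] (m : ℕ) :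
    Nat.card {p : SimpleGraph V × SimpleGraph V //
        p.1.IsTree ∧ p.2.IsTree ∧ Nat.card (p.1 ⊓ p.2).edgeSet = m} =
      #{p ∈ spanningTrees V ×ˢ spanningTrees V | (p.1 ⊓ p.2).edgeSet.ncard = m} := by
  refine Nat.subtype_card _ fun p ↦ ?_
  rw [mem_filter, mem_product, mem_spanningTrees, mem_spanningTrees, and_assoc,
    Nat.card_coe_set_eq]

end SpanningTrees

end Moon

open Moon Finset in
theorem moon_common_edges_count_general {V : Type*} [Fintype V] [Nonempty V] (n m : ℕ)
    (hV : Fintype.card V = n) :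
    (Nat.card {p : SimpleGraph V × SimpleGraph V //
        p.1.IsTree ∧ p.2.IsTree ∧ Nat.card (p.1 ⊓ p.2).edgeSet = m} : ℚ) =
      ∑ j ∈ Finset.range (n - m),
        (-1 : ℚ) ^ j * ((m + j).choose m) *
          (n : ℚ) ^ (2 * ((n : ℤ) - m - j - 2)) *
          ((n - 1).factorial / ((n - m - j - 1).factorial : ℚ)) *
          ∑ k ∈ Finset.range (m + j + 1),
            ((n - k).choose (m + j - k)) * (n : ℚ) ^ k / k.factorial := by
  have inversion : ∀ p ∈ spanningTrees V ×ˢ spanningTrees V,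
      (if (p.1 ⊓ p.2).edgeSet.ncard = m then 1 else 0) = ∑ j ∈ range (n - m),
        (-1 : ℚ) ^ j * (m + j).choose m * (p.1 ⊓ p.2).edgeSet.ncard.choose (m + j) := by
    intro p hp
    have htree := ncard_edgeSet_add_one_of_isTree (mem_spanningTrees.1 (mem_product.1 hp).1)
    have hle := Set.ncard_le_ncard (SimpleGraph.edgeSet_mono (inf_le_left : p.1 ⊓ p.2 ≤ p.1))
    rw [sum_neg_one_pow_mul_choose_mul_choose (by lia)]
  rw [natCard_isTree_pairs_eq, ← sum_boole, sum_congr rfl inversion, sum_comm]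
  refine sum_congr rfl fun j hj ↦ ?_
  have hr := mem_range.1 hj
  obtain ⟨d, hd⟩ := Nat.exists_eq_add_of_le (show m + j + 1 ≤ n by lia)
  have hmoment := sum_choose_ncard_inf_edgeSet_eq (V := V) (d := d) (r := m + j) (by lia)
  rw [hV] at hmoment
  rw [← mul_sum, ← Nat.cast_sum, hmoment, show n - m - j - 1 = d by lia,
    show (n : ℤ) - m - j - 2 = d - 1 by lia]
  ring

/-- Moon's formula.  For `n ≥ 2` and `0 ≤ m ≤ n − 1`, the number of
ordered pairs `(T₁, T₂)` of spanning trees of `K_n` with exactly `m` common edges equals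
`Σ_{j=0}^{n−m−1} (−1)^j C(m+j, m) n^(2(n−m−j−2)) ((n−1)!/(n−m−j−1)!)
  Σ_{k=0}^{m+j} C(n−k, m+j−k) n^k / k!`,
evaluated in `ℚ` (so `n^(2(n−m−j−2))` is a possibly negative integer power of `n`). -/
theorem moon_common_edges_count (n m : ℕ) (hn : 2 ≤ n) (hm : m ≤ n - 1) :
    (Nat.card {p : SimpleGraph (Fin n) × SimpleGraph (Fin n) //
        p.1.IsTree ∧ p.2.IsTree ∧ Nat.card (p.1 ⊓ p.2).edgeSet = m} : ℚ) =
      ∑ j ∈ Finset.range (n - m),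
        (-1 : ℚ) ^ j * ((m + j).choose m) *
          (n : ℚ) ^ (2 * ((n : ℤ) - m - j - 2)) *
          ((n - 1).factorial / ((n - m - j - 1).factorial : ℚ)) *
          ∑ k ∈ Finset.range (m + j + 1),
            ((n - k).choose (m + j - k)) * (n : ℚ) ^ k / k.factorial := by
  have : Nonempty (Fin n) := ⟨⟨0, by lia⟩⟩
  exact moon_common_edges_count_general n m (Fintype.card_fin n)
end
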